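/- Let {F_n} be the Fibonacci sequence with F_0 = F_1 = 1, and set ξ1 = ∏_{n=1}^∞ (1 + 1/F_n) and ξ2 = ∏_{n=3}^∞ (1 - 1/F_n). Then the real numbers ξ1 and ξ2 are algebraically independent over ℚ. -/

import Mathlib

/-!
Let `q₀ = ((√5 - 1) / 2) ^ 2 = φ⁻²`, and write `f` for the classical Fibonacci numbers, so that
`F n = f_{n+1}`. The numbers `f_m ^ 2 - 1`, and separately `f_m + 1` and `f_m - 1`, factor into
Fibonacci and Lucas numbers, which by Binet's formula are algebraic multiples of powers of `φ` times
`1 ± (-q₀) ^ k`. Multiplying over blocks of consecutive indices (`block_two`, `block_four`) expresses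
`ξ₁ ξ₂` and `ξ₁ / ξ₂`, up to algebraic factors, through the eta quotients `kap q₀` and `rho q₀`
(`xi_mul`, `xi_div`). By Jacobi's triple product (`theta_product`) and the product formula
`val_sa_eq_aProd`, the values at `q₀` of `a = θ₃ ^ 4 - θ₄ ^ 4 = θ₂ ^ 4` and `b = θ₄ ^ 4` satisfy
`b₀ = rho q₀ ^ 4` and `a₀ b₀ = 16 q₀ kap q₀ ^ 4` (`b0_eq`, `a0_mul_b0`). So `a₀`, `b₀` are algebraic
over `ℚ(ξ₁, ξ₂)`, and it suffices that `a₀`, `b₀` are algebraically independent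
(`algebraicIndependent_a0_b0`). This is proved by Nesterenko's method, with the following ingredients.

*Differential system.* With a third series `P`, of weight two and quasimodular, the series `P`, `a`,
`b` have integer coefficients and satisfy a quadratic system for `q d/dq` (`qD_sa`, `qD_sb`, `qD_sP`).
It comes from the duplication formulas for theta series, that is, from counting lattice points on
circles.

*Zero estimate.* In the weight zero coordinates `ℓ = a / b`, `y = (P + a) / b` the system becomes a
polynomial vector field. A polynomial that divides its derivative along this field does not involve
`y` (`natDegree_eq_zero_of_dvd_del`). Taking the resultant of an irreducible polynomial with its
derivative therefore bounds the order at `q = 0` of any nonzero polynomial in `ℓ`, `y`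
(`order_ev_le`). Wronskians extend the bound to polynomials in `q`, `P`, `a`, `b`
(`zero_estimate`, `auxF_order`).

*Auxiliary function.* Suppose that `a₀` and `b₀` are algebraically dependent. Up to a common factor,
the values at `q₀` of the monomials of degree at most `W` in `P`, `a`, `b`, times powers of `q₀`, are
then integral combinations of only `O(W ^ 2)` real numbers (`exists_span`); nothing needs to be known
about `P(q₀)`. Siegel's lemma (`exists_aux`) gives a nonzero integral polynomial in `q`, `P`, `a`, `b`
of degree less than `L = s ^ 8` in `q` and less than `N = s ^ 3` in each of `P`, `a`, `b`, with
small coefficients, whose value `f(q)` has a zero of order at least `T = s ^ 4` at `q₀`.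

*Contradiction.* Let `M` be the order of `f` at `q = 0`, which is polynomially bounded in `s`. The
series `f / q ^ M` has a nonzero integer as constant term, so dividing it by `(q - q₀) ^ T` gives a
series with constant term at least `q₀ ^ (-T)` in absolute value. A Cauchy-type estimate bounds this
constant term from above (`analytic_bound`), and for large `s` the two bounds are incompatible
(`no_relation`).
-/

open scoped BigOperators

noncomputable section

/-- Fibonacci sequence with `F 0 = F 1 = 1`. -/
def F : ℕ → ℕ
  | 0 => 1
  | 1 => 1
  | n + 2 => F (n + 1) + F n

/-- The golden ratio conjugate `β = (√5 - 1)/2`. -/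
noncomputable def β : ℝ := (Real.sqrt 5 - 1) / 2

/-- Jacobi theta function `θ₂(q) = 2 q^{1/4} ∑_{n≥0} q^{n(n+1)}`. -/
noncomputable def θ2 (q : ℝ) : ℝ := 2 * q ^ ((1 : ℝ) / 4) * ∑' n : ℕ, q ^ (n * (n + 1))

/-- Jacobi theta function `θ₃(q) = 1 + 2 ∑_{n≥1} q^{n²}`. -/
noncomputable def θ3 (q : ℝ) : ℝ := 1 + 2 * ∑' n : ℕ, q ^ ((n + 1) ^ 2)

/-- Jacobi theta function `θ₄(q) = 1 + 2 ∑_{n≥1} (-1)^n q^{n²}`. -/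
noncomputable def θ4 (q : ℝ) : ℝ := 1 + 2 * ∑' n : ℕ, (-1 : ℝ) ^ (n + 1) * q ^ ((n + 1) ^ 2)

/-! ### Theta series and lattice points on circles -/

namespace FibTheta

open PowerSeries

/-- The integers whose square is `n`. -/
def sqRoots (n : ℕ) : Finset ℤ := (Finset.Icc (-(n : ℤ)) n).filter (fun x => x ^ 2 = n)

lemma mem_sqRoots {n : ℕ} {x : ℤ} : x ∈ sqRoots n ↔ x ^ 2 = n := by
  simp only [sqRoots, Finset.mem_filter, Finset.mem_Icc, and_iff_right_iff_imp]
  intro h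
  constructor <;> nlinarith [Int.le_self_sq x, Int.le_self_sq (-x)]

/-- The lattice points on the circle `x² + y² = n`. -/
def circlePts (n : ℕ) : Finset (ℤ × ℤ) :=
  (Finset.Icc (-(n : ℤ)) n ×ˢ Finset.Icc (-(n : ℤ)) n).filter (fun z => z.1 ^ 2 + z.2 ^ 2 = n)

lemma mem_circlePts {n : ℕ} {z : ℤ × ℤ} : z ∈ circlePts n ↔ z.1 ^ 2 + z.2 ^ 2 = n := by
  simp only [circlePts, Finset.mem_filter, Finset.mem_product, Finset.mem_Icc,
    and_iff_right_iff_imp]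
  intro h
  refine ⟨⟨?_, ?_⟩, ?_, ?_⟩ <;> nlinarith [Int.le_self_sq z.1, Int.le_self_sq (-z.1),
    Int.le_self_sq z.2, Int.le_self_sq (-z.2), sq_nonneg z.1, sq_nonneg z.2]

/-- The theta series `∑_{n ∈ ℤ} q^{n²}`. -/
def t3 : ℤ⟦X⟧ := PowerSeries.mk fun n => ((sqRoots n).card : ℤ)

/-- The theta series `∑_{n ∈ ℤ} (-1)^n q^{n²}`. -/
def t4 : ℤ⟦X⟧ := PowerSeries.mk fun n => (-1) ^ n * ((sqRoots n).card : ℤ)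

lemma sum_sqRoots (n : ℕ) (w : ℕ → ℕ → ℤ) :
    ∑ p ∈ Finset.HasAntidiagonal.antidiagonal n, w p.1 p.2 * (((sqRoots p.1).card : ℤ) * (sqRoots p.2).card)
      = ∑ z ∈ circlePts n, w (z.1 ^ 2).natAbs (z.2 ^ 2).natAbs := by
  have hm : ∀ z ∈ circlePts n, ((z.1 ^ 2).natAbs, (z.2 ^ 2).natAbs) ∈ Finset.HasAntidiagonal.antidiagonal n := by
    intro z hz
    rw [mem_circlePts] at hz
    rw [Finset.HasAntidiagonal.mem_antidiagonal]
    zify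
    rw [abs_of_nonneg (sq_nonneg _), abs_of_nonneg (sq_nonneg _), hz]
  rw [← Finset.sum_fiberwise_of_maps_to hm]
  refine Finset.sum_congr rfl fun p hp => ?_
  rw [Finset.HasAntidiagonal.mem_antidiagonal] at hp
  have : (circlePts n).filter (fun z => ((z.1 ^ 2).natAbs, (z.2 ^ 2).natAbs) = p)
      = sqRoots p.1 ×ˢ sqRoots p.2 := by
    ext z
    simp only [Finset.mem_filter, mem_circlePts, Finset.mem_product, mem_sqRoots]
    constructor
    · rintro ⟨_, rfl⟩
      simp
    · rintro ⟨h1, h2⟩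
      refine ⟨by rw [h1, h2, ← hp]; push_cast; ring, ?_⟩
      rw [h1, h2]; rfl
  rw [Finset.sum_congr (g := fun _ => w p.1 p.2) rfl, this, Finset.sum_const, Finset.card_product]
  · simp only [nsmul_eq_mul]; push_cast; ring
  · intro z hz
    rw [Finset.mem_filter] at hz
    rw [← hz.2]

/-- The map `(x, y) ↦ (x + y, x - y)` is a bijection from the lattice points on the circle of squared
radius `k` to those on the circle of squared radius `2 k`. -/
lemma sum_circlePts_two_mul (k : ℕ) (f : ℤ × ℤ → ℤ) :
    ∑ z ∈ circlePts (2 * k), f z = ∑ z ∈ circlePts k, f (z.1 + z.2, z.1 - z.2) := by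
  symm
  refine Finset.sum_bij (fun z _ => (z.1 + z.2, z.1 - z.2)) ?_ ?_ ?_ ?_
  · intro z hz
    rw [mem_circlePts] at hz ⊢
    push_cast; rw [← hz]; ring
  · rintro ⟨x, y⟩ _ ⟨x', y'⟩ _ h
    simp only [Prod.mk.injEq] at h ⊢
    omega
  · rintro ⟨x, y⟩ hz
    rw [mem_circlePts] at hz
    have hxy : (x + y) % 2 = 0 := by
      have h : (x ^ 2 + y ^ 2) % 2 = 0 := by
        simp only at hz; rw [hz]; push_cast; omega
      rcases Int.emod_two_eq_zero_or_one x with hx | hx <;>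
      rcases Int.emod_two_eq_zero_or_one y with hy | hy <;>
      simp [pow_two, Int.add_emod, Int.mul_emod, hx, hy] at h ⊢
    obtain ⟨u, hu⟩ : ∃ u, x + y = 2 * u := ⟨(x + y) / 2, by omega⟩
    refine ⟨(u, x - u), ?_, ?_⟩
    · rw [mem_circlePts]
      have hy : y = 2 * u - x := by linarith
      subst hy
      push_cast at hz ⊢
      nlinarith
    · simp only [Prod.mk.injEq]; constructor <;> linarith
  · intro z _; rfl

lemma coeff_t3_sq (n : ℕ) : coeff n (t3 ^ 2) = ((circlePts n).card : ℤ) := by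
  have := sum_sqRoots n (fun _ _ => 1)
  simp only [one_mul, Finset.sum_const, nsmul_eq_mul, mul_one] at this
  rw [pow_two, coeff_mul, ← this]
  simp [t3]

lemma coeff_t4_sq (n : ℕ) : coeff n (t4 ^ 2) = (-1) ^ n * ((circlePts n).card : ℤ) := by
  rw [← coeff_t3_sq, pow_two, pow_two, coeff_mul, coeff_mul, Finset.mul_sum]
  refine Finset.sum_congr rfl fun p hp => ?_
  rw [Finset.HasAntidiagonal.mem_antidiagonal] at hp
  simp only [t3, t4, coeff_mk, ← hp, pow_add]
  ring

lemma card_circlePts_two_mul (k : ℕ) : (circlePts (2 * k)).card = (circlePts k).card := by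
  have := sum_circlePts_two_mul k (fun _ => 1)
  simp only [Finset.sum_const, nsmul_eq_mul, mul_one] at this
  exact_mod_cast this

lemma neg_one_pow_natAbs_sq (x : ℤ) : (-1 : ℤ) ^ (x ^ 2).natAbs = if Even x then 1 else -1 := by
  split_ifs with h
  · rw [Even.neg_one_pow]
    rw [Int.natAbs_even]; exact h.pow_of_ne_zero (by norm_num)
  · rw [Odd.neg_one_pow]
    rw [Int.natAbs_odd]; exact (Int.not_even_iff_odd.mp h).pow

lemma coeff_t3_mul_t4 (n : ℕ) : coeff n (t3 * t4) =
    if 2 ∣ n then (-1) ^ (n / 2) * ((circlePts (n / 2)).card : ℤ) else 0 := by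
  have h := sum_sqRoots n (fun _ j => (-1) ^ j)
  have h2 : coeff n (t3 * t4) = ∑ z ∈ circlePts n, (-1 : ℤ) ^ (z.2 ^ 2).natAbs := by
    rw [← h, coeff_mul]
    refine Finset.sum_congr rfl fun p _ => ?_
    simp only [t3, t4, coeff_mk]; ring
  rw [h2]
  split_ifs with hn
  · obtain ⟨k, rfl⟩ := hn
    rw [sum_circlePts_two_mul k, Nat.mul_div_cancel_left _ (by norm_num),
      Finset.sum_congr (g := fun _ => (-1 : ℤ) ^ k) rfl, Finset.sum_const, nsmul_eq_mul, mul_comm]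
    intro z hz
    rw [mem_circlePts] at hz
    rw [neg_one_pow_natAbs_sq]
    have : Even (z.1 - z.2) ↔ Even k := by
      rw [← Int.even_coe_nat k, ← hz]
      simp [Int.even_sub, Int.even_add, Int.even_pow]
    simp only [this]
    split_ifs with hk
    · exact hk.neg_one_pow.symm
    · exact (Nat.not_even_iff_odd.mp hk).neg_one_pow.symm
  · -- the swap `(x, y) ↦ (y, x)` changes the sign of every term
    have hs : ∑ z ∈ circlePts n, (-1 : ℤ) ^ (z.2 ^ 2).natAbs
        = ∑ z ∈ circlePts n, (-1 : ℤ) ^ (z.1 ^ 2).natAbs := by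
      refine Finset.sum_bij (fun z _ => (z.2, z.1)) ?_ ?_ ?_ ?_
      · intro z hz; rw [mem_circlePts] at hz ⊢; rw [← hz]; ring
      · rintro ⟨x, y⟩ _ ⟨x', y'⟩ _ h
        simp only [Prod.mk.injEq] at h ⊢
        exact ⟨h.2, h.1⟩
      · rintro ⟨x, y⟩ hz
        refine ⟨(y, x), ?_, rfl⟩
        rw [mem_circlePts] at hz ⊢; rw [← hz]; ring
      · intro z _; rfl
    have hs2 : ∑ z ∈ circlePts n, (-1 : ℤ) ^ (z.2 ^ 2).natAbs
        = - ∑ z ∈ circlePts n, (-1 : ℤ) ^ (z.1 ^ 2).natAbs := by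
      rw [← Finset.sum_neg_distrib]
      refine Finset.sum_congr rfl fun z hz => ?_
      rw [mem_circlePts] at hz
      rw [neg_one_pow_natAbs_sq, neg_one_pow_natAbs_sq]
      have : ¬ Even (z.1 ^ 2 + z.2 ^ 2) := by
        rw [hz, Int.even_coe_nat]; rwa [even_iff_two_dvd]
      simp only [Int.even_add, Int.even_pow, ne_eq, OfNat.ofNat_ne_zero, not_false_eq_true,
        and_true] at this
      by_cases h1 : Even z.1 <;> by_cases h2 : Even z.2 <;> simp only [h1, h2] at this ⊢ <;>
        first | rfl | simp at this
    linarith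

/-- The substitution `q ↦ q²`. -/
abbrev dbl : ℤ⟦X⟧ →ₐ[ℤ] ℤ⟦X⟧ := PowerSeries.expand 2 two_ne_zero

section qD

variable {R : Type*} [CommRing R]

/-- The derivation `q d/dq`. -/
def qD (f : R⟦X⟧) : R⟦X⟧ := X * PowerSeries.derivative R f

lemma coeff_qD (f : R⟦X⟧) (n : ℕ) : coeff n (qD f) = n * coeff n f := by
  rw [qD]
  cases n with
  | zero => simp
  | succ n => rw [coeff_succ_X_mul, coeff_derivative]; push_cast; ring

lemma qD_add (f g : R⟦X⟧) : qD (f + g) = qD f + qD g := by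
  simp only [qD, map_add, mul_add]

lemma qD_neg (f : R⟦X⟧) : qD (-f) = - qD f := by
  ext n; simp [coeff_qD]

lemma qD_sub (f g : R⟦X⟧) : qD (f - g) = qD f - qD g := by
  ext n; simp [coeff_qD, mul_sub]

lemma qD_mul (f g : R⟦X⟧) : qD (f * g) = qD f * g + f * qD g := by
  simp only [qD, Derivation.leibniz, smul_eq_mul]; ring

lemma qD_sum {ι : Type*} (s : Finset ι) (f : ι → R⟦X⟧) :
    qD (∑ i ∈ s, f i) = ∑ i ∈ s, qD (f i) := by
  simp only [qD, map_sum, Finset.mul_sum]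

lemma qD_C (r : R) : qD (C r : R⟦X⟧) = 0 := by
  simp [qD]

lemma qD_C_mul (r : R) (f : R⟦X⟧) : qD (C r * f) = C r * qD f := by
  rw [qD_mul, qD_C]; ring

lemma qD_natCast_mul (k : ℕ) (f : R⟦X⟧) : qD ((k : R⟦X⟧) * f) = k * qD f := by
  rw [← map_natCast (C (R := R)) k, qD_C_mul]

lemma qD_ofNat_mul (k : ℕ) [k.AtLeastTwo] (f : R⟦X⟧) :
    qD ((ofNat(k) : R⟦X⟧) * f) = ofNat(k) * qD f := qD_natCast_mul k f

lemma qD_one : qD (1 : R⟦X⟧) = 0 := by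
  simp [qD]

lemma qD_zero : qD (0 : R⟦X⟧) = 0 := by
  simp [qD]

lemma qD_pow (f : R⟦X⟧) (n : ℕ) : qD (f ^ (n + 1)) = (n + 1) * f ^ n * qD f := by
  induction n with
  | zero => simp
  | succ n ih => rw [pow_succ, qD_mul, ih]; push_cast; ring

lemma qD_X : qD (X : R⟦X⟧) = X := by
  simp [qD]

lemma qD_X_pow (n : ℕ) : qD ((X : R⟦X⟧) ^ n) = (n : R⟦X⟧) * (X : R⟦X⟧) ^ n := by
  cases n with
  | zero => simp [qD_one]
  | succ n => rw [qD_pow, qD_X]; push_cast; ring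

lemma qD_map {S : Type*} [CommRing S] (φ : R →+* S) (f : R⟦X⟧) :
    qD (PowerSeries.map φ f) = PowerSeries.map φ (qD f) := by
  ext n; simp [coeff_qD]

end qD

lemma qD_dbl (f : ℤ⟦X⟧) : qD (dbl f) = 2 * dbl (qD f) := by
  ext n
  have h2 : (2 : ℤ⟦X⟧) = (C 2 : ℤ⟦X⟧) := (map_ofNat (C (R := ℤ)) 2).symm
  rw [coeff_qD, h2, coeff_C_mul, coeff_expand, coeff_expand]
  split_ifs with h
  · obtain ⟨k, rfl⟩ := h
    rw [Nat.mul_div_cancel_left _ (by norm_num), coeff_qD]; push_cast; ring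
  · simp

lemma t3_sq_add_t4_sq : t3 ^ 2 + t4 ^ 2 = 2 * dbl t3 ^ 2 := by
  have h2 : (2 : ℤ⟦X⟧) = (C 2 : ℤ⟦X⟧) := (map_ofNat (C (R := ℤ)) 2).symm
  rw [← map_pow]
  ext n
  rw [h2, coeff_C_mul, map_add, coeff_t3_sq, coeff_t4_sq, coeff_expand]
  split_ifs with h
  · obtain ⟨k, rfl⟩ := h
    rw [Nat.mul_div_cancel_left _ (by norm_num), coeff_t3_sq, card_circlePts_two_mul]
    simp [pow_mul]; ring
  · rw [Odd.neg_one_pow]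
    · ring
    · rwa [← Nat.not_even_iff_odd, even_iff_two_dvd]

lemma t3_mul_t4 : t3 * t4 = dbl t4 ^ 2 := by
  rw [← map_pow]
  ext n
  rw [coeff_t3_mul_t4, coeff_expand]
  simp only [coeff_t4_sq]

end FibTheta

/-! ### The differential system for `P`, `a`, `b` -/

namespace FibTheta

open PowerSeries

lemma ofNat_eq_C (k : ℕ) [k.AtLeastTwo] : (ofNat(k) : ℤ⟦X⟧) = (C ofNat(k) : ℤ⟦X⟧) :=
  (map_ofNat (C (R := ℤ)) k).symm

lemma dbl_ofNat (k : ℕ) [k.AtLeastTwo] : dbl (ofNat(k) : ℤ⟦X⟧) = ofNat(k) := map_ofNat dbl k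

lemma psTwo_ne_zero : (2 : ℤ⟦X⟧) ≠ 0 := by
  rw [ofNat_eq_C, Ne, ← map_zero (C (R := ℤ)), C_injective.eq_iff]; norm_num

lemma psFour_ne_zero : (4 : ℤ⟦X⟧) ≠ 0 := by
  rw [ofNat_eq_C, Ne, ← map_zero (C (R := ℤ)), C_injective.eq_iff]; norm_num

lemma coeff_one_mul' (f g : ℤ⟦X⟧) :
    coeff 1 (f * g) = coeff 0 f * coeff 1 g + coeff 1 f * coeff 0 g := by
  rw [coeff_mul, Finset.Nat.antidiagonal_succ]
  simp

lemma coeff_zero_mul' (f g : ℤ⟦X⟧) :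
    coeff 0 (f * g) = coeff 0 f * coeff 0 g := by
  simp

lemma coeff_zero_t3 : coeff 0 t3 = 1 := by
  simp only [t3, coeff_mk]; rfl

lemma coeff_one_t3 : coeff 1 t3 = 2 := by
  simp only [t3, coeff_mk]; rfl

lemma coeff_zero_t4 : coeff 0 t4 = 1 := by
  simp only [t4, coeff_mk]; rfl

lemma coeff_one_t4 : coeff 1 t4 = -2 := by
  simp only [t4, coeff_mk]; rfl

/-- Logarithmic derivative of `t3` with respect to `q d/dq`. -/
def lam3 : ℤ⟦X⟧ := qD t3 * invOfUnit t3 1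

/-- Logarithmic derivative of `t4` with respect to `q d/dq`. -/
def lam4 : ℤ⟦X⟧ := qD t4 * invOfUnit t4 1

lemma lam3_mul : lam3 * t3 = qD t3 := by
  rw [lam3, mul_assoc, mul_comm (invOfUnit t3 1), mul_invOfUnit, mul_one]
  simpa using coeff_zero_t3

lemma lam4_mul : lam4 * t4 = qD t4 := by
  rw [lam4, mul_assoc, mul_comm (invOfUnit t4 1), mul_invOfUnit, mul_one]
  simpa using coeff_zero_t4

lemma t3_ne_zero : t3 ≠ 0 := by
  intro h; have := coeff_zero_t3; rw [h] at this; simp at this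

lemma t4_ne_zero : t4 ≠ 0 := by
  intro h; have := coeff_zero_t4; rw [h] at this; simp at this

lemma dbl_injective : Function.Injective dbl := by
  intro f g h
  ext n
  rw [← coeff_expand_mul 2 two_ne_zero f n, ← coeff_expand_mul 2 two_ne_zero g n]
  exact congrArg _ h

/-- `θ₄⁴`. -/
def sb : ℤ⟦X⟧ := t4 ^ 4

/-- `θ₃⁴ - θ₄⁴`. -/
def sa : ℤ⟦X⟧ := t3 ^ 4 - t4 ^ 4

/-- The quasimodular series of weight two that completes `a`, `b` to a ring closed under `q d/dq`
(up to denominators). -/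
def sP : ℤ⟦X⟧ := 12 * lam4 + 2 * sa + sb

lemma lam_add : lam3 + lam4 = 4 * dbl lam4 := by
  have h : dbl lam4 * dbl t4 = dbl (qD t4) := by rw [← map_mul, lam4_mul]
  have e := congrArg qD t3_mul_t4
  rw [qD_mul, pow_two, qD_mul, qD_dbl, ← h, ← lam3_mul, ← lam4_mul] at e
  have hne : t3 * t4 ≠ 0 := mul_ne_zero t3_ne_zero t4_ne_zero
  apply mul_right_cancel₀ hne
  have e2 := t3_mul_t4
  linear_combination e - 4 * dbl lam4 * e2

lemma lam_comb : t3 ^ 2 * lam3 + t4 ^ 2 * lam4 = 2 * (t3 ^ 2 + t4 ^ 2) * dbl lam3 := by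
  have h : dbl lam3 * dbl t3 = dbl (qD t3) := by rw [← map_mul, lam3_mul]
  have e := congrArg qD t3_sq_add_t4_sq
  rw [qD_add, pow_two, qD_mul, pow_two, qD_mul, qD_ofNat_mul, pow_two, qD_mul, qD_dbl, ← h,
    ← lam3_mul, ← lam4_mul] at e
  have h2 : (2 : ℤ⟦X⟧) ≠ 0 := psTwo_ne_zero
  apply mul_left_cancel₀ h2
  have e2 := t3_sq_add_t4_sq
  linear_combination e - 4 * dbl lam3 * e2

lemma dbl_sb : dbl sb = t3 ^ 2 * t4 ^ 2 := by
  have e2 := t3_mul_t4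
  rw [sb, map_pow]
  linear_combination -(t3 * t4 + dbl t4 ^ 2) * e2

lemma four_dbl_sa : 4 * dbl sa = (t3 ^ 2 - t4 ^ 2) ^ 2 := by
  have e1 := t3_sq_add_t4_sq
  have e2 := dbl_sb
  rw [sb, map_pow] at e2
  rw [sa, map_sub, map_pow, map_pow]
  linear_combination -(t3 ^ 2 + t4 ^ 2 + 2 * dbl t3 ^ 2) * e1 - 4 * e2

/-- The discrepancy between the logarithmic derivative of `(θ₃/θ₄)⁴` and `θ₃⁴ - θ₄⁴` satisfies
a homogeneous functional equation with no nonzero solution of order different from one. -/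
lemma lam_sub : 4 * (lam3 - lam4) = sa := by
  rw [← sub_eq_zero]
  set d := 4 * (lam3 - lam4) - sa with hd
  have key : 4 * (t3 ^ 2 + t4 ^ 2) * dbl d = (t3 ^ 2 - t4 ^ 2) * d := by
    have h1 := lam_add
    have h2 := lam_comb
    have h3 := four_dbl_sa
    have hE : dbl d = 4 * (dbl lam3 - dbl lam4) - dbl sa := by
      rw [hd, map_sub, map_mul, map_sub, dbl_ofNat]
    rw [hE, hd]
    have hs : sa = t3 ^ 4 - t4 ^ 4 := rfl
    linear_combination -8 * h2 + 4 * (t3 ^ 2 + t4 ^ 2) * h1 - (t3 ^ 2 + t4 ^ 2) * h3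
       + (t3 ^ 2 - t4 ^ 2) * hs
  have hl3 : coeff 1 lam3 = 2 := by
    have h0 := congrArg (coeff 0) lam3_mul
    have h1 := congrArg (coeff 1) lam3_mul
    rw [coeff_one_mul', coeff_qD, coeff_zero_t3, coeff_one_t3] at h1
    rw [coeff_zero_mul', coeff_qD, coeff_zero_t3] at h0
    push_cast at h0 h1
    linarith
  have hl4 : coeff 1 lam4 = -2 := by
    have h0 := congrArg (coeff 0) lam4_mul
    have h1 := congrArg (coeff 1) lam4_mul
    rw [coeff_one_mul', coeff_qD, coeff_zero_t4, coeff_one_t4] at h1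
    rw [coeff_zero_mul', coeff_qD, coeff_zero_t4] at h0
    push_cast at h0 h1
    linarith
  have hp0 : coeff 0 (t3 ^ 2) = 1 := by rw [pow_two, coeff_zero_mul', coeff_zero_t3]; rfl
  have hm0 : coeff 0 (t4 ^ 2) = 1 := by rw [pow_two, coeff_zero_mul', coeff_zero_t4]; rfl
  have hp1 : coeff 1 (t3 ^ 2) = 4 := by
    rw [pow_two, coeff_one_mul', coeff_zero_t3, coeff_one_t3]; rfl
  have hm1 : coeff 1 (t4 ^ 2) = -4 := by
    rw [pow_two, coeff_one_mul', coeff_zero_t4, coeff_one_t4]; rfl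
  have hd1 : coeff 1 d = 0 := by
    have h4 : (4 : ℤ⟦X⟧) = (C 4 : ℤ⟦X⟧) := (map_ofNat (C (R := ℤ)) 4).symm
    have : sa = t3 ^ 2 * t3 ^ 2 - t4 ^ 2 * t4 ^ 2 := by rw [sa]; ring
    rw [hd, map_sub, h4, coeff_C_mul, map_sub, hl3, hl4, this, map_sub, coeff_one_mul',
      coeff_one_mul', hp0, hp1, hm0, hm1]
    norm_num
  by_contra hne
  have ho := congrArg order key
  rw [order_mul (4 * (t3 ^ 2 + t4 ^ 2)), order_mul (t3 ^ 2 - t4 ^ 2), order_expand] at ho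
  have o1 : (4 * (t3 ^ 2 + t4 ^ 2)).order = 0 := by
    have := (order_eq_nat (φ := 4 * (t3 ^ 2 + t4 ^ 2)) (n := 0)).mpr ⟨?_, by simp⟩
    · exact_mod_cast this
    · rw [ofNat_eq_C, coeff_C_mul, map_add, hp0, hm0]
      norm_num
  have o2 : (t3 ^ 2 - t4 ^ 2).order = 1 := by
    have := (order_eq_nat (φ := t3 ^ 2 - t4 ^ 2) (n := 1)).mpr ⟨?_, ?_⟩
    · exact_mod_cast this
    · rw [map_sub, hp1, hm1]; norm_num
    · intro i hi
      obtain rfl : i = 0 := by omega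
      rw [map_sub, hp0, hm0]; norm_num
  rw [o1, o2, ← coe_toNat_order hne] at ho
  have hn : d.order.toNat = 1 := by
    have : 0 + 2 * d.order.toNat = 1 + d.order.toNat := by
      simp only [nsmul_eq_mul] at ho
      exact_mod_cast ho
    omega
  exact coeff_order hne (by rw [hn, hd1])

lemma qD_sb : 3 * qD sb = sb * (sP - 2 * sa - sb) := by
  have h := lam4_mul
  have : qD sb = 4 * t4 ^ 3 * qD t4 := by
    rw [sb, qD_pow]; push_cast; ring
  rw [this, ← h, sP, sb]; ring

lemma qD_sa : 3 * qD sa = sa * (sP + sa + 2 * sb) := by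
  have h := lam4_mul
  have h3 := lam3_mul
  have hl := lam_sub
  have : qD sa = 4 * t3 ^ 3 * qD t3 - 4 * t4 ^ 3 * qD t4 := by
    rw [sa, qD_sub, qD_pow, qD_pow]; push_cast; ring
  rw [this, ← h, ← h3, sP]
  have hs : sa = t3 ^ 4 - t4 ^ 4 := rfl
  rw [sb]
  linear_combination 3 * t3 ^ 4 * hl + (-12 * lam4 - 3 * sa) * hs

lemma four_dbl_sP : 4 * dbl sP = 2 * sP + sa + 2 * sb := by
  have h1 := lam_add
  have h2 := four_dbl_sa
  have h3 := dbl_sb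
  have h4 := lam_sub
  have hE : dbl sP = 12 * dbl lam4 + 2 * dbl sa + dbl sb := by
    rw [sP, map_add, map_add, map_mul, map_mul, dbl_ofNat, dbl_ofNat]
  rw [hE, sP]
  have hs : sa = t3 ^ 4 - t4 ^ 4 := rfl
  have hb : sb = t4 ^ 4 := rfl
  linear_combination -12 * h1 + 2 * h2 + 4 * h3 + 3 * h4 - 2 * hs - 4 * hb

/-- Uniqueness principle behind `qD_sP`: the defect of a weight four identity that is invariant under
`g ↦ 4 g(q ^ 2)` vanishes. -/
lemma eq_zero_of_four_dbl (g : ℤ⟦X⟧) (h : 4 * dbl g = g) : g = 0 := by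
  have h4 : (4 : ℤ⟦X⟧) = (C 4 : ℤ⟦X⟧) := (map_ofNat (C (R := ℤ)) 4).symm
  ext n
  induction n using Nat.strong_induction_on with
  | _ n ih =>
    have hn := congrArg (coeff n) h
    rw [h4, coeff_C_mul, coeff_expand] at hn
    split_ifs at hn with hd
    · obtain ⟨k, rfl⟩ := hd
      rw [Nat.mul_div_cancel_left _ (by norm_num)] at hn
      rcases Nat.eq_zero_or_pos k with rfl | hk
      · simp only [mul_zero] at hn ⊢
        rw [map_zero]; linarith
      · rw [← hn, ih k (by omega)]; simp
    · rw [← hn]; simp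

lemma qD_sP : 6 * qD sP = sP ^ 2 - sa ^ 2 - sa * sb - sb ^ 2 := by
  rw [← sub_eq_zero]
  apply eq_zero_of_four_dbl
  have e1 := four_dbl_sP
  have e2 := four_dbl_sa
  have e3 := dbl_sb
  have hs : sa = t3 ^ 4 - t4 ^ 4 := rfl
  have hb : sb = t4 ^ 4 := rfl
  have e4 := congrArg qD e1
  rw [qD_ofNat_mul, qD_dbl, qD_add, qD_add, qD_ofNat_mul, qD_ofNat_mul] at e4
  have e5 := qD_sa
  have e6 := qD_sb
  have hE : dbl (6 * qD sP - (sP ^ 2 - sa ^ 2 - sa * sb - sb ^ 2)) =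
      6 * dbl (qD sP) - (dbl sP ^ 2 - dbl sa ^ 2 - dbl sa * dbl sb - dbl sb ^ 2) := by
    simp only [map_sub, map_mul, map_pow, dbl_ofNat]
  rw [hE]
  -- `dbl sa` and `dbl sb` enter through `4 dbl sa = s - 2t`, `dbl sb = t`, `s = sa + 2 sb`,
  -- `t² = (sa + sb) sb`
  have f1 : 4 * dbl sa = sa + 2 * sb - 2 * dbl sb := by
    rw [e2, e3, hs, hb]; ring
  have f2 : dbl sb ^ 2 = (sa + sb) * sb := by
    rw [e3, hs, hb]; ring
  have h4 : (4 : ℤ⟦X⟧) ≠ 0 := psFour_ne_zero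
  apply mul_left_cancel₀ h4
  linear_combination 12 * e4 + 4 * e5 + 8 * e6
    - (4 * dbl sP + 2 * sP + sa + 2 * sb) * e1
    + (4 * dbl sa + sa + 2 * sb - 2 * dbl sb) * f1 + 4 * dbl sb * f1 + 12 * f2

end FibTheta

/-! ### Darboux polynomials of the vector field -/

namespace FibTheta

open Polynomial

/-- Partial derivative of a polynomial in `ℚ[ℓ][y]` with respect to the inner variable `ℓ`. -/
def dl (h : ℚ[X][X]) : ℚ[X][X] :=
  ∑ j ∈ Finset.range (h.natDegree + 1), monomial j (derivative (h.coeff j))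

lemma coeff_dl (h : ℚ[X][X]) (j : ℕ) : (dl h).coeff j = derivative (h.coeff j) := by
  rw [dl, finsetSum_coeff]
  simp only [coeff_monomial]
  rw [Finset.sum_ite_eq' ]
  split_ifs with hj
  · rfl
  · rw [coeff_eq_zero_of_natDegree_lt (by simpa using hj), derivative_zero]

lemma dl_add (f g : ℚ[X][X]) : dl (f + g) = dl f + dl g := by
  ext1 j; simp [coeff_dl]

lemma dl_mul (f g : ℚ[X][X]) : dl (f * g) = dl f * g + f * dl g := by
  ext1 j
  simp only [coeff_dl, coeff_mul, coeff_add, derivative_sum, derivative_mul,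
    Finset.sum_add_distrib]

lemma dl_C (p : ℚ[X]) : dl (C p) = C (derivative p) := by
  ext1 j; rw [coeff_dl, coeff_C, coeff_C]; split_ifs <;> simp

lemma dl_X : dl (X : ℚ[X][X]) = 0 := by
  ext1 j; rw [coeff_dl, coeff_X]; split_ifs <;> simp

/-- The vector field `6ℓ(1+ℓ) ∂/∂ℓ + (-y² + (6ℓ+2)y + 3ℓ - 1) ∂/∂y`. -/
def del (h : ℚ[X][X]) : ℚ[X][X] :=
  C (6 * X + 6 * X ^ 2) * dl h + (-(X : ℚ[X][X]) ^ 2 + C (6 * X + 2) * X + C (3 * X - 1)) * derivative h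

lemma del_add (f g : ℚ[X][X]) : del (f + g) = del f + del g := by
  simp only [del, dl_add, derivative_add]; ring

lemma del_mul (f g : ℚ[X][X]) : del (f * g) = del f * g + f * del g := by
  simp only [del, dl_mul, derivative_mul]; ring

lemma del_C (p : ℚ[X]) : del (C p) = C ((6 * X + 6 * X ^ 2) * derivative p) := by
  rw [del, dl_C, derivative_C, mul_zero, add_zero, ← C_mul]

lemma del_X : del (X : ℚ[X][X]) = -(X : ℚ[X][X]) ^ 2 + C (6 * X + 2) * X + C (3 * X - 1) := by
  rw [del, dl_X, derivative_X, mul_zero, zero_add, mul_one]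

lemma coeff_del_zero (h : ℚ[X][X]) : (del h).coeff 0 =
    (6 * X + 6 * X ^ 2) * derivative (h.coeff 0) + (3 * X - 1) * h.coeff 1 := by
  have : ((-(X : ℚ[X][X]) ^ 2 + C (6 * X + 2) * X + C (3 * X - 1)) * derivative h) =
    (-(X : ℚ[X][X]) + C (6 * X + 2)) * derivative h * X + C (3 * X - 1) * derivative h := by ring
  rw [del, this]
  simp only [coeff_add, coeff_C_mul, coeff_mul_X_zero, coeff_dl, coeff_derivative]
  push_cast; ring

lemma coeff_del_succ (h : ℚ[X][X]) (j : ℕ) : (del h).coeff (j + 1) =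
    (6 * X + 6 * X ^ 2) * derivative (h.coeff (j + 1)) - (j : ℚ[X]) * h.coeff j
      + (6 * X + 2) * ((j + 1 : ℕ) : ℚ[X]) * h.coeff (j + 1)
      + (3 * X - 1) * ((j + 2 : ℕ) : ℚ[X]) * h.coeff (j + 2) := by
  have : ((-(X : ℚ[X][X]) ^ 2 + C (6 * X + 2) * X + C (3 * X - 1)) * derivative h) =
    C (6 * X + 2) * derivative h * X + C (3 * X - 1) * derivative h
      - derivative h * X * X := by ring
  rw [del, this]
  simp only [coeff_add, coeff_sub, coeff_C_mul, coeff_mul_X, coeff_dl, coeff_derivative]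
  cases j with
  | zero => simp only [coeff_mul_X_zero]; push_cast; ring
  | succ j => simp only [coeff_mul_X, coeff_derivative]; push_cast; ring

lemma coeff_coeff_swap (h : ℚ[X][X]) (i j : ℕ) :
    ((Bivariate.swap h).coeff i).coeff j = (h.coeff j).coeff i := by
  induction h using Polynomial.induction_on' with
  | add f g hf hg => simp [hf, hg]
  | monomial n p =>
    induction p using Polynomial.induction_on' with
    | add f g hf hg => simp only [map_add, coeff_add, hf, hg]
    | monomial m r =>
      rw [Bivariate.swap_monomial_monomial]
      simp only [coeff_monomial]
      split_ifs <;> simp_all [coeff_monomial]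

/-- Degree in the inner variable `ℓ`. -/
def degL (h : ℚ[X][X]) : ℕ := (Bivariate.swap h).natDegree

lemma degL_mul {f g : ℚ[X][X]} (hf : f ≠ 0) (hg : g ≠ 0) : degL (f * g) = degL f + degL g := by
  rw [degL, map_mul, natDegree_mul]
  · rfl
  · simpa using hf
  · simpa using hg

lemma natDegree_coeff_le (h : ℚ[X][X]) (j : ℕ) : (h.coeff j).natDegree ≤ degL h := by
  rw [natDegree_le_iff_coeff_eq_zero]
  intro i hi
  rw [← coeff_coeff_swap, coeff_eq_zero_of_natDegree_lt hi, coeff_zero]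

lemma degL_le {h : ℚ[X][X]} {n : ℕ} (H : ∀ j, (h.coeff j).natDegree ≤ n) : degL h ≤ n := by
  rw [degL, natDegree_le_iff_coeff_eq_zero]
  intro i hi
  ext j
  rw [coeff_coeff_swap, coeff_eq_zero_of_natDegree_lt ((H j).trans_lt hi), coeff_zero]

lemma degL_C (p : ℚ[X]) : degL (C p) = p.natDegree := by
  apply le_antisymm
  · apply degL_le
    intro j
    rw [coeff_C]; split_ifs <;> simp
  · simpa using natDegree_coeff_le (C p) 0

lemma natDegree_del_le (h : ℚ[X][X]) : (del h).natDegree ≤ h.natDegree + 1 := by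
  rw [natDegree_le_iff_coeff_eq_zero]
  intro j hj
  obtain ⟨j, rfl⟩ : ∃ k, j = k + 1 := ⟨j - 1, by omega⟩
  rw [coeff_del_succ, coeff_eq_zero_of_natDegree_lt (n := j) (by omega),
    coeff_eq_zero_of_natDegree_lt (n := j + 1) (by omega),
    coeff_eq_zero_of_natDegree_lt (n := j + 2) (by omega)]
  simp

lemma natDegree_deriv_aux {p : ℚ[X]} {n : ℕ} (hp : p.natDegree ≤ n) :
    ((6 * X + 6 * X ^ 2) * derivative p).natDegree ≤ n + 1 := by
  by_cases h0 : p.natDegree = 0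
  · rw [natDegree_eq_zero] at h0
    obtain ⟨c, rfl⟩ := h0
    simp
  · refine natDegree_mul_le.trans ?_
    have h1 : (6 * X + 6 * X ^ 2 : ℚ[X]).natDegree ≤ 2 := by compute_degree
    have h2 := natDegree_derivative_lt h0
    omega

lemma degL_del_le (h : ℚ[X][X]) : degL (del h) ≤ degL h + 1 := by
  apply degL_le
  intro j
  have e1 : (3 * X - 1 : ℚ[X]).natDegree ≤ 1 := by compute_degree
  have e2 : (6 * X + 2 : ℚ[X]).natDegree ≤ 1 := by compute_degree
  cases j with
  | zero =>
    rw [coeff_del_zero]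
    refine natDegree_add_le_of_degree_le (natDegree_deriv_aux (natDegree_coeff_le h 0)) ?_
    refine natDegree_mul_le.trans ?_
    have := natDegree_coeff_le h 1
    omega
  | succ j =>
    rw [coeff_del_succ]
    refine natDegree_add_le_of_degree_le (natDegree_add_le_of_degree_le
      ((natDegree_sub_le_of_le (natDegree_deriv_aux (natDegree_coeff_le h _)) ?_).trans
        (max_self (degL h + 1)).le) ?_) ?_
    · refine natDegree_mul_le.trans ?_
      have := natDegree_coeff_le h j
      rw [natDegree_natCast]
      omega
    · refine natDegree_mul_le.trans ?_
      have := natDegree_coeff_le h (j + 1)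
      have h3 := natDegree_mul_le (p := (6 * X + 2 : ℚ[X])) (q := ((j + 1 : ℕ) : ℚ[X]))
      rw [natDegree_natCast] at h3
      omega
    · refine natDegree_mul_le.trans ?_
      have := natDegree_coeff_le h (j + 2)
      have h3 := natDegree_mul_le (p := (3 * X - 1 : ℚ[X])) (q := ((j + 2 : ℕ) : ℚ[X]))
      rw [natDegree_natCast] at h3
      omega

/-- A polynomial solution of `-(y-s)² f' = κ f` forces `κ(s) = 0`. -/
lemma eval_eq_zero_of_sq_mul_deriv {f k : ℚ[X]} {s : ℚ} (hf : f ≠ 0)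
    (h : -(X - C s) ^ 2 * derivative f = f * k) : k.eval s = 0 := by
  obtain ⟨g, hg, hnd⟩ := exists_eq_pow_rootMultiplicity_mul_and_not_dvd f hf s
  set m := rootMultiplicity s f
  rw [dvd_iff_isRoot, IsRoot.def] at hnd
  have hne : (X - C s) ^ m ≠ 0 := pow_ne_zero _ (X_sub_C_ne_zero s)
  have key : -(X - C s) * ((m : ℚ[X]) * g + (X - C s) * derivative g) = g * k := by
    apply mul_left_cancel₀ hne
    rw [hg, derivative_mul] at h
    have : derivative ((X - C s) ^ m) * (X - C s) = (m : ℚ[X]) * (X - C s) ^ m := by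
      cases m with
      | zero => simp
      | succ m => rw [derivative_X_sub_C_pow, Nat.add_sub_cancel, map_natCast]; ring
    linear_combination h + (X - C s) * g * this
  have := congrArg (eval s) key
  simp only [eval_mul, eval_neg, eval_sub, eval_X, eval_C, sub_self, neg_zero, zero_mul] at this
  rcases mul_eq_zero.mp this.symm with h | h
  · exact absurd h hnd
  · exact h

lemma map_eval_del (g : ℚ[X][X]) (r s : ℚ) (hr : 6 * r + 6 * r ^ 2 = 0)
    (h1 : 6 * r + 2 = 2 * s) (h2 : 3 * r - 1 = -s ^ 2) :
    (del g).map (evalRingHom r) = -(X - C s) ^ 2 * derivative (g.map (evalRingHom r)) := by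
  have e1 : evalRingHom r (6 * X + 6 * X ^ 2) = 0 := by
    simp [hr]
  have e2 : evalRingHom r (6 * X + 2) = 2 * s := by
    simp [h1]
  have e3 : evalRingHom r (3 * X - 1) = -s ^ 2 := by
    simp [h2]
  simp only [del, Polynomial.map_add, Polynomial.map_mul, Polynomial.map_neg, Polynomial.map_pow,
    map_C, map_X, e1, e2, e3, ← derivative_map]
  simp only [map_mul, map_neg, map_pow, map_ofNat, map_zero]
  ring

/-- Core of the Darboux computation: a polynomial dividing its derivative along the vector field
and not vanishing identically on the invariant lines `ℓ = 0`, `ℓ = -1` does not involve `y`. The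
cofactor is affine; its values at the singular points on the two lines and at infinity determine
it, and force the total degree to be zero. -/
lemma natDegree_eq_zero_of_dvd_del_aux {g : ℚ[X][X]} (hg : g ≠ 0) (hd : g ∣ del g)
    (h0 : g.map (evalRingHom 0) ≠ 0) (h1 : g.map (evalRingHom (-1)) ≠ 0) :
    g.natDegree = 0 := by
  obtain ⟨κ, hκ⟩ := hd
  set d := g.natDegree with hdd
  have hA : κ.natDegree ≤ 1 := by
    by_cases h : κ = 0
    · simp [h]
    · have := natDegree_del_le g
      rw [hκ, natDegree_mul hg h] at this
      omega
  have hB : degL κ ≤ 1 := by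
    by_cases h : κ = 0
    · rw [h, degL]; simp
    · have := degL_del_le g
      rw [hκ, degL_mul hg h] at this
      omega
  have hκ1 : κ.coeff 1 = -(d : ℚ[X]) := by
    have e := congrArg (fun p => p.coeff (d + 1)) hκ
    simp only [coeff_del_succ] at e
    rw [show (g * κ).coeff (d + 1) = g.coeff d * κ.coeff 1 from
      coeff_mul_add_eq_of_natDegree_le le_rfl hA, coeff_eq_zero_of_natDegree_lt (n := d + 1) (by omega),
      coeff_eq_zero_of_natDegree_lt (n := d + 2) (by omega)] at e
    have hc : g.coeff d ≠ 0 := by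
      rw [hdd, coeff_natDegree]; exact leadingCoeff_ne_zero.mpr hg
    apply mul_left_cancel₀ hc
    rw [← e]; simp; ring
  set k0 := (κ.coeff 0).coeff 0
  set k1 := (κ.coeff 0).coeff 1
  have hκ0 : κ.coeff 0 = C k1 * X + C k0 :=
    eq_X_add_C_of_natDegree_le_one ((natDegree_coeff_le κ 0).trans hB)
  have hκf : κ = C (-(d : ℚ[X])) * X + C (C k1 * X + C k0) := by
    rw [← hκ0, ← hκ1]; exact eq_X_add_C_of_natDegree_le_one hA
  have res : ∀ r s : ℚ, 6 * r + 6 * r ^ 2 = 0 → 6 * r + 2 = 2 * s → 3 * r - 1 = -s ^ 2 →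
      g.map (evalRingHom r) ≠ 0 → -(d : ℚ) * s + (k1 * r + k0) = 0 := by
    intro r s hr hs hs2 hne
    have e := congrArg (Polynomial.map (evalRingHom r)) hκ
    rw [map_eval_del g r s hr hs hs2, Polynomial.map_mul] at e
    have := eval_eq_zero_of_sq_mul_deriv hne e
    rw [hκf] at this
    simpa using this
  have r0 := res 0 1 (by norm_num) (by norm_num) (by norm_num) h0
  have r1 := res (-1) (-2) (by norm_num) (by norm_num) (by norm_num) h1
  -- a monomial of maximal total degree, and among these of minimal degree in `y`
  obtain ⟨i, j, hij, hmax, hmin⟩ : ∃ i j, (g.coeff j).coeff i ≠ 0 ∧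
      (∀ i' j', i + j < i' + j' → (g.coeff j').coeff i' = 0) ∧
      (∀ i' j', i + j = i' + j' → j' < j → (g.coeff j').coeff i' = 0) := by
    set S : Finset (ℕ × ℕ) := ((Finset.range (degL g + 1)) ×ˢ (Finset.range (d + 1))).filter
      (fun z => (g.coeff z.2).coeff z.1 ≠ 0)
    have hS : ∀ i' j', (g.coeff j').coeff i' ≠ 0 → (i', j') ∈ S := by
      intro i' j' h
      simp only [S, Finset.mem_filter, Finset.mem_product, Finset.mem_range]
      refine ⟨⟨?_, ?_⟩, h⟩
      · have := natDegree_coeff_le g j'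
        have := le_natDegree_of_ne_zero h
        omega
      · have : g.coeff j' ≠ 0 := by intro h'; rw [h'] at h; simp at h
        have := le_natDegree_of_ne_zero this
        omega
    have hSn : S.Nonempty := by
      have hc : (g.coeff d).coeff (g.coeff d).natDegree ≠ 0 := by
        rw [coeff_natDegree, leadingCoeff_ne_zero, hdd, coeff_natDegree, leadingCoeff_ne_zero]
        exact hg
      exact ⟨_, hS _ _ hc⟩
    obtain ⟨z, hz, hzm⟩ := S.exists_max_image
      (fun z => (z.1 + z.2) * (d + 1) + (d - z.2)) hSn
    have hz' : z.2 ≤ d := by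
      simp only [S, Finset.mem_filter, Finset.mem_product, Finset.mem_range] at hz
      omega
    refine ⟨z.1, z.2, (Finset.mem_filter.mp hz).2, ?_, ?_⟩
    · intro i' j' hlt
      by_contra hne
      have := hzm _ (hS _ _ hne)
      simp only at this
      have h3 : (z.1 + z.2 + 1) * (d + 1) ≤ (i' + j') * (d + 1) := Nat.mul_le_mul_right _ hlt
      have h4 : (z.1 + z.2 + 1) * (d + 1) = (z.1 + z.2) * (d + 1) + (d + 1) := by ring
      omega
    · intro i' j' heq hlt
      by_contra hne
      have := hzm _ (hS _ _ hne)
      simp only [← heq] at this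
      omega
  have e := congrArg (fun p => (p.coeff j).coeff (i + 1)) hκ
  have hder : ∀ p : ℚ[X], ((6 * X + 6 * X ^ 2) * derivative p).coeff (i + 1)
      = 6 * (i + 1 + 1) * p.coeff (i + 2) - 6 * (i + 2) * p.coeff (i + 2)
        + 6 * (i + 1) * p.coeff (i + 1) + 6 * i * p.coeff i := by
    intro p
    have : (6 * X + 6 * X ^ 2 : ℚ[X]) * derivative p
        = C 6 * (derivative p * X) + C 6 * (derivative p * X * X) := by
      simp only [map_ofNat]; ring
    rw [this]
    cases i with
    | zero =>
      simp only [coeff_add, coeff_C_mul, coeff_mul_X, coeff_mul_X_zero, coeff_derivative]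
      push_cast; ring
    | succ i => simp only [coeff_add, coeff_C_mul, coeff_mul_X, coeff_derivative]; push_cast; ring
  have hX : ∀ (p : ℚ[X]) (u v : ℚ), ((C u * X + C v) * p).coeff (i + 1)
      = u * p.coeff i + v * p.coeff (i + 1) := by
    intro p u v
    have : (C u * X + C v) * p = C u * (p * X) + C v * p := by ring
    rw [this]; simp only [coeff_add, coeff_C_mul, coeff_mul_X]
  have g1 : (g.coeff j).coeff (i + 1) = 0 := hmax _ _ (by omega)
  have g2 : (g.coeff (j + 1)).coeff i = 0 := hmax _ _ (by omega)
  have g3 : (g.coeff (j + 1)).coeff (i + 1) = 0 := hmax _ _ (by omega)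
  have h31 : (3 * X - 1 : ℚ[X]) = C 3 * X + C (-1) := by
    simp only [map_ofNat, map_neg, map_one]; ring
  have key : 6 * ((i : ℚ) + j) * (g.coeff j).coeff i = k1 * (g.coeff j).coeff i := by
    have hR : (g * κ) = C (C k1 * X + C k0) * g - C (d : ℚ[X]) * (g * X) := by
      rw [hκf]; simp only [map_neg]; ring
    cases j with
    | zero =>
      simp only [hR, coeff_del_zero, h31, coeff_add, coeff_sub, coeff_C_mul, hder, hX,
        coeff_mul_X_zero, g1, mul_zero] at e
      simp only [zero_add] at g2 g3
      rw [g2, g3] at e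
      simp only [mul_zero, coeff_zero] at e
      push_cast
      linear_combination e
    | succ j =>
      have g4 : (g.coeff j).coeff (i + 1) = 0 := hmin _ _ (by omega) (by omega)
      have h62 : (6 * X + 2 : ℚ[X]) * ((j + 1 : ℕ) : ℚ[X]) * g.coeff (j + 1)
        = C ((j + 1 : ℕ) : ℚ) * ((C 6 * X + C 2) * g.coeff (j + 1)) := by
        simp only [map_natCast, map_ofNat]; ring
      have h32 : (3 * X - 1 : ℚ[X]) * ((j + 2 : ℕ) : ℚ[X]) * g.coeff (j + 2)
        = C ((j + 2 : ℕ) : ℚ) * ((C 3 * X + C (-1)) * g.coeff (j + 2)) := by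
        rw [← h31]; simp only [map_natCast]; ring
      have hj : (j : ℚ[X]) = C (j : ℚ) := by simp
      have hdC : (d : ℚ[X]) = C (d : ℚ) := by simp
      rw [show j + 1 + 1 = j + 2 from rfl] at g2 g3
      simp only [hR, coeff_del_succ, h62, h32, hj, hdC, coeff_add, coeff_sub, coeff_C_mul, hder, hX,
        coeff_mul_X, g1, g2, g3, g4, mul_zero] at e
      push_cast at e ⊢
      linear_combination e
  have hk : 6 * ((i : ℚ) + j) = k1 := mul_right_cancel₀ hij key
  have hdn : d ≤ i + j := by
    by_contra hlt
    have hc : (g.coeff d).coeff (g.coeff d).natDegree ≠ 0 := by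
      rw [coeff_natDegree, leadingCoeff_ne_zero, hdd, coeff_natDegree, leadingCoeff_ne_zero]
      exact hg
    exact hc (hmax _ _ (by omega))
  have hdn' : (d : ℚ) ≤ i + j := by exact_mod_cast hdn
  have : (d : ℚ) ≤ 0 := by linarith
  exact_mod_cast le_antisymm this (by positivity)

lemma C_X_sub_C_dvd_iff (g : ℚ[X][X]) (r : ℚ) :
    C (X - C r) ∣ g ↔ g.map (evalRingHom r) = 0 := by
  rw [C_dvd_iff_dvd_coeff, Polynomial.ext_iff]
  refine forall_congr' fun j => ?_
  rw [dvd_iff_isRoot, IsRoot.def, coeff_map, coeff_zero]; rfl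

/-- Every polynomial dividing its derivative along the vector field lies in `ℚ[ℓ]`. -/
lemma natDegree_eq_zero_of_dvd_del {g : ℚ[X][X]} (hg : g ≠ 0) (hd : g ∣ del g) :
    g.natDegree = 0 := by
  induction hn : degL g using Nat.strong_induction_on generalizing g with
  | _ n ih =>
    have step : ∀ r : ℚ, 6 * r + 6 * r ^ 2 = 0 → C (X - C r) ∣ g → g.natDegree = 0 := by
      rintro r hr ⟨g', hg'⟩
      have hr' : (X - C r : ℚ[X]) ∣ (6 * X + 6 * X ^ 2) := by
        rw [dvd_iff_isRoot, IsRoot.def]; simpa using hr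
      obtain ⟨w, hw⟩ := hr'
      have hXr : (C (X - C r) : ℚ[X][X]) ≠ 0 := by
        exact C_ne_zero.mpr (X_sub_C_ne_zero r)
      have hg'0 : g' ≠ 0 := by rintro rfl; simp at hg'; exact hg hg'
      have h1 : g' ∣ del g' := by
        obtain ⟨κ, hκ⟩ := hd
        rw [hg', del_mul, del_C, hw] at hκ
        refine ⟨κ - C w, ?_⟩
        apply mul_left_cancel₀ hXr
        simp only [derivative_sub, derivative_X, derivative_C, sub_zero, mul_one, map_mul] at hκ ⊢
        linear_combination hκ
      have h2 : degL g = 1 + degL g' := by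
        rw [hg', degL_mul hXr hg'0, degL_C, natDegree_X_sub_C]
      have h3 := ih (degL g') (by omega) hg'0 h1 rfl
      rw [hg', natDegree_mul hXr hg'0, natDegree_C, h3]
    by_cases c0 : g.map (evalRingHom 0) = 0
    · exact step 0 (by norm_num) ((C_X_sub_C_dvd_iff g 0).mpr c0)
    by_cases c1 : g.map (evalRingHom (-1)) = 0
    · exact step (-1) (by norm_num) ((C_X_sub_C_dvd_iff g (-1)).mpr c1)
    exact natDegree_eq_zero_of_dvd_del_aux hg hd c0 c1

end FibTheta

/-! ### Orders of polynomials in `ℓ`, `y` -/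

namespace FibTheta

open Polynomial
open PowerSeries (order)

/-- The series `a`, over `ℚ`. -/
def aq : PowerSeries ℚ := PowerSeries.map (Int.castRingHom ℚ) sa

/-- The series `b`, over `ℚ`. -/
def bq : PowerSeries ℚ := PowerSeries.map (Int.castRingHom ℚ) sb

/-- The series `P`, over `ℚ`. -/
def Pq : PowerSeries ℚ := PowerSeries.map (Int.castRingHom ℚ) sP

lemma qD_bq : 3 * qD bq = bq * (Pq - 2 * aq - bq) := by
  have h := congrArg (PowerSeries.map (Int.castRingHom ℚ)) qD_sb
  simp only [map_mul, map_sub, map_ofNat, ← qD_map] at h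
  exact h

lemma qD_aq : 3 * qD aq = aq * (Pq + aq + 2 * bq) := by
  have h := congrArg (PowerSeries.map (Int.castRingHom ℚ)) qD_sa
  simp only [map_mul, map_add, map_ofNat, ← qD_map] at h
  exact h

lemma qD_Pq : 6 * qD Pq = Pq ^ 2 - aq ^ 2 - aq * bq - bq ^ 2 := by
  have h := congrArg (PowerSeries.map (Int.castRingHom ℚ)) qD_sP
  simp only [map_mul, map_sub, map_pow, map_ofNat, ← qD_map] at h
  exact h

lemma constCoeff_sb : PowerSeries.coeff 0 sb = 1 := by
  rw [sb, show (4 : ℕ) = 2 * 2 from rfl, pow_mul, sq, sq, coeff_zero_mul', coeff_zero_mul',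
    coeff_zero_t4]; norm_num

lemma constCoeff_sa : PowerSeries.coeff 0 sa = 0 := by
  rw [sa, show (4 : ℕ) = 2 * 2 from rfl, pow_mul, pow_mul, sq, sq, sq, sq, map_sub,
    coeff_zero_mul', coeff_zero_mul', coeff_zero_mul', coeff_zero_mul',
    coeff_zero_t4, coeff_zero_t3]; norm_num

lemma coeff_one_sa : PowerSeries.coeff 1 sa = 16 := by
  rw [sa, show (4 : ℕ) = 2 * 2 from rfl, pow_mul, pow_mul, sq, sq, sq, sq, map_sub,
    coeff_one_mul', coeff_one_mul', coeff_one_mul', coeff_one_mul',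
    coeff_zero_mul', coeff_zero_mul',
    coeff_zero_t4, coeff_zero_t3, coeff_one_t3, coeff_one_t4]; norm_num

lemma bq_constCoeff : PowerSeries.constantCoeff bq = 1 := by
  rw [← PowerSeries.coeff_zero_eq_constantCoeff_apply, bq, PowerSeries.coeff_map, constCoeff_sb]
  simp

lemma bq_ne_zero : bq ≠ 0 := by
  intro h; have := bq_constCoeff; rw [h] at this; simp at this

lemma isUnit_bq : IsUnit bq := by
  rw [PowerSeries.isUnit_iff_constantCoeff, bq_constCoeff]; exact isUnit_one

/-- `ℓ = a / b`. -/
def ls : PowerSeries ℚ := aq * bq⁻¹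

/-- `y = (P + a) / b`. -/
def ys : PowerSeries ℚ := (Pq + aq) * bq⁻¹

lemma bq_mul_inv : bq * bq⁻¹ = 1 :=
  PowerSeries.mul_inv_cancel _ (by rw [bq_constCoeff]; exact one_ne_zero)

lemma bq_mul_ls : bq * ls = aq := by
  rw [ls]; linear_combination aq * bq_mul_inv

lemma bq_mul_ys : bq * ys = Pq + aq := by
  rw [ys]; linear_combination (Pq + aq) * bq_mul_inv

lemma qD_ls : 6 * qD ls = bq * (6 * ls + 6 * ls ^ 2) := by
  have h := congrArg qD bq_mul_ls
  rw [qD_mul] at h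
  apply mul_left_cancel₀ bq_ne_zero
  have e : Pq = bq * ys - aq := by rw [bq_mul_ys]; ring
  have e1 := qD_aq
  have e2 := qD_bq
  have ea := bq_mul_ls
  generalize qD aq = Da at *
  generalize qD bq = Db at *
  rw [e, ← ea] at e1 e2
  linear_combination 6 * h + 2 * e1 - 2 * ls * e2

lemma qD_ys : 6 * qD ys = bq * (-ys ^ 2 + (6 * ls + 2) * ys + (3 * ls - 1)) := by
  have h := congrArg qD bq_mul_ys
  rw [qD_mul, qD_add] at h
  apply mul_left_cancel₀ bq_ne_zero
  have e : Pq = bq * ys - aq := by rw [bq_mul_ys]; ring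
  have e1 := qD_aq
  have e2 := qD_bq
  have e3 := qD_Pq
  have ea := bq_mul_ls
  generalize qD Pq = DP at *
  generalize qD aq = Da at *
  generalize qD bq = Db at *
  rw [e, ← ea] at e1 e2 e3
  linear_combination 6 * h + 2 * e1 - 2 * ys * e2 + e3

/-- Substitution of the series `ℓ`, `y` into a polynomial in `ℚ[ℓ][y]`. -/
def ev : ℚ[X][X] →+* PowerSeries ℚ :=
  eval₂RingHom ((aeval ls : ℚ[X] →ₐ[ℚ] PowerSeries ℚ) : ℚ[X] →+* PowerSeries ℚ) ys

lemma ev_C (p : ℚ[X]) : ev (C p) = aeval ls p := by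
  simp [ev]

lemma ev_X : ev X = ys := by
  simp [ev]

/-- The chain rule: `del` is the vector field along which `(ℓ, y)` moves. -/
lemma qD_ev (h : ℚ[X][X]) : 6 * qD (ev h) = bq * ev (del h) := by
  induction h using Polynomial.induction_on with
  | C p =>
    induction p using Polynomial.induction_on with
    | C r =>
      rw [ev_C, aeval_C, del_C, derivative_C, mul_zero, map_zero, map_zero, mul_zero,
        PowerSeries.algebraMap_eq, qD_C, mul_zero]
    | add f g hf hg => rw [C_add, del_add, map_add, map_add, qD_add, mul_add, hf, hg, mul_add]
    | monomial n r ih =>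
      rw [pow_succ, ← mul_assoc, C_mul]
      generalize C (C r * X ^ n) = u at *
      rw [del_mul, map_mul, qD_mul, map_add, map_mul, map_mul]
      have hX : 6 * qD (ev (C X)) = bq * ev (del (C X)) := by
        rw [ev_C, aeval_X, qD_ls, del_C, ev_C]
        simp only [map_mul, map_add, map_pow, map_ofNat, aeval_X, derivative_X, mul_one]
      linear_combination ev (C X) * ih + ev u * hX
  | add f g hf hg => rw [del_add, map_add, map_add, qD_add, mul_add, hf, hg, mul_add]
  | monomial n r ih =>
    rw [pow_succ, ← mul_assoc]
    generalize C r * X ^ n = u at *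
    rw [del_mul, map_mul, qD_mul, map_add, map_mul, map_mul]
    have hX : 6 * qD (ev X) = bq * ev (del X) := by
      rw [ev_X, qD_ys, del_X]
      simp only [map_mul, map_add, map_sub, map_neg, map_pow, map_ofNat, map_one, ev_C, ev_X,
        aeval_X]
    linear_combination ev X * ih + ev u * hX

lemma pow_dvd_iff_le_order {f : PowerSeries ℚ} {k : ℕ} :
    (PowerSeries.X ^ k ∣ f) ↔ (k : ℕ∞) ≤ order f := by
  rw [PowerSeries.X_pow_dvd_iff]
  constructor
  · intro h; exact PowerSeries.le_order _ _ fun i hi => h i (by exact_mod_cast hi)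
  · intro h i hi
    exact PowerSeries.coeff_of_lt_order i (lt_of_lt_of_le (by exact_mod_cast hi) h)

lemma order_le_of_dvd_imp {f : PowerSeries ℚ} {n : ℕ}
    (h : ∀ k : ℕ, PowerSeries.X ^ k ∣ f → k ≤ n) : order f ≤ n := by
  by_contra hlt
  rw [not_le] at hlt
  have := h (n + 1) (pow_dvd_iff_le_order.mpr (by
    rw [Nat.cast_add, Nat.cast_one]; exact Order.add_one_le_of_lt hlt))
  omega

lemma X_pow_dvd_qD {f : PowerSeries ℚ} {k : ℕ} (h : PowerSeries.X ^ k ∣ f) :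
    PowerSeries.X ^ k ∣ qD f := by
  rw [PowerSeries.X_pow_dvd_iff] at h ⊢
  intro i hi
  rw [coeff_qD, h i hi, mul_zero]

lemma order_ls : order ls = 1 := by
  have ha : order aq = 1 := by
    have : ((1 : ℕ) : ℕ∞) = 1 := rfl
    rw [← this, PowerSeries.order_eq_nat]
    refine ⟨by rw [aq, PowerSeries.coeff_map, coeff_one_sa]; norm_num, fun i hi => ?_⟩
    obtain rfl : i = 0 := by omega
    rw [aq, PowerSeries.coeff_map, constCoeff_sa]; simp
  rw [← bq_mul_ls, PowerSeries.order_mul, PowerSeries.order_zero_of_unit isUnit_bq, zero_add] at ha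
  exact ha

lemma order_aeval_ls {p : ℚ[X]} (hp : p ≠ 0) : order (aeval ls p) ≤ p.natDegree := by
  obtain ⟨g, hg, hnd⟩ := exists_eq_pow_rootMultiplicity_mul_and_not_dvd p hp 0
  set m := rootMultiplicity 0 p
  have hg0 : g ≠ 0 := by rintro rfl; simp at hnd
  have h1 : order (aeval ls g) = 0 := by
    by_contra h
    rw [← ne_eq, PowerSeries.order_ne_zero_iff_constCoeff_eq_zero] at h
    apply hnd
    rw [dvd_iff_isRoot, IsRoot.def, ← coeff_zero_eq_eval_zero]
    have h2 : (PowerSeries.constantCoeff) ls = 0 := by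
      rw [← PowerSeries.order_ne_zero_iff_constCoeff_eq_zero, order_ls]; exact one_ne_zero
    have h4 : PowerSeries.constantCoeff (aeval ls g) = eval₂ (RingHom.id ℚ) 0 g := by
      rw [aeval_def, hom_eval₂, h2]; rfl
    rw [h4] at h
    rw [coeff_zero_eq_eval_zero]; exact h
  have h2 : p.natDegree = m + g.natDegree := by
    rw [hg, natDegree_mul (pow_ne_zero _ (X_sub_C_ne_zero _)) hg0, natDegree_pow,
      natDegree_X_sub_C, mul_one]
  rw [h2, hg, map_mul, map_pow, PowerSeries.order_mul, PowerSeries.order_pow, h1]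
  simp [order_ls]

lemma natDegree_det_le' {n D : ℕ} (M : Matrix (Fin n) (Fin n) ℚ[X])
    (h : ∀ i j, (M i j).natDegree ≤ D) : M.det.natDegree ≤ n * D := by
  rw [Matrix.det_apply]
  refine natDegree_sum_le_of_forall_le _ _ fun σ _ => ?_
  refine (natDegree_smul_le _ _).trans ?_
  refine (natDegree_prod_le _ _).trans ?_
  refine (Finset.sum_le_card_nsmul _ _ D fun i _ => h _ _).trans ?_
  simp

lemma natDegree_resultant_le (f g : ℚ[X][X]) (m n D : ℕ) (hf : degL f ≤ D) (hg : degL g ≤ D) :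
    (resultant f g m n).natDegree ≤ (m + n) * D := by
  apply natDegree_det_le'
  intro i j
  rw [sylvester, Matrix.of_apply]
  refine Fin.addCases (fun j₁ => ?_) (fun j₁ => ?_) j
  · rw [Fin.addCases_left]; split_ifs
    · exact (natDegree_coeff_le g _).trans hg
    · simp
  · rw [Fin.addCases_right]; split_ifs
    · exact (natDegree_coeff_le f _).trans hf
    · simp

lemma order_ev_irreducible {g : ℚ[X][X]} (hg : Irreducible g) :
    order (ev g) ≤ (3 * (g.natDegree + degL g) ^ 2 : ℕ) := by
  by_cases hd : g.natDegree = 0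
  · obtain ⟨p, rfl⟩ := natDegree_eq_zero.mp hd
    have hp : p ≠ 0 := by rintro rfl; simp at hg
    rw [ev_C]
    refine (order_aeval_ls hp).trans ?_
    rw [degL_C, natDegree_C, zero_add]
    norm_cast
    nlinarith
  have hprim : g.IsPrimitive := hg.isPrimitive hd
  have hnd : ¬ g ∣ del g := fun h => hd (natDegree_eq_zero_of_dvd_del hg.ne_zero h)
  set K := FractionRing ℚ[X]
  have hcop : IsCoprime (g.map (algebraMap ℚ[X] K)) ((del g).map (algebraMap ℚ[X] K)) := by
    rw [Irreducible.coprime_iff_not_dvd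
      ((hprim.irreducible_iff_irreducible_map_fraction_map (K := K)).mp hg)]
    intro h
    exact hnd (hprim.dvd_of_fraction_map_dvd_fraction_map (K := K) h)
  have hR := resultant_ne_zero _ _ hcop
  have inj := IsFractionRing.injective ℚ[X] K
  rw [natDegree_map_eq_of_injective inj, natDegree_map_eq_of_injective inj,
    resultant_map_map] at hR
  have hR0 : resultant g (del g) ≠ 0 := fun h => hR (by rw [h, map_zero])
  obtain ⟨p, q, -, -, hpq⟩ := exists_mul_add_mul_eq_C_resultant
    g (del g) (m := g.natDegree) (n := (del g).natDegree) le_rfl le_rfl (Or.inl hd)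
  have hRd := natDegree_resultant_le g (del g) g.natDegree (del g).natDegree (degL g + 1)
    (by omega) (degL_del_le g)
  apply order_le_of_dvd_imp
  intro k hk
  have hk' : PowerSeries.X ^ k ∣ ev (del g) := by
    have h6 : PowerSeries.X ^ k ∣ bq * ev (del g) := by
      rw [← qD_ev]; exact (X_pow_dvd_qD hk).mul_left _
    exact (isUnit_bq.dvd_mul_left).mp h6
  have h1 : PowerSeries.X ^ k ∣ aeval ls (resultant g (del g)) := by
    rw [← ev_C, ← hpq, map_add, map_mul, map_mul]
    exact dvd_add (hk.mul_right _) (hk'.mul_right _)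
  have h2 := (pow_dvd_iff_le_order.mp h1).trans (order_aeval_ls hR0)
  have h3 : k ≤ (resultant g (del g)).natDegree := by exact_mod_cast h2
  have h4 := natDegree_del_le g
  refine h3.trans (hRd.trans ?_)
  have h5 : g.natDegree + (del g).natDegree ≤ 3 * (g.natDegree + degL g) := by omega
  have h6 : degL g + 1 ≤ g.natDegree + degL g := by omega
  calc _ ≤ (3 * (g.natDegree + degL g)) * (g.natDegree + degL g) := Nat.mul_le_mul h5 h6
    _ = _ := by ring

/-- A nonzero polynomial in the series `ℓ`, `y` has order at zero at most quadratic in its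
degrees. -/
theorem order_ev_le {h : ℚ[X][X]} (hh : h ≠ 0) :
    order (ev h) ≤ (3 * (h.natDegree + degL h) ^ 2 : ℕ) := by
  induction h using WfDvdMonoid.induction_on_irreducible with
  | zero => exact absurd rfl hh
  | unit u hu =>
    rw [PowerSeries.order_zero_of_unit (hu.map ev)]; exact zero_le
  | mul f i hf hi ih =>
    rw [map_mul, PowerSeries.order_mul, natDegree_mul hi.ne_zero hf, degL_mul hi.ne_zero hf]
    refine (add_le_add (order_ev_irreducible hi) (ih hf)).trans ?_
    norm_cast
    nlinarith [Nat.zero_le ((i.natDegree + degL i) * (f.natDegree + degL f))]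

lemma ev_injective : Function.Injective ev := by
  rw [injective_iff_map_eq_zero]
  intro h h0
  by_contra hne
  have := order_ev_le hne
  rw [h0, PowerSeries.order_zero, top_le_iff] at this
  exact ENat.natCast_ne_top _ this

end FibTheta

/-! ### Wronskians -/

namespace FibTheta

open Polynomial
open PowerSeries (order)

/-- The derivation `6 q d/dq`. -/
def dq (f : PowerSeries ℚ) : PowerSeries ℚ := 6 * qD f

lemma dq_add (f g : PowerSeries ℚ) : dq (f + g) = dq f + dq g := by
  simp only [dq, qD_add]; ring

lemma dq_mul (f g : PowerSeries ℚ) : dq (f * g) = dq f * g + f * dq g := by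
  simp only [dq, qD_mul]; ring

lemma dq_zero : dq 0 = 0 := by simp [dq, qD_zero]

lemma dq_sum {ι : Type*} (s : Finset ι) (f : ι → PowerSeries ℚ) :
    dq (∑ i ∈ s, f i) = ∑ i ∈ s, dq (f i) := by
  simp only [dq, qD_sum, Finset.mul_sum]

lemma coeff_dq (f : PowerSeries ℚ) (n : ℕ) :
    PowerSeries.coeff n (dq f) = 6 * n * PowerSeries.coeff n f := by
  have : dq f = PowerSeries.C (6 : ℚ) * qD f := by rw [dq]; simp [map_ofNat]
  rw [this, PowerSeries.coeff_C_mul, coeff_qD]; ring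

lemma dq_C_mul (c : ℚ) (f : PowerSeries ℚ) : dq (PowerSeries.C c * f) = PowerSeries.C c * dq f := by
  simp only [dq, qD_C_mul]; ring

lemma X_pow_dvd_dq {f : PowerSeries ℚ} {k : ℕ} (h : PowerSeries.X ^ k ∣ f) :
    PowerSeries.X ^ k ∣ dq f := (X_pow_dvd_qD h).mul_left _

lemma coeff_order_add_mul (x z : PowerSeries ℚ) {k m : ℕ} (hx : (k : ℕ∞) ≤ order x)
    (hz : (m : ℕ∞) ≤ order z) : PowerSeries.coeff (k + m) (x * z) =
      PowerSeries.coeff k x * PowerSeries.coeff m z := by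
  rw [PowerSeries.coeff_mul]
  apply Finset.sum_eq_single (k, m)
  · rintro ⟨i, j⟩ hij hne
    rw [Finset.HasAntidiagonal.mem_antidiagonal] at hij
    simp only at hij ⊢
    rcases lt_or_ge i k with h | h
    · rw [PowerSeries.coeff_of_lt_order i (lt_of_lt_of_le (by exact_mod_cast h) hx), zero_mul]
    · have hj : j < m := by
        rcases Nat.lt_or_ge j m with h' | h'
        · exact h'
        · exact absurd (by ext <;> simp <;> omega) hne
      rw [PowerSeries.coeff_of_lt_order j (lt_of_lt_of_le (by exact_mod_cast hj) hz), mul_zero]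
  · intro h; simp at h

lemma le_order_dq {f : PowerSeries ℚ} {k : ℕ} (h : (k : ℕ∞) ≤ order f) :
    (k : ℕ∞) ≤ order (dq f) := by
  rw [← pow_dvd_iff_le_order] at h ⊢; exact X_pow_dvd_dq h

/-- The constants of the derivation are the rational numbers: a vanishing `2 × 2` Wronskian forces
a rational ratio. -/
lemma exists_eq_C_mul {x y : PowerSeries ℚ} (hx : x ≠ 0) (h : x * dq y = y * dq x) :
    ∃ c : ℚ, y = PowerSeries.C c * x := by
  obtain ⟨k, hk⟩ := ENat.ne_top_iff_exists.mp (fun h => hx (PowerSeries.order_eq_top.mp h))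
  have hxk : PowerSeries.coeff k x ≠ 0 := (PowerSeries.order_eq_nat.mp hk.symm).1
  set c := PowerSeries.coeff k y / PowerSeries.coeff k x
  refine ⟨c, ?_⟩
  by_contra hne
  set z := y - PowerSeries.C c * x with hz
  have hz0 : z ≠ 0 := sub_ne_zero.mpr hne
  have hzk : PowerSeries.coeff k z = 0 := by
    rw [hz, map_sub, PowerSeries.coeff_C_mul, div_mul_cancel₀ _ hxk, sub_self]
  have hy : y = z + PowerSeries.C c * x := by rw [hz]; ring
  rw [hy, dq_add, dq_C_mul] at h
  have h' : x * dq z = z * dq x := by linear_combination h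
  obtain ⟨m, hm⟩ := ENat.ne_top_iff_exists.mp (fun h => hz0 (PowerSeries.order_eq_top.mp h))
  have hzm : PowerSeries.coeff m z ≠ 0 := (PowerSeries.order_eq_nat.mp hm.symm).1
  have e := congrArg (PowerSeries.coeff (k + m)) h'
  rw [coeff_order_add_mul _ _ hk.le (le_order_dq hm.le), mul_comm z,
    coeff_order_add_mul _ _ (le_order_dq hk.le) hm.le, coeff_dq, coeff_dq] at e
  have : (m : ℚ) = k := by
    have h6 : (6 : ℚ) * (PowerSeries.coeff k x * PowerSeries.coeff m z) ≠ 0 := by positivity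
    apply mul_left_cancel₀ h6
    linear_combination e
  have : m = k := by exact_mod_cast this
  rw [this] at hzm
  exact hzm hzk

/-- The Wronskian matrix for the derivation `dq`. -/
def wr {n : ℕ} (v : Fin n → PowerSeries ℚ) : Matrix (Fin n) (Fin n) (PowerSeries ℚ) :=
  Matrix.of fun i j => dq^[i] (v j)

/-- A family with vanishing Wronskian is linearly dependent over the constants. -/
lemma exists_rel_of_det_wr_eq_zero {n : ℕ} (v : Fin n → PowerSeries ℚ) (h : (wr v).det = 0) :
    ∃ c : Fin n → ℚ, c ≠ 0 ∧ ∑ j, PowerSeries.C (c j) * v j = 0 := by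
  induction n with
  | zero => simp at h
  | succ n ih =>
    by_cases h' : (wr (fun j : Fin n => v j.castSucc)).det = 0
    · obtain ⟨c, hc, hs⟩ := ih _ h'
      refine ⟨Fin.snoc c 0, ?_, ?_⟩
      · intro h0
        apply hc
        ext j
        have := congrFun h0 j.castSucc
        simpa using this
      · rw [Fin.sum_univ_castSucc]
        simpa using hs
    obtain ⟨x, hx, hWx⟩ := Matrix.exists_mulVec_eq_zero_iff.mpr h
    have hrow : ∀ i : ℕ, i < n + 1 → ∑ j, dq^[i] (v j) * x j = 0 := fun i hi =>
      congrFun hWx ⟨i, hi⟩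
    -- a vector killed by the first `n` rows and supported on the first `n` columns vanishes
    have hker : ∀ z : Fin (n + 1) → PowerSeries ℚ, z (Fin.last n) = 0 →
        (∀ i : ℕ, i < n → ∑ j, dq^[i] (v j) * z j = 0) → z = 0 := by
      intro z hz hrz
      by_contra hne
      apply h'
      rw [← Matrix.exists_mulVec_eq_zero_iff]
      refine ⟨fun j => z j.castSucc, ?_, ?_⟩
      · intro h0
        apply hne
        ext1 j
        refine Fin.lastCases hz (fun j => ?_) j
        exact congrFun h0 j
      · ext1 i
        have := hrz i i.2
        rw [Fin.sum_univ_castSucc, hz, mul_zero, add_zero] at this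
        exact this
    have hlast : x (Fin.last n) ≠ 0 := by
      intro h0
      exact hx (hker x h0 fun i hi => hrow i (by omega))
    have hdx : ∀ i : ℕ, i < n → ∑ j, dq^[i] (v j) * dq (x j) = 0 := by
      intro i hi
      have h1 := congrArg dq (hrow i (by omega))
      rw [dq_sum, dq_zero] at h1
      simp only [dq_mul, Finset.sum_add_distrib] at h1
      have h2 := hrow (i + 1) (by omega)
      simp only [Function.iterate_succ_apply'] at h2
      rwa [h2, zero_add] at h1
    have hz : (fun j => x (Fin.last n) * dq (x j) - x j * dq (x (Fin.last n))) = 0 := by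
      apply hker
      · ring
      · intro i hi
        have e1 := hdx i hi
        have e2 := hrow i (by omega)
        have : ∑ j, dq^[i] (v j) * (x (Fin.last n) * dq (x j) - x j * dq (x (Fin.last n)))
            = x (Fin.last n) * ∑ j, dq^[i] (v j) * dq (x j)
              - dq (x (Fin.last n)) * ∑ j, dq^[i] (v j) * x j := by
          rw [Finset.mul_sum, Finset.mul_sum, ← Finset.sum_sub_distrib]
          exact Finset.sum_congr rfl fun j _ => by ring
        rw [this, e1, e2]; ring
    have hc : ∀ j, ∃ c : ℚ, x j = PowerSeries.C c * x (Fin.last n) := fun j =>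
      exists_eq_C_mul hlast (sub_eq_zero.mp (congrFun hz j))
    choose c hc using hc
    refine ⟨c, ?_, ?_⟩
    · intro h0
      have := hc (Fin.last n)
      rw [h0] at this
      simp at this
      exact hlast this
    · apply mul_left_cancel₀ hlast
      rw [mul_zero, ← hrow 0 (by omega), Finset.mul_sum]
      refine Finset.sum_congr rfl fun j _ => ?_
      conv_rhs => rw [hc j]
      simp only [Function.iterate_zero, id]
      ring

lemma X_pow_dvd_iterate_dq {f : PowerSeries ℚ} {k : ℕ} (h : PowerSeries.X ^ k ∣ f) (i : ℕ) :
    PowerSeries.X ^ k ∣ dq^[i] f := by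
  induction i with
  | zero => exact h
  | succ i ih => rw [Function.iterate_succ_apply']; exact X_pow_dvd_dq ih

lemma iterate_dq_sum {ι : Type*} (s : Finset ι) (f : ι → PowerSeries ℚ) (i : ℕ) :
    dq^[i] (∑ j ∈ s, f j) = ∑ j ∈ s, dq^[i] (f j) := by
  induction i with
  | zero => rfl
  | succ i ih => simp only [Function.iterate_succ_apply', ih, dq_sum]

/-- The Wronskian vanishes at least to the order of the sum of the family. -/
lemma X_pow_dvd_det_wr {n : ℕ} (hn : 0 < n) (v : Fin n → PowerSeries ℚ) {k : ℕ}
    (h : PowerSeries.X ^ k ∣ ∑ j, v j) : PowerSeries.X ^ k ∣ (wr v).det := by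
  have hcol : ∀ i : Fin n, PowerSeries.X ^ k ∣ ∑ j, wr v i j := by
    intro i
    have := X_pow_dvd_iterate_dq h i
    rwa [iterate_dq_sum] at this
  choose u hu using hcol
  have e := Matrix.det_updateCol_sum (wr v) ⟨0, hn⟩ (fun _ => 1)
  simp only [one_smul] at e
  have e2 : (fun k_1 => ∑ k, wr v k_1 k) = (PowerSeries.X ^ k : PowerSeries ℚ) • u := by
    ext1 i; rw [Pi.smul_apply, smul_eq_mul, ← hu i]
  rw [e2, Matrix.det_updateCol_smul] at e
  exact ⟨_, e.symm⟩

end FibTheta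

/-! ### Isobaric series and gradings -/

namespace FibTheta

open Polynomial
open PowerSeries (order)

/-- Series of weight `n`: isobaric polynomials of degree `n` in `P`, `a`, `b`, written as `b ^ n`
times a polynomial of degree at most `n` in each of `ℓ = a / b`, `y = (P + a) / b`. -/
def Hom (n : ℕ) : Submodule ℚ (PowerSeries ℚ) where
  carrier := {f | ∃ h : ℚ[X][X], h.natDegree ≤ n ∧ degL h ≤ n ∧ f = bq ^ n * ev h}
  zero_mem' := ⟨0, by simp, by simp [degL], by simp⟩
  add_mem' := by
    rintro _ _ ⟨h, h1, h2, rfl⟩ ⟨g, g1, g2, rfl⟩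
    refine ⟨h + g, natDegree_add_le_of_degree_le h1 g1, ?_, by rw [map_add]; ring⟩
    rw [degL, map_add]; exact natDegree_add_le_of_degree_le h2 g2
  smul_mem' := by
    rintro c _ ⟨h, h1, h2, rfl⟩
    refine ⟨C (C c) * h, (natDegree_C_mul_le _ _).trans h1, ?_, ?_⟩
    · refine degL_le fun j => ?_
      rw [coeff_C_mul]
      exact (natDegree_C_mul_le _ _).trans ((natDegree_coeff_le h j).trans h2)
    · rw [map_mul, ev_C, aeval_C, PowerSeries.algebraMap_eq, PowerSeries.smul_eq_C_mul]; ring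

lemma mem_Hom {n : ℕ} {f : PowerSeries ℚ} : f ∈ Hom n ↔
    ∃ h : ℚ[X][X], h.natDegree ≤ n ∧ degL h ≤ n ∧ f = bq ^ n * ev h := Iff.rfl

lemma degL_mul_le (f g : ℚ[X][X]) : degL (f * g) ≤ degL f + degL g := by
  rw [degL, map_mul]; exact natDegree_mul_le

lemma degL_add_le {f g : ℚ[X][X]} {n : ℕ} (hf : degL f ≤ n) (hg : degL g ≤ n) :
    degL (f + g) ≤ n := by
  rw [degL, map_add]; exact natDegree_add_le_of_degree_le hf hg

lemma Hom_mul {m n : ℕ} {f g : PowerSeries ℚ} (hf : f ∈ Hom m) (hg : g ∈ Hom n) :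
    f * g ∈ Hom (m + n) := by
  obtain ⟨h, h1, h2, rfl⟩ := hf
  obtain ⟨k, k1, k2, rfl⟩ := hg
  refine ⟨h * k, natDegree_mul_le.trans (by omega), (degL_mul_le _ _).trans (by omega), ?_⟩
  rw [map_mul]; ring

lemma one_mem_Hom : (1 : PowerSeries ℚ) ∈ Hom 0 :=
  ⟨1, by simp, by rw [← C_1, degL_C]; simp, by simp⟩

/-- The polynomial `y - 3ℓ - 1`, with `dq b = 2 b² (y - 3ℓ - 1)`. -/
def cof : ℚ[X][X] := X - C (3 * X + 1)

lemma natDegree_cof_le : cof.natDegree ≤ 1 := by rw [cof]; compute_degree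

lemma degL_cof_le : degL cof ≤ 1 := by
  apply degL_le
  intro j
  rw [cof, coeff_sub, coeff_X, coeff_C]
  split_ifs <;> compute_degree <;> exact zero_le_one

lemma dq_bq_pow (n : ℕ) : dq (bq ^ n) = bq ^ (n + 1) * (2 * n * ev cof) := by
  have h1 : dq bq = bq ^ 2 * (2 * ev cof) := by
    have e : Pq = bq * ys - aq := by rw [bq_mul_ys]; ring
    have e2 := qD_bq
    rw [e, ← bq_mul_ls] at e2
    have e3 : ev cof = ys - (3 * ls + 1) := by
      simp only [cof, map_sub, ev_X, ev_C, map_add, map_mul, map_ofNat, map_one, aeval_X]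
    rw [e3, dq]
    linear_combination 2 * e2
  cases n with
  | zero => simp [dq, qD_one]
  | succ n =>
    rw [dq, qD_pow]
    have h2 : 6 * qD bq = bq ^ 2 * (2 * ev cof) := h1
    push_cast
    linear_combination (n + 1) * bq ^ n * h2

lemma dq_bq_pow_mul (n : ℕ) (h : ℚ[X][X]) :
    dq (bq ^ n * ev h) = bq ^ (n + 1) * ev (2 * (n : ℚ[X][X]) * cof * h + del h) := by
  have : dq (ev h) = bq * ev (del h) := qD_ev h
  rw [dq_mul, dq_bq_pow, this]
  simp only [map_add, map_mul, map_ofNat, map_natCast]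
  ring

lemma dq_mem_Hom {n : ℕ} {f : PowerSeries ℚ} (hf : f ∈ Hom n) : dq f ∈ Hom (n + 1) := by
  obtain ⟨h, h1, h2, rfl⟩ := hf
  refine ⟨_, ?_, ?_, dq_bq_pow_mul n h⟩
  · refine natDegree_add_le_of_degree_le ?_ ((natDegree_del_le h).trans (by omega))
    have e : 2 * (n : ℚ[X][X]) * cof * h = C (C (2 * (n : ℚ))) * (cof * h) := by
      simp only [map_mul, map_ofNat, map_natCast]; ring
    rw [e]
    refine (natDegree_C_mul_le _ _).trans (natDegree_mul_le.trans ?_)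
    have := natDegree_cof_le
    omega
  · refine degL_add_le ?_ ((degL_del_le h).trans (by omega))
    have e : 2 * (n : ℚ[X][X]) * cof * h = C (C (2 * (n : ℚ))) * (cof * h) := by
      simp only [map_mul, map_ofNat, map_natCast]; ring
    rw [e]
    refine (degL_mul_le _ _).trans ?_
    rw [degL_C, natDegree_C]
    have := degL_mul_le cof h
    have := degL_cof_le
    omega

lemma bq_mem_Hom : bq ∈ Hom 1 :=
  ⟨1, by simp, by rw [← C_1, degL_C]; simp, by simp⟩

lemma aq_mem_Hom : aq ∈ Hom 1 := by
  refine ⟨C X, by simp, by rw [degL_C]; simp, ?_⟩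
  rw [ev_C, aeval_X, pow_one, bq_mul_ls]

lemma Pq_mem_Hom : Pq ∈ Hom 1 := by
  refine ⟨X - C X, natDegree_X_sub_C_le _, ?_, ?_⟩
  · apply degL_le
    intro j
    rw [coeff_sub, coeff_X, coeff_C]
    split_ifs <;> compute_degree <;> exact zero_le_one
  · rw [map_sub, ev_X, ev_C, aeval_X, pow_one, mul_sub, bq_mul_ls, bq_mul_ys]; ring

/-- Isobaric series of distinct weights are not proportional. -/
lemma eq_zero_of_wr_two {m n : ℕ} (hmn : m ≠ n) {f g : PowerSeries ℚ} (hf : f ∈ Hom m)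
    (hg : g ∈ Hom n) (h : f * dq g = g * dq f) : f = 0 ∨ g = 0 := by
  obtain ⟨u, -, -, rfl⟩ := hf
  obtain ⟨v, -, -, rfl⟩ := hg
  by_cases hu : u = 0
  · left; simp [hu]
  by_cases hv : v = 0
  · right; simp [hv]
  exfalso
  rw [dq_bq_pow_mul, dq_bq_pow_mul] at h
  have h1 : u * (2 * (n : ℚ[X][X]) * cof * v + del v)
      = v * (2 * (m : ℚ[X][X]) * cof * u + del u) := by
    apply ev_injective
    apply mul_left_cancel₀ (pow_ne_zero (m + n + 1) bq_ne_zero)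
    rw [map_mul, map_mul]
    linear_combination h
  obtain ⟨u', v', d, hrel, rfl, rfl⟩ := UniqueFactorizationMonoid.exists_reduced_factors u hu v
  have hd : d ≠ 0 := left_ne_zero_of_mul hu
  have hu' : u' ≠ 0 := right_ne_zero_of_mul hu
  have hv' : v' ≠ 0 := right_ne_zero_of_mul hv
  rw [del_mul, del_mul] at h1
  have h2 : u' * del v' - v' * del u' = 2 * ((m : ℚ[X][X]) - (n : ℚ[X][X])) * cof * (u' * v') := by
    apply mul_left_cancel₀ (pow_ne_zero 2 hd)
    linear_combination h1
  have du : u' ∣ del u' := by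
    have : u' ∣ v' * del u' := ⟨del v' - 2 * ((m : ℚ[X][X]) - (n : ℚ[X][X])) * cof * v', by
      linear_combination -h2⟩
    exact hrel.dvd_of_dvd_mul_left this
  have dv : v' ∣ del v' := by
    have : v' ∣ u' * del v' := ⟨del u' + 2 * ((m : ℚ[X][X]) - (n : ℚ[X][X])) * cof * u', by
      linear_combination h2⟩
    exact hrel.symm.dvd_of_dvd_mul_left this
  obtain ⟨p, rfl⟩ := natDegree_eq_zero.mp (natDegree_eq_zero_of_dvd_del hu' du)
  obtain ⟨r, rfl⟩ := natDegree_eq_zero.mp (natDegree_eq_zero_of_dvd_del hv' dv)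
  rw [del_C, del_C, ← C_mul, ← C_mul, ← C_mul, ← C_sub] at h2
  have e : 2 * ((m : ℚ[X][X]) - (n : ℚ[X][X])) * cof * C (p * r)
      = C (2 * ((m : ℚ[X]) - (n : ℚ[X])) * (p * r)) * X
        - C (2 * ((m : ℚ[X]) - (n : ℚ[X])) * (3 * X + 1) * (p * r)) := by
    simp only [cof, map_mul, map_sub, map_ofNat, map_natCast]; ring
  rw [e] at h2
  have h3 := congrArg (fun w => w.coeff 1) h2
  simp only [coeff_sub, coeff_C_mul, coeff_X_one, coeff_C, one_ne_zero, if_false, mul_one,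
    sub_zero] at h3
  have hp : p ≠ 0 := by rintro rfl; simp at hu'
  have hr : r ≠ 0 := by rintro rfl; simp at hv'
  rcases mul_eq_zero.mp h3.symm with h4 | h4
  · rcases mul_eq_zero.mp h4 with h5 | h5
    · norm_num at h5
    · rw [sub_eq_zero] at h5
      exact hmn (by exact_mod_cast h5)
  · exact mul_ne_zero hp hr h4

/-- The sum of the weight spaces is direct. -/
lemma Hom_indep {ι : Type*} (s : Finset ι) : ∀ (wt : ι → ℕ), Set.InjOn wt s →
    ∀ c : ι → PowerSeries ℚ, (∀ i ∈ s, c i ∈ Hom (wt i)) → ∑ i ∈ s, c i = 0 →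
    ∀ i ∈ s, c i = 0 := by
  classical
  induction s using Finset.induction_on with
  | empty => intro _ _ _ _ _ i hi; simp at hi
  | insert i₀ s hi₀ ih =>
    intro wt hinj c hc hsum
    have hinj' : Set.InjOn wt s := hinj.mono (by simp)
    have hcs : ∀ i ∈ s, c i ∈ Hom (wt i) := fun i hi => hc i (by simp [hi])
    have hc0 : c i₀ ∈ Hom (wt i₀) := hc i₀ (by simp)
    rw [Finset.sum_insert hi₀] at hsum
    by_cases h0 : c i₀ = 0
    · rw [h0, zero_add] at hsum
      intro i hi
      rcases Finset.mem_insert.mp hi with rfl | hi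
      · exact h0
      · exact ih wt hinj' c hcs hsum i hi
    have key := ih (fun i => wt i₀ + (wt i + 1))
      (fun i hi j hj hij => hinj' hi hj (by simp only at hij; omega))
      (fun i => c i₀ * dq (c i) - c i * dq (c i₀)) (fun i hi => by
        refine Submodule.sub_mem _ (Hom_mul hc0 (dq_mem_Hom (hcs i hi))) ?_
        have := Hom_mul (hcs i hi) (dq_mem_Hom hc0)
        rwa [show wt i + (wt i₀ + 1) = wt i₀ + (wt i + 1) by omega] at this) (by
        rw [Finset.sum_sub_distrib, ← Finset.mul_sum, ← Finset.sum_mul, ← dq_sum]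
        have e : ∑ i ∈ s, c i = (-1 : PowerSeries ℚ) * c i₀ := by linear_combination hsum
        have e' : dq (∑ i ∈ s, c i) = -dq (c i₀) := by
          have := congrArg dq hsum
          rw [dq_add, dq_zero] at this
          linear_combination this
        rw [e', e]; ring)
    have hs0 : ∀ i ∈ s, c i = 0 := by
      intro i hi
      have hne : wt i₀ ≠ wt i := fun h => hi₀ (by
        rw [hinj (by simp) (by simp [hi]) h]; exact hi)
      exact (eq_zero_of_wr_two hne hc0 (hcs i hi) (sub_eq_zero.mp (key i hi))).resolve_left h0
    rw [Finset.sum_eq_zero hs0, add_zero] at hsum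
    exact absurd hsum h0

/-- Polynomials in a bookkeeping variable whose `w`-th coefficient is isobaric of weight `w`;
evaluation at `1` identifies them with polynomials in `P`, `a`, `b`. -/
def GP (A : (PowerSeries ℚ)[X]) : Prop := ∀ w, A.coeff w ∈ Hom w

lemma GP.add {A B : (PowerSeries ℚ)[X]} (hA : GP A) (hB : GP B) : GP (A + B) := fun w => by
  rw [coeff_add]; exact Submodule.add_mem _ (hA w) (hB w)

lemma GP.zero : GP 0 := fun w => by rw [coeff_zero]; exact Submodule.zero_mem _

lemma GP.neg {A : (PowerSeries ℚ)[X]} (hA : GP A) : GP (-A) := fun w => by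
  rw [coeff_neg]; exact Submodule.neg_mem _ (hA w)

lemma GP.mul {A B : (PowerSeries ℚ)[X]} (hA : GP A) (hB : GP B) : GP (A * B) := fun w => by
  rw [coeff_mul]
  refine Submodule.sum_mem _ fun z hz => ?_
  rw [Finset.HasAntidiagonal.mem_antidiagonal] at hz
  rw [← hz]
  exact Hom_mul (hA _) (hB _)

lemma GP.sum {ι : Type*} {s : Finset ι} {A : ι → (PowerSeries ℚ)[X]} (h : ∀ i ∈ s, GP (A i)) :
    GP (∑ i ∈ s, A i) := fun w => by
  rw [finsetSum_coeff]; exact Submodule.sum_mem _ fun i hi => h i hi w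

lemma GP.one : GP 1 := fun w => by
  rw [coeff_one]; split_ifs with h
  · subst h; exact one_mem_Hom
  · exact Submodule.zero_mem _

lemma GP.prod {ι : Type*} {s : Finset ι} {A : ι → (PowerSeries ℚ)[X]} (h : ∀ i ∈ s, GP (A i)) :
    GP (∏ i ∈ s, A i) := by
  classical
  induction s using Finset.induction_on with
  | empty => simpa using GP.one
  | insert i s hi ih =>
    rw [Finset.prod_insert hi]
    exact (h i (by simp)).mul (ih fun j hj => h j (by simp [hj]))

lemma GP.C_mul {A : (PowerSeries ℚ)[X]} (hA : GP A) (c : ℚ) :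
    GP (C (PowerSeries.C c) * A) := fun w => by
  rw [coeff_C_mul, ← PowerSeries.smul_eq_C_mul]; exact Submodule.smul_mem _ _ (hA w)

lemma GP.eq_zero {A : (PowerSeries ℚ)[X]} (hA : GP A) (h : A.eval 1 = 0) : A = 0 := by
  rw [eval_eq_sum_range] at h
  simp only [one_pow, mul_one] at h
  have := Hom_indep (Finset.range (A.natDegree + 1)) id (Set.injOn_id _) A.coeff
    (fun i _ => hA i) h
  ext1 j
  rcases Nat.lt_or_ge j (A.natDegree + 1) with hj | hj
  · exact this j (Finset.mem_range.mpr hj)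
  · exact coeff_eq_zero_of_natDegree_lt hj

/-- The derivation `dq` on coefficients, raising the weight by one. -/
def gd (A : (PowerSeries ℚ)[X]) : (PowerSeries ℚ)[X] :=
  ∑ j ∈ Finset.range (A.natDegree + 1), monomial (j + 1) (dq (A.coeff j))

lemma coeff_gd_succ (A : (PowerSeries ℚ)[X]) (j : ℕ) : (gd A).coeff (j + 1) = dq (A.coeff j) := by
  rw [gd, finsetSum_coeff]
  simp only [coeff_monomial, add_left_inj]
  rw [Finset.sum_ite_eq' ]
  split_ifs with hj
  · rfl
  · rw [coeff_eq_zero_of_natDegree_lt (by simpa using hj), dq_zero]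

lemma coeff_gd_zero (A : (PowerSeries ℚ)[X]) : (gd A).coeff 0 = 0 := by
  rw [gd, finsetSum_coeff]
  exact Finset.sum_eq_zero fun j _ => by rw [coeff_monomial, if_neg (by omega)]

lemma GP.gd {A : (PowerSeries ℚ)[X]} (hA : GP A) : GP (gd A) := by
  intro w
  cases w with
  | zero => rw [coeff_gd_zero]; exact Submodule.zero_mem _
  | succ w => rw [coeff_gd_succ]; exact dq_mem_Hom (hA w)

lemma eval_gd (A : (PowerSeries ℚ)[X]) : (gd A).eval 1 = dq (A.eval 1) := by
  rw [gd, eval_finsetSum, eval_eq_sum_range, dq_sum]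
  simp

lemma natDegree_gd_le (A : (PowerSeries ℚ)[X]) : (gd A).natDegree ≤ A.natDegree + 1 := by
  rw [natDegree_le_iff_coeff_eq_zero]
  intro j hj
  obtain ⟨j, rfl⟩ : ∃ k, j = k + 1 := ⟨j - 1, by omega⟩
  rw [coeff_gd_succ, coeff_eq_zero_of_natDegree_lt (by omega), dq_zero]

lemma coeff_mul_gd_trailing (A B : (PowerSeries ℚ)[X]) :
    (A * gd B).coeff (A.natTrailingDegree + B.natTrailingDegree) = 0 := by
  rw [coeff_mul]
  refine Finset.sum_eq_zero fun z hz => ?_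
  rw [Finset.HasAntidiagonal.mem_antidiagonal] at hz
  rcases Nat.lt_or_ge z.1 A.natTrailingDegree with h | h
  · rw [coeff_eq_zero_of_lt_natTrailingDegree h, zero_mul]
  · obtain ⟨z1, z2⟩ := z
    simp only at hz h ⊢
    cases z2 with
    | zero => rw [coeff_gd_zero, mul_zero]
    | succ j =>
      rw [coeff_gd_succ, coeff_eq_zero_of_lt_natTrailingDegree (p := B) (by omega), dq_zero,
        mul_zero]

/-- `q ^ k` with `k ≠ 0` is not a ratio of polynomials in `P`, `a`, `b`. -/
lemma GP.eq_zero_of_log_deriv {A B : (PowerSeries ℚ)[X]} (hA : GP A) (hB : GP B) {k : ℚ}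
    (hk : k ≠ 0) (h : PowerSeries.C k * (A.eval 1 * B.eval 1) + A.eval 1 * dq (B.eval 1)
      - B.eval 1 * dq (A.eval 1) = 0) : A = 0 ∨ B = 0 := by
  have hG : C (PowerSeries.C k) * (A * B) + A * FibTheta.gd B + -(B * FibTheta.gd A) = 0 := by
    apply GP.eq_zero
    · exact (((hA.mul hB).C_mul k).add (hA.mul hB.gd)).add (hB.mul hA.gd).neg
    · simp only [eval_add, eval_mul, eval_neg, eval_C, eval_gd]
      linear_combination h
  have e := congrArg (fun w => w.coeff (A.natTrailingDegree + B.natTrailingDegree)) hG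
  simp only [coeff_add, coeff_neg, coeff_C_mul, coeff_zero] at e
  rw [coeff_mul_gd_trailing, add_comm A.natTrailingDegree, coeff_mul_gd_trailing, neg_zero,
    add_zero, add_zero, add_comm, coeff_mul_natTrailingDegree_add_natTrailingDegree] at e
  rcases mul_eq_zero.mp e with h1 | h1
  · have : k = 0 := by simpa using congrArg PowerSeries.constantCoeff h1
    exact absurd this hk
  · rcases mul_eq_zero.mp h1 with h2 | h2
    · left; exact trailingCoeff_eq_zero.mp h2
    · right; exact trailingCoeff_eq_zero.mp h2

lemma dq_X_pow_mul (l : ℕ) (f : PowerSeries ℚ) :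
    dq (PowerSeries.X ^ l * f) = PowerSeries.X ^ l * (PowerSeries.C (6 * l : ℚ) * f + dq f) := by
  have : dq (PowerSeries.X ^ l) = PowerSeries.C (6 * l : ℚ) * PowerSeries.X ^ l := by
    rw [dq, qD_X_pow]; simp only [map_mul, map_ofNat, map_natCast]; ring
  rw [dq_mul, this]; ring

/-- `q` is transcendental over the field generated by `P`, `a`, `b`. -/
lemma GP_indep {ι : Type*} (s : Finset ι) : ∀ (ex : ι → ℕ), Set.InjOn ex s →
    ∀ A : ι → (PowerSeries ℚ)[X], (∀ i ∈ s, GP (A i)) →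
    ∑ i ∈ s, PowerSeries.X ^ ex i * (A i).eval 1 = 0 → ∀ i ∈ s, A i = 0 := by
  classical
  induction s using Finset.induction_on with
  | empty => intro _ _ _ _ _ i hi; simp at hi
  | insert i₀ s hi₀ ih =>
    intro ex hinj A hA hsum
    have hinj' : Set.InjOn ex s := hinj.mono (by simp)
    have hAs : ∀ i ∈ s, GP (A i) := fun i hi => hA i (by simp [hi])
    have hA0 : GP (A i₀) := hA i₀ (by simp)
    rw [Finset.sum_insert hi₀] at hsum
    by_cases h0 : A i₀ = 0
    · rw [h0, eval_zero, mul_zero, zero_add] at hsum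
      intro i hi
      rcases Finset.mem_insert.mp hi with rfl | hi
      · exact h0
      · exact ih ex hinj' A hAs hsum i hi
    have key := ih ex hinj'
      (fun i => C (PowerSeries.C (6 * ex i - 6 * ex i₀ : ℚ)) * (A i₀ * A i) + A i₀ * gd (A i)
        + -(A i * gd (A i₀)))
      (fun i hi => (((hA0.mul (hAs i hi)).C_mul _).add (hA0.mul (hAs i hi).gd)).add
        ((hAs i hi).mul hA0.gd).neg) (by
        have hX : (PowerSeries.X ^ ex i₀ : PowerSeries ℚ) ≠ 0 :=
          pow_ne_zero _ PowerSeries.X_ne_zero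
        apply mul_left_cancel₀ hX
        have e := congrArg dq hsum
        rw [dq_add, dq_zero, dq_sum] at e
        simp only [dq_X_pow_mul] at e
        set a0 := (A i₀).eval 1
        have e3 : ∑ i ∈ s, PowerSeries.X ^ ex i * eval 1
            (C (PowerSeries.C (6 * ex i - 6 * ex i₀ : ℚ)) * (A i₀ * A i) + A i₀ * gd (A i)
              + -(A i * gd (A i₀)))
            = a0 * ∑ i ∈ s, PowerSeries.X ^ ex i *
                (PowerSeries.C (6 * ex i : ℚ) * eval 1 (A i) + dq (eval 1 (A i)))
              - (PowerSeries.C (6 * ex i₀ : ℚ) * a0 + dq a0)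
                * ∑ i ∈ s, PowerSeries.X ^ ex i * eval 1 (A i) := by
          rw [Finset.mul_sum, Finset.mul_sum, ← Finset.sum_sub_distrib]
          refine Finset.sum_congr rfl fun i _ => ?_
          simp only [eval_add, eval_sub, eval_mul, eval_neg, eval_C, eval_gd, map_sub, a0]
          ring
        rw [e3, mul_zero]
        linear_combination PowerSeries.X ^ ex i₀ * a0 * e
          - PowerSeries.X ^ ex i₀ * (PowerSeries.C (6 * ex i₀ : ℚ) * a0 + dq a0) * hsum)
    have hs0 : ∀ i ∈ s, A i = 0 := by
      intro i hi
      have hne : ex i₀ ≠ ex i := fun h => hi₀ (by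
        rw [hinj (by simp) (by simp [hi]) h]; exact hi)
      have hk : (6 * ex i - 6 * ex i₀ : ℚ) ≠ 0 := by
        intro h
        apply hne
        have : (ex i₀ : ℚ) = ex i := by linarith
        exact_mod_cast this
      refine (GP.eq_zero_of_log_deriv hA0 (hAs i hi) hk ?_).resolve_left h0
      have := congrArg (eval 1) (key i hi)
      simp only [eval_add, eval_mul, eval_neg, eval_C, eval_gd, eval_zero] at this
      linear_combination this
    rw [Finset.sum_eq_zero fun i hi => by rw [hs0 i hi, eval_zero, mul_zero], add_zero] at hsum
    exact absurd (hA0.eq_zero ((mul_eq_zero.mp hsum).resolve_left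
      (pow_ne_zero _ PowerSeries.X_ne_zero))) h0

end FibTheta

/-! ### The zero estimate -/

namespace FibTheta

open Polynomial
open PowerSeries (order)

lemma Hom_prod {ι : Type*} (s : Finset ι) (f : ι → PowerSeries ℚ) (wt : ι → ℕ)
    (h : ∀ i ∈ s, f i ∈ Hom (wt i)) : ∏ i ∈ s, f i ∈ Hom (∑ i ∈ s, wt i) := by
  classical
  induction s using Finset.induction_on with
  | empty => simpa using one_mem_Hom
  | insert i s hi ih =>
    rw [Finset.prod_insert hi, Finset.sum_insert hi]
    exact Hom_mul (h i (by simp)) (ih fun j hj => h j (by simp [hj]))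

lemma iterate_dq_mem_Hom {n : ℕ} {f : PowerSeries ℚ} (hf : f ∈ Hom n) (i : ℕ) :
    dq^[i] f ∈ Hom (i + n) := by
  induction i with
  | zero => simpa using hf
  | succ i ih =>
    rw [Function.iterate_succ_apply', show i + 1 + n = i + n + 1 by omega]; exact dq_mem_Hom ih

lemma det_wr_mem_Hom {n : ℕ} (v : Fin n → PowerSeries ℚ) (wt : Fin n → ℕ)
    (h : ∀ j, v j ∈ Hom (wt j)) : (wr v).det ∈ Hom ((∑ i : Fin n, (i : ℕ)) + ∑ j, wt j) := by
  rw [Matrix.det_apply]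
  refine Submodule.sum_mem _ fun σ _ => ?_
  have h1 : ∏ i, wr v (σ i) i ∈ Hom ((∑ i : Fin n, (i : ℕ)) + ∑ j, wt j) := by
    have := Hom_prod Finset.univ (fun i => wr v (σ i) i) (fun i => (σ i : ℕ) + wt i)
      (fun i _ => iterate_dq_mem_Hom (h i) _)
    rwa [Finset.sum_add_distrib, Equiv.sum_comp σ (fun i : Fin n => (i : ℕ))] at this
  rcases Int.units_eq_one_or (Equiv.Perm.sign σ) with h2 | h2
  · rw [h2, one_smul]; exact h1
  · rw [h2, Units.neg_smul, one_smul]; exact Submodule.neg_mem _ h1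

lemma sum_fin_le {n N : ℕ} (f : Fin n → ℕ) (h : ∀ i, f i ≤ N) : ∑ i, f i ≤ n * N := by
  refine (Finset.sum_le_card_nsmul _ _ N fun i _ => h i).trans ?_
  simp

lemma order_le_of_mem_Hom {n : ℕ} {f : PowerSeries ℚ} (hf : f ∈ Hom n) (h0 : f ≠ 0) :
    order f ≤ (12 * n ^ 2 : ℕ) := by
  obtain ⟨h, h1, h2, rfl⟩ := hf
  have hh : h ≠ 0 := by rintro rfl; simp at h0
  rw [PowerSeries.order_mul, PowerSeries.order_zero_of_unit (isUnit_bq.pow n), zero_add]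
  refine (order_ev_le hh).trans ?_
  norm_cast
  calc 3 * (h.natDegree + degL h) ^ 2 ≤ 3 * (n + n) ^ 2 := by gcongr
    _ = 12 * n ^ 2 := by ring

/-- Zero estimate for polynomials in `P`, `a`, `b`, through the Wronskian of the isobaric
components. -/
lemma GP.order_le {G : (PowerSeries ℚ)[X]} (hG : GP G) (h0 : G ≠ 0) {N : ℕ}
    (hN : G.natDegree ≤ N) : order (G.eval 1) ≤ (48 * (N + 1) ^ 4 : ℕ) := by
  set n := G.support.card with hn
  let e : Fin n ≃ G.support := G.support.equivFin.symm
  have hle : ∀ j : Fin n, ((e j : ℕ)) ≤ N := fun j =>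
    (le_natDegree_of_mem_supp _ (e j).2).trans hN
  have hcard : n ≤ N + 1 := by
    rw [hn]
    exact (card_supp_le_succ_natDegree G).trans (by omega)
  have hpos : 0 < n := Finset.card_pos.mpr (nonempty_support_iff.mpr h0)
  set v : Fin n → PowerSeries ℚ := fun j => G.coeff (e j)
  have hsum : ∑ j, v j = G.eval 1 := by
    rw [eval_eq_sum, Polynomial.sum]
    simp only [one_pow, mul_one]
    rw [← Finset.sum_coe_sort G.support (fun i => G.coeff i)]
    exact Equiv.sum_comp e (fun i : G.support => G.coeff i)
  have hmem : ∀ j, v j ∈ Hom (e j) := fun j => hG _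
  have hdet : (wr v).det ≠ 0 := by
    intro h
    obtain ⟨c, hc, hs⟩ := exists_rel_of_det_wr_eq_zero v h
    apply hc
    ext j
    have := Hom_indep Finset.univ (fun j : Fin n => (e j : ℕ))
      (fun i _ j _ hij => e.injective (Subtype.ext hij)) _
      (fun j _ => by
        rw [← PowerSeries.smul_eq_C_mul]; exact Submodule.smul_mem _ (c j) (hmem j)) hs j
      (Finset.mem_univ _)
    rcases mul_eq_zero.mp this with h1 | h1
    · simpa using congrArg PowerSeries.constantCoeff h1
    · exact absurd h1 (mem_support_iff.mp (e j).2)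
  apply order_le_of_dvd_imp
  intro k hk
  rw [← hsum] at hk
  have h1 := pow_dvd_iff_le_order.mp (X_pow_dvd_det_wr hpos v hk)
  have h2 := h1.trans (order_le_of_mem_Hom (det_wr_mem_Hom v _ hmem) hdet)
  have h3 : k ≤ 12 * ((∑ i : Fin n, (i : ℕ)) + ∑ j, (e j : ℕ)) ^ 2 := by exact_mod_cast h2
  refine h3.trans ?_
  have h4 : ∑ i : Fin n, (i : ℕ) ≤ (N + 1) * (N + 1) :=
    (sum_fin_le _ fun i => (by omega : (i : ℕ) ≤ N + 1)).trans (Nat.mul_le_mul_right _ hcard)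
  have h5 : ∑ j, (e j : ℕ) ≤ (N + 1) * (N + 1) :=
    (sum_fin_le _ fun j => (hle j).trans (Nat.le_succ N)).trans (Nat.mul_le_mul_right _ hcard)
  calc _ ≤ 12 * ((N + 1) * (N + 1) + (N + 1) * (N + 1)) ^ 2 := by gcongr
    _ = _ := by ring

/-- The derivation `dq` conjugated by `q ^ l`. -/
def gt (l : ℕ) (A : (PowerSeries ℚ)[X]) : (PowerSeries ℚ)[X] :=
  C (PowerSeries.C (6 * l : ℚ)) * A + gd A

lemma iterate_dq_X_pow_mul (l : ℕ) (A : (PowerSeries ℚ)[X]) (i : ℕ) :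
    dq^[i] (PowerSeries.X ^ l * A.eval 1) = PowerSeries.X ^ l * ((gt l)^[i] A).eval 1 := by
  induction i with
  | zero => rfl
  | succ i ih =>
    rw [Function.iterate_succ_apply', ih, dq_X_pow_mul, Function.iterate_succ_apply', gt,
      eval_add, eval_mul, eval_C, eval_gd]

lemma GP.iterate_gt {A : (PowerSeries ℚ)[X]} (hA : GP A) (l i : ℕ) : GP ((FibTheta.gt l)^[i] A) := by
  induction i with
  | zero => exact hA
  | succ i ih => rw [Function.iterate_succ_apply']; exact (ih.C_mul _).add ih.gd

lemma natDegree_iterate_gt_le (A : (PowerSeries ℚ)[X]) (l i : ℕ) :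
    ((gt l)^[i] A).natDegree ≤ A.natDegree + i := by
  induction i with
  | zero => exact le_rfl
  | succ i ih =>
    rw [Function.iterate_succ_apply', gt]
    exact natDegree_add_le_of_degree_le ((natDegree_C_mul_le _ _).trans (by omega))
      ((natDegree_gd_le _).trans (by omega))

lemma natDegree_det_le {n D : ℕ} (M : Matrix (Fin n) (Fin n) (PowerSeries ℚ)[X])
    (h : ∀ i j, (M i j).natDegree ≤ D) : M.det.natDegree ≤ n * D := by
  rw [Matrix.det_apply]
  refine natDegree_sum_le_of_forall_le _ _ fun σ _ => ?_
  refine (natDegree_smul_le _ _).trans ?_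
  refine (natDegree_prod_le _ _).trans ?_
  refine (Finset.sum_le_card_nsmul _ _ D fun i _ => h _ _).trans ?_
  simp

lemma GP.det {n : ℕ} (M : Matrix (Fin n) (Fin n) (PowerSeries ℚ)[X])
    (h : ∀ i j, GP (M i j)) : GP M.det := by
  rw [Matrix.det_apply]
  refine GP.sum fun σ _ => ?_
  have h1 : GP (∏ i, M (σ i) i) := GP.prod fun i _ => h _ _
  rcases Int.units_eq_one_or (Equiv.Perm.sign σ) with h2 | h2
  · rw [h2, one_smul]; exact h1
  · rw [h2, Units.neg_smul, one_smul]; exact h1.neg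

/-- Zero estimate: a nonzero polynomial in `q`, `P`, `a`, `b` has order at zero bounded by a
polynomial in its degrees. -/
theorem zero_estimate (L N : ℕ) (A : ℕ → (PowerSeries ℚ)[X]) (hA : ∀ l, GP (A l))
    (hN : ∀ l, (A l).natDegree ≤ N) (h0 : ∃ l < L, A l ≠ 0) :
    order (∑ l ∈ Finset.range L, PowerSeries.X ^ l * (A l).eval 1) ≤
      (L ^ 2 + 48 * (L * (N + L) + 1) ^ 4 : ℕ) := by
  classical
  set S := (Finset.range L).filter fun l => A l ≠ 0 with hS
  set n := S.card with hn
  let e : Fin n ≃ S := S.equivFin.symm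
  have hle : ∀ j : Fin n, ((e j : ℕ)) ≤ L := fun j => by
    have := (Finset.mem_filter.mp (e j).2).1
    rw [Finset.mem_range] at this; omega
  have hne : ∀ j : Fin n, A (e j) ≠ 0 := fun j => (Finset.mem_filter.mp (e j).2).2
  have hcard : n ≤ L := by
    rw [hn]; exact (Finset.card_filter_le _ _).trans (by simp)
  have hpos : 0 < n := by
    obtain ⟨l, hl, hl0⟩ := h0
    exact Finset.card_pos.mpr ⟨l, Finset.mem_filter.mpr ⟨Finset.mem_range.mpr hl, hl0⟩⟩
  set v : Fin n → PowerSeries ℚ := fun j => PowerSeries.X ^ (e j : ℕ) * (A (e j)).eval 1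
  have hsum : ∑ j, v j = ∑ l ∈ Finset.range L, PowerSeries.X ^ l * (A l).eval 1 := by
    have h1 : ∑ l ∈ S, PowerSeries.X ^ l * (A l).eval 1
        = ∑ l ∈ Finset.range L, PowerSeries.X ^ l * (A l).eval 1 := by
      rw [hS]
      apply Finset.sum_filter_of_ne
      intro l _ h h'
      rw [h', eval_zero, mul_zero] at h
      exact h rfl
    rw [← h1, ← Finset.sum_coe_sort S (fun l => PowerSeries.X ^ l * (A l).eval 1)]
    exact Equiv.sum_comp e (fun l : S => PowerSeries.X ^ (l : ℕ) * (A l).eval 1)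
  have hdet : (wr v).det ≠ 0 := by
    intro h
    obtain ⟨c, hc, hs⟩ := exists_rel_of_det_wr_eq_zero v h
    apply hc
    ext j
    have := GP_indep Finset.univ (fun j : Fin n => (e j : ℕ))
      (fun i _ j _ hij => e.injective (Subtype.ext hij))
      (fun j => C (PowerSeries.C (c j)) * A (e j)) (fun j _ => (hA _).C_mul _) (by
        rw [← hs]
        refine Finset.sum_congr rfl fun j _ => ?_
        simp only [eval_mul, eval_C, v]; ring) j (Finset.mem_univ _)
    rcases mul_eq_zero.mp this with h1 | h1
    · simpa using congrArg PowerSeries.constantCoeff (C_eq_zero.mp h1)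
    · exact absurd h1 (hne j)
  let W : Matrix (Fin n) (Fin n) (PowerSeries ℚ)[X] :=
    Matrix.of fun i j => (gt (e j))^[(i : ℕ)] (A (e j))
  have hW : (wr v).det = (∏ j : Fin n, PowerSeries.X ^ (e j : ℕ)) * W.det.eval 1 := by
    have h1 : W.det.eval 1 = (W.map (evalRingHom 1)).det := by
      rw [← coe_evalRingHom, RingHom.map_det]; rfl
    rw [h1, ← Matrix.det_mul_row]
    congr 1
    ext1 i j
    exact iterate_dq_X_pow_mul _ _ _
  have hWGP : GP W.det := GP.det _ fun i j => (hA _).iterate_gt _ _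
  have hW0 : W.det ≠ 0 := by
    intro h; apply hdet; rw [hW, h, eval_zero, mul_zero]
  have hWd : W.det.natDegree ≤ L * (N + L) := by
    refine (natDegree_det_le W (D := N + L) fun i j => ?_).trans (Nat.mul_le_mul_right _ hcard)
    refine (natDegree_iterate_gt_le _ _ _).trans ?_
    have := hN (e j)
    omega
  apply order_le_of_dvd_imp
  intro k hk
  rw [← hsum] at hk
  have h1 := pow_dvd_iff_le_order.mp (X_pow_dvd_det_wr hpos v hk)
  rw [hW, PowerSeries.order_mul, Finset.prod_pow_eq_pow_sum, PowerSeries.order_X_pow] at h1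
  have h2 := h1.trans (add_le_add le_rfl (hWGP.order_le hW0 hWd))
  have h3 : k ≤ (∑ j, (e j : ℕ)) + 48 * (L * (N + L) + 1) ^ 4 := by exact_mod_cast h2
  have h4 : ∑ j, (e j : ℕ) ≤ L * L :=
    (sum_fin_le _ hle).trans (Nat.mul_le_mul_right _ hcard)
  rw [sq]; omega

end FibTheta

/-! ### The auxiliary function -/

namespace FibTheta
open Polynomial

lemma Pq_eq : Pq = bq * ev (X - C X) := by
  rw [map_sub, ev_X, ev_C, aeval_X, mul_sub, bq_mul_ys, bq_mul_ls]; ring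

lemma aq_eq : aq = bq * ev (C X) := by
  rw [ev_C, aeval_X, bq_mul_ls]

/-- The series `P`, `a`, `b` are algebraically independent: no nontrivial isobaric combination
vanishes. -/
lemma isobaric_ne_zero {N : ℕ} (A : Fin N × Fin N × Fin N → ℤ) (p₀ : Fin N × Fin N × Fin N)
    (h : ∑ p : Fin N × Fin N × Fin N,
      (if (p.1 : ℕ) + p.2.1 + p.2.2 = (p₀.1 : ℕ) + p₀.2.1 + p₀.2.2 then
        PowerSeries.C (A p : ℚ) * (Pq ^ (p.1 : ℕ) * aq ^ (p.2.1 : ℕ) * bq ^ (p.2.2 : ℕ))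
        else 0) = 0) : A p₀ = 0 := by
  set w := (p₀.1 : ℕ) + p₀.2.1 + p₀.2.2 with hw
  let f : ℚ[X][X] := ∑ p : Fin N × Fin N × Fin N,
      (if (p.1 : ℕ) + p.2.1 + p.2.2 = w then
        C (C (A p : ℚ)) * ((X - C X) ^ (p.1 : ℕ) * (C X) ^ (p.2.1 : ℕ)) else 0)
  have h1 : bq ^ w * ev f = 0 := by
    rw [← h, map_sum, Finset.mul_sum]
    refine Finset.sum_congr rfl fun p _ => ?_
    split_ifs with hp
    · rw [Pq_eq, aq_eq, map_mul, ev_C (C _), aeval_C, map_mul, map_pow, map_pow, ← hp]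
      change _ * (PowerSeries.C (A p : ℚ) * _) = _
      ring
    · simp
  have h2 : f = 0 := by
    apply ev_injective
    rw [map_zero]
    exact (mul_eq_zero.mp h1).resolve_left (pow_ne_zero _ bq_ne_zero)
  have h3 : (f.comp (X + C X)).coeff (p₀.1 : ℕ) = 0 := by rw [h2]; simp
  have h4 : ((f.comp (X + C X)).coeff (p₀.1 : ℕ)).coeff (p₀.2.1 : ℕ) = (A p₀ : ℚ) := by
    simp only [f, Polynomial.sum_comp, finsetSum_coeff]
    rw [Finset.sum_eq_single p₀]
    · simp only [hw, if_true, mul_comp, C_comp, pow_comp, sub_comp, X_comp, add_sub_cancel_right]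
      rw [coeff_C_mul, ← C_pow, coeff_mul_C, coeff_X_pow_self, one_mul, coeff_C_mul,
        coeff_X_pow_self, mul_one]
    · intro p _ hp
      split_ifs with hs
      · simp only [mul_comp, C_comp, pow_comp, sub_comp, X_comp, add_sub_cancel_right]
        rw [coeff_C_mul, ← C_pow, coeff_mul_C, coeff_X_pow, coeff_C_mul]
        split_ifs with h5
        · rw [one_mul, coeff_X_pow]
          split_ifs with h6
          · exact absurd (Prod.ext (Fin.ext h5.symm) (Prod.ext (Fin.ext h6.symm)
              (Fin.ext (by omega)))) hp
          · simp
        · simp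
      · simp
    · simp
  rw [h3] at h4
  simpa using h4.symm

/-- The auxiliary function with coefficients `A l (i, j, k)`, as an integral power series. -/
def auxF {L N : ℕ} (A : Fin L × Fin N × Fin N × Fin N → ℤ) : PowerSeries ℤ :=
  ∑ x, PowerSeries.C (A x) * (PowerSeries.X ^ (x.1 : ℕ) *
    (sP ^ (x.2.1 : ℕ) * sa ^ (x.2.2.1 : ℕ) * sb ^ (x.2.2.2 : ℕ)))

/-- A nonzero auxiliary function does not vanish identically, and its order at `0` is polynomially
bounded. -/
theorem auxF_order {L N : ℕ} (A : Fin L × Fin N × Fin N × Fin N → ℤ) (hA : A ≠ 0) :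
    ∃ M ≤ L ^ 2 + 48 * (L * (3 * N + L) + 1) ^ 4, ∃ g : PowerSeries ℤ,
      auxF A = PowerSeries.X ^ M * g ∧ PowerSeries.coeff 0 g ≠ 0 := by
  let B : ℕ → (PowerSeries ℚ)[X] := fun l => if hl : l < L then
    ∑ p : Fin N × Fin N × Fin N, C (PowerSeries.C (A (⟨l, hl⟩, p) : ℚ)) *
      (C (Pq ^ (p.1 : ℕ) * aq ^ (p.2.1 : ℕ) * bq ^ (p.2.2 : ℕ)) *
        X ^ ((p.1 : ℕ) + p.2.1 + p.2.2)) else 0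
  have hpow : ∀ (f : PowerSeries ℚ), f ∈ Hom 1 → ∀ n : ℕ, f ^ n ∈ Hom n := by
    intro f hf n
    induction n with
    | zero => simpa using one_mem_Hom
    | succ n ih => rw [pow_succ]; exact Hom_mul ih hf
  have hB : ∀ l, GP (B l) := by
    intro l
    simp only [B]
    split_ifs with hl
    · refine GP.sum fun p _ => GP.C_mul ?_ _
      intro w
      rw [coeff_C_mul, coeff_X_pow]
      split_ifs with h
      · rw [mul_one, h]
        exact Hom_mul (Hom_mul (hpow _ Pq_mem_Hom _) (hpow _ aq_mem_Hom _)) (hpow _ bq_mem_Hom _)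
      · rw [mul_zero]; exact Submodule.zero_mem _
    · exact GP.zero
  have hN : ∀ l, (B l).natDegree ≤ 3 * N := by
    intro l
    simp only [B]
    split_ifs with hl
    · refine natDegree_sum_le_of_forall_le _ _ fun p _ => ?_
      refine (natDegree_C_mul_le _ _).trans ((natDegree_C_mul_X_pow_le _ _).trans ?_)
      omega
    · simp
  have h0 : ∃ l < L, B l ≠ 0 := by
    obtain ⟨⟨l, p₀⟩, hx⟩ := Function.ne_iff.mp hA
    refine ⟨l, l.2, fun h => hx ?_⟩
    apply isobaric_ne_zero (fun p => A (l, p)) p₀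
    have h' := congrArg (fun f => coeff f ((p₀.1 : ℕ) + p₀.2.1 + p₀.2.2)) h
    simp only [B, l.2, dif_pos, finsetSum_coeff, coeff_zero] at h'
    refine Eq.trans ?_ h'
    refine Finset.sum_congr rfl fun p _ => ?_
    rw [coeff_C_mul, coeff_C_mul, coeff_X_pow]
    by_cases h1 : (p.1 : ℕ) + p.2.1 + p.2.2 = (p₀.1 : ℕ) + p₀.2.1 + p₀.2.2
    · rw [if_pos h1, if_pos h1.symm, mul_one]
    · rw [if_neg h1, if_neg (Ne.symm h1), mul_zero, mul_zero]
  have hz := zero_estimate L (3 * N) B hB hN h0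
  have hmap : PowerSeries.map (Int.castRingHom ℚ) (auxF A)
      = ∑ l ∈ Finset.range L, PowerSeries.X ^ l * (B l).eval 1 := by
    rw [Finset.sum_range, auxF, map_sum, Fintype.sum_prod_type]
    refine Finset.sum_congr rfl fun l _ => ?_
    simp only [B, l.2, dif_pos, eval_finsetSum, Finset.mul_sum]
    refine Finset.sum_congr rfl fun p _ => ?_
    simp only [map_mul, map_pow, PowerSeries.map_C, PowerSeries.map_X, eval_mul, eval_C, eval_pow,
      eval_X, one_pow, mul_one, aq, bq, Pq]
    rw [eq_intCast (Int.castRingHom ℚ)]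
    ring
  rw [← hmap] at hz
  have hne : auxF A ≠ 0 := by
    intro h
    rw [h, map_zero, PowerSeries.order_zero] at hz
    exact absurd (top_le_iff.mp hz) (ENat.natCast_ne_top _)
  have ho : (auxF A).order ≤ (PowerSeries.map (Int.castRingHom ℚ) (auxF A)).order := by
    apply PowerSeries.le_order
    intro i hi
    rw [PowerSeries.coeff_map, PowerSeries.coeff_of_lt_order i hi, map_zero]
  obtain ⟨M, hM⟩ := ENat.ne_top_iff_exists.mp
    (fun h => hne (PowerSeries.order_eq_top.mp h))
  have hMle := ho.trans hz
  rw [← hM] at hMle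
  have hd : PowerSeries.X ^ M ∣ auxF A := by
    rw [PowerSeries.X_pow_dvd_iff]
    intro m hm
    apply PowerSeries.coeff_of_lt_order
    rw [← hM]; exact_mod_cast hm
  obtain ⟨g, hg⟩ := hd
  refine ⟨M, by exact_mod_cast hMle, g, hg, ?_⟩
  have h1 : PowerSeries.coeff M (auxF A) ≠ 0 := (PowerSeries.order_eq_nat.mp hM.symm).1
  rw [hg] at h1
  have := PowerSeries.coeff_X_pow_mul g M 0
  rw [zero_add] at this
  rwa [this] at h1

end FibTheta

namespace FibTheta
open PowerSeries

/-! ### Power series with polynomially bounded coefficients -/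

/-- The coefficients of `f` satisfy `|f_n| ≤ K (n + 1) ^ c`. -/
def Dm (c : ℕ) (K : ℝ) (f : ℝ⟦X⟧) : Prop := ∀ n : ℕ, |coeff n f| ≤ K * ((n : ℝ) + 1) ^ c

lemma Dm.nonneg {c : ℕ} {K : ℝ} {f : ℝ⟦X⟧} (h : Dm c K f) : 0 ≤ K := by
  have := (abs_nonneg _).trans (h 0)
  simpa using this

lemma Dm.mono {c c' : ℕ} {K K' : ℝ} {f : ℝ⟦X⟧} (h : Dm c K f) (hc : c ≤ c') (hK : K ≤ K') :
    Dm c' K' f := fun n => by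
  have h0 := h.nonneg
  refine (h n).trans (mul_le_mul hK (pow_le_pow_right₀ ?_ hc) (by positivity) (h0.trans hK))
  have : (0 : ℝ) ≤ n := n.cast_nonneg
  linarith

lemma Dm.add {c : ℕ} {K K' : ℝ} {f g : ℝ⟦X⟧} (hf : Dm c K f) (hg : Dm c K' g) :
    Dm c (K + K') (f + g) := fun n => by
  rw [map_add, add_mul]
  exact (abs_add_le _ _).trans (add_le_add (hf n) (hg n))

lemma Dm.neg {c : ℕ} {K : ℝ} {f : ℝ⟦X⟧} (hf : Dm c K f) : Dm c K (-f) := fun n => by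
  rw [map_neg, abs_neg]; exact hf n

lemma Dm.C_mul {c : ℕ} {K : ℝ} {f : ℝ⟦X⟧} (hf : Dm c K f) (r : ℝ) : Dm c (|r| * K) (C r * f) :=
  fun n => by
    rw [coeff_C_mul, abs_mul, mul_assoc]
    exact mul_le_mul_of_nonneg_left (hf n) (abs_nonneg _)

lemma Dm.sum {ι : Type*} {s : Finset ι} {c : ℕ} {K : ι → ℝ} {f : ι → ℝ⟦X⟧}
    (hf : ∀ i ∈ s, Dm c (K i) (f i)) : Dm c (∑ i ∈ s, K i) (∑ i ∈ s, f i) := fun n => by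
  rw [map_sum, Finset.sum_mul]
  exact (Finset.abs_sum_le_sum_abs _ _).trans (Finset.sum_le_sum fun i hi => hf i hi n)

lemma Dm.one : Dm 0 1 (1 : ℝ⟦X⟧) := fun n => by
  rw [coeff_one]; split_ifs <;> simp

lemma Dm.C (r : ℝ) : Dm 0 |r| (C r : ℝ⟦X⟧) := by simpa using Dm.one.C_mul r

lemma Dm.X : Dm 0 1 (X : ℝ⟦X⟧) := fun n => by
  rw [coeff_X]; split_ifs <;> simp

lemma Dm.mul {c c' : ℕ} {K K' : ℝ} {f g : ℝ⟦X⟧} (hf : Dm c K f) (hg : Dm c' K' g) :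
    Dm (c + c' + 1) (K * K') (f * g) := fun n => by
  have h0 := hf.nonneg
  have h1 := hg.nonneg
  rw [coeff_mul]
  refine (Finset.abs_sum_le_sum_abs _ _).trans ?_
  have h2 : ∀ p ∈ Finset.HasAntidiagonal.antidiagonal n, |coeff p.1 f * coeff p.2 g| ≤
      K * K' * ((n : ℝ) + 1) ^ (c + c') := by
    intro p hp
    have hp := Finset.HasAntidiagonal.mem_antidiagonal.mp hp
    have e1 : (p.1 : ℝ) ≤ n := by exact_mod_cast (by omega : p.1 ≤ n)
    have e2 : (p.2 : ℝ) ≤ n := by exact_mod_cast (by omega : p.2 ≤ n)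
    rw [abs_mul]
    calc _ ≤ (K * ((p.1 : ℝ) + 1) ^ c) * (K' * ((p.2 : ℝ) + 1) ^ c') :=
          mul_le_mul (hf _) (hg _) (abs_nonneg _) (by positivity)
      _ ≤ (K * ((n : ℝ) + 1) ^ c) * (K' * ((n : ℝ) + 1) ^ c') := by gcongr
      _ = _ := by ring
  refine (Finset.sum_le_card_nsmul _ _ _ h2).trans ?_
  rw [Finset.Nat.card_antidiagonal, nsmul_eq_mul]
  push_cast
  exact le_of_eq (by ring)

lemma Dm.shift {c : ℕ} {K : ℝ} {f : ℝ⟦X⟧} (hf : Dm c K f) (l : ℕ) : Dm c K (PowerSeries.X ^ l * f) :=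
  fun n => by
    have h0 := hf.nonneg
    rw [coeff_X_pow_mul']
    split_ifs with h
    · refine (hf _).trans ?_
      have : ((n - l : ℕ) : ℝ) ≤ n := by exact_mod_cast Nat.sub_le _ _
      gcongr
    · rw [abs_zero]; positivity

lemma Dm.pow {c : ℕ} {K : ℝ} {f : ℝ⟦X⟧} (hf : Dm c K f) (k : ℕ) :
    Dm ((c + 1) * k) (K ^ k) (f ^ k) := by
  induction k with
  | zero => simpa using Dm.one
  | succ k ih =>
    rw [pow_succ, pow_succ]
    exact (ih.mul hf).mono (le_of_eq (by ring)) le_rfl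

lemma Dm.qD {c : ℕ} {K : ℝ} {f : ℝ⟦X⟧} (hf : Dm c K f) : Dm (c + 1) K (qD f) := fun n => by
  have h0 := hf.nonneg
  rw [coeff_qD, abs_mul, Nat.abs_cast]
  calc (n : ℝ) * |coeff n f| ≤ ((n : ℝ) + 1) * (K * ((n : ℝ) + 1) ^ c) := by
        gcongr
        · linarith
        · exact hf n
    _ = _ := by ring

lemma summable_pow_geom (c : ℕ) {r : ℝ} (h0 : 0 ≤ r) (h1 : r < 1) (m : ℕ) :
    Summable fun n : ℕ => ((n : ℝ) + m) ^ c * r ^ n := by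
  rcases h0.eq_or_lt with h | h
  · subst h
    refine summable_of_ne_finset_zero (s := {0}) ?_
    intro n hn
    rw [zero_pow (by simpa using hn), mul_zero]
  · have h2 := (summable_nat_add_iff m).mpr
      (summable_pow_mul_geometric_of_norm_lt_one c (r := r) (by rwa [Real.norm_of_nonneg h0]))
    have h3 := h2.mul_right ((r ^ m)⁻¹)
    refine h3.congr fun n => ?_
    have : r ^ m ≠ 0 := by positivity
    push_cast
    field_simp
    ring

lemma Dm.summable {c : ℕ} {K : ℝ} {f : ℝ⟦X⟧} (hf : Dm c K f) {r : ℝ} (h0 : 0 ≤ r) (h1 : r < 1) :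
    Summable fun n => |coeff n f| * r ^ n := by
  have := (summable_pow_geom c h0 h1 1).mul_left K
  refine this.of_nonneg_of_le (fun n => by positivity) fun n => ?_
  rw [Nat.cast_one, ← mul_assoc]
  exact mul_le_mul_of_nonneg_right (hf n) (by positivity)

/-- Power series whose coefficients are polynomially bounded. -/
def good : Subring ℝ⟦X⟧ where
  carrier := {f | ∃ c K, Dm c K f}
  mul_mem' := by
    rintro f g ⟨c, K, hf⟩ ⟨c', K', hg⟩
    exact ⟨_, _, hf.mul hg⟩
  one_mem' := ⟨_, _, Dm.one⟩
  add_mem' := by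
    rintro f g ⟨c, K, hf⟩ ⟨c', K', hg⟩
    exact ⟨_, _, (hf.mono (le_max_left c c') le_rfl).add (hg.mono (le_max_right c c') le_rfl)⟩
  zero_mem' := ⟨0, 0, fun n => by simp⟩
  neg_mem' := by
    rintro f ⟨c, K, hf⟩
    exact ⟨_, _, hf.neg⟩

lemma Dm.good {c : ℕ} {K : ℝ} {f : ℝ⟦X⟧} (hf : Dm c K f) : f ∈ good := ⟨_, _, hf⟩

lemma X_mem_good : (X : ℝ⟦X⟧) ∈ good := Dm.X.good

lemma C_mem_good (r : ℝ) : (C r : ℝ⟦X⟧) ∈ good := (Dm.C r).good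

lemma qD_mem_good {f : ℝ⟦X⟧} (hf : f ∈ good) : qD f ∈ good := by
  obtain ⟨c, K, hf⟩ := hf
  exact hf.qD.good

lemma summable_of_good {f : ℝ⟦X⟧} (hf : f ∈ good) {r : ℝ} (h0 : 0 ≤ r) (h1 : r < 1) :
    Summable fun n => |coeff n f| * r ^ n := by
  obtain ⟨c, K, hf⟩ := hf
  exact hf.summable h0 h1

lemma summable_of_good' {f : ℝ⟦X⟧} (hf : f ∈ good) {r : ℝ} (h0 : 0 ≤ r) (h1 : r < 1) :
    Summable fun n => coeff n f * r ^ n := by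
  have := summable_of_good hf h0 h1
  refine Summable.of_norm (this.congr fun n => ?_)
  rw [norm_mul, norm_pow, Real.norm_of_nonneg h0, Real.norm_eq_abs]

/-- The value of a power series at `r`. -/
def val (r : ℝ) (f : ℝ⟦X⟧) : ℝ := ∑' n, coeff n f * r ^ n

lemma val_C {r : ℝ} (x : ℝ) : val r (C x) = x := by
  rw [val, tsum_eq_single 0]
  · simp
  · intro n hn; rw [coeff_C, if_neg hn, zero_mul]

lemma val_X {r : ℝ} : val r X = r := by
  rw [val, tsum_eq_single 1]
  · simp
  · intro n hn; rw [coeff_X, if_neg hn, zero_mul]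

lemma val_add {r : ℝ} (h0 : 0 ≤ r) (h1 : r < 1) {f g : ℝ⟦X⟧} (hf : f ∈ good) (hg : g ∈ good) :
    val r (f + g) = val r f + val r g := by
  rw [val, val, val, ← (summable_of_good' hf h0 h1).tsum_add (summable_of_good' hg h0 h1)]
  exact tsum_congr fun n => by rw [map_add, add_mul]

lemma val_mul {r : ℝ} (h0 : 0 ≤ r) (h1 : r < 1) {f g : ℝ⟦X⟧} (hf : f ∈ good) (hg : g ∈ good) :
    val r (f * g) = val r f * val r g := by
  rw [val, val, val, tsum_mul_tsum_eq_tsum_sum_antidiagonal_of_summable_norm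
    (f := fun n => coeff n f * r ^ n) (g := fun n => coeff n g * r ^ n)]
  · refine tsum_congr fun n => ?_
    rw [coeff_mul, Finset.sum_mul]
    refine Finset.sum_congr rfl fun p hp => ?_
    rw [← Finset.HasAntidiagonal.mem_antidiagonal.mp hp, pow_add]; ring
  · exact (summable_of_good' hf h0 h1).norm
  · exact (summable_of_good' hg h0 h1).norm

/-- Evaluation at `r ∈ [0, 1)` as a ring homomorphism. -/
def valHom {r : ℝ} (h0 : 0 ≤ r) (h1 : r < 1) : good →+* ℝ where
  toFun f := val r f
  map_one' := by simpa using val_C (r := r) 1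
  map_mul' f g := val_mul h0 h1 f.2 g.2
  map_zero' := by simpa using val_C (r := r) 0
  map_add' f g := val_add h0 h1 f.2 g.2

lemma val_pow {r : ℝ} (h0 : 0 ≤ r) (h1 : r < 1) {f : ℝ⟦X⟧} (hf : f ∈ good) (n : ℕ) : val r (f ^ n) = val r f ^ n :=
  map_pow (valHom h0 h1) ⟨f, hf⟩ n

lemma val_sub {r : ℝ} (h0 : 0 ≤ r) (h1 : r < 1) {f g : ℝ⟦X⟧} (hf : f ∈ good) (hg : g ∈ good) :
    val r (f - g) = val r f - val r g :=
  map_sub (valHom h0 h1) ⟨f, hf⟩ ⟨g, hg⟩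

lemma val_sum {r : ℝ} (h0 : 0 ≤ r) (h1 : r < 1) {ι : Type*} (s : Finset ι) {f : ι → ℝ⟦X⟧} (hf : ∀ i, f i ∈ good) :
    val r (∑ i ∈ s, f i) = ∑ i ∈ s, val r (f i) := by
  classical
  induction s using Finset.induction_on with
  | empty => simpa using val_C (r := r) 0
  | insert i s hi ih =>
    rw [Finset.sum_insert hi, Finset.sum_insert hi,
      val_add h0 h1 (hf i) (sum_mem fun j _ => hf j), ih]

/-- A series with polynomially bounded coefficients that vanishes at `r` is divisible by `q - r`, with
quotient of the same kind. -/
lemma exists_quotient {r : ℝ} (h0 : 0 ≤ r) (h1 : r < 1) {f : ℝ⟦X⟧} (hf : f ∈ good) (hv : val r f = 0) :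
    ∃ k ∈ good, f = (X - C r) * k := by
  have hs := summable_of_good' hf h0 h1
  obtain ⟨c, K, hf⟩ := hf
  have hK := hf.nonneg
  have hb : ∀ n j : ℕ, |coeff (n + 1 + j) f * r ^ j| ≤
      K * ((n : ℝ) + 1) ^ c * (((j : ℝ) + (2 : ℕ)) ^ c * r ^ j) := by
    intro n j
    rw [abs_mul, abs_of_nonneg (pow_nonneg h0 j)]
    have h2 : ((n + 1 + j : ℕ) : ℝ) + 1 ≤ ((n : ℝ) + 1) * ((j : ℝ) + (2 : ℕ)) := by
      have hn : (0 : ℝ) ≤ n := n.cast_nonneg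
      have hj : (0 : ℝ) ≤ j := j.cast_nonneg
      push_cast
      nlinarith [mul_nonneg hn hj]
    calc _ ≤ (K * (((n : ℝ) + 1) * ((j : ℝ) + (2 : ℕ))) ^ c) * r ^ j := by
          refine mul_le_mul_of_nonneg_right ((hf _).trans ?_) (by positivity)
          gcongr
      _ = _ := by rw [mul_pow]; ring
  have hsum := summable_pow_geom c h0 h1 2
  have hs' : ∀ n : ℕ, Summable fun j : ℕ => coeff (n + 1 + j) f * r ^ j := fun n =>
    Summable.of_norm_bounded (hsum.mul_left _) (fun j => by rw [Real.norm_eq_abs]; exact hb n j)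
  let k : ℝ⟦X⟧ := PowerSeries.mk fun n => ∑' j : ℕ, coeff (n + 1 + j) f * r ^ j
  refine ⟨k, ⟨c, K * ∑' j : ℕ, ((j : ℝ) + (2 : ℕ)) ^ c * r ^ j, fun n => ?_⟩, ?_⟩
  · rw [coeff_mk, ← Real.norm_eq_abs]
    refine (tsum_of_norm_bounded (hsum.mul_left (K * ((n : ℝ) + 1) ^ c)).hasSum
      (fun j => ?_)).trans ?_
    · rw [Real.norm_eq_abs]; exact hb n j
    · rw [tsum_mul_left]; exact le_of_eq (by ring)
  · ext n
    rw [sub_mul, map_sub, coeff_C_mul]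
    cases n with
    | zero =>
      rw [coeff_zero_X_mul, coeff_mk, ← tsum_mul_left]
      rw [val, hs.tsum_eq_zero_add] at hv
      have : ∑' j : ℕ, r * (coeff (0 + 1 + j) f * r ^ j) = ∑' n, coeff (n + 1) f * r ^ (n + 1) :=
        tsum_congr fun j => by rw [zero_add, add_comm 1 j]; ring
      rw [this]
      rw [pow_zero, mul_one] at hv
      linarith
    | succ n =>
      rw [coeff_succ_X_mul, coeff_mk, coeff_mk, ← tsum_mul_left, (hs' n).tsum_eq_zero_add]
      have : ∑' j : ℕ, r * (coeff (n + 1 + 1 + j) f * r ^ j)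
          = ∑' j, coeff (n + 1 + (j + 1)) f * r ^ (j + 1) :=
        tsum_congr fun j => by
          rw [show n + 1 + 1 + j = n + 1 + (j + 1) by omega]; ring
      rw [this]; simp

lemma iterate_deriv_pow_mul {r : ℝ} (t : ℕ) : ∀ k ∈ good, ∃ h ∈ good,
    (fun f : ℝ⟦X⟧ => 6 * qD f)^[t] ((X - C r) ^ t * k) =
      (X - C r) * h + C (6 ^ t * (t.factorial : ℝ)) * (X ^ t * k) := by
  have h6 : (6 : ℝ⟦X⟧) = C 6 := (map_ofNat (C (R := ℝ)) 6).symm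
  induction t with
  | zero => intro k _; exact ⟨0, zero_mem _, by simp⟩
  | succ t ih =>
    intro k hk
    obtain ⟨h, hh, he⟩ := ih (6 * (((t : ℝ⟦X⟧) + 1) * X * k + (X - C r) * qD k)) (by
      refine mul_mem (by rw [h6]; exact C_mem_good 6) (add_mem (mul_mem (mul_mem ?_ X_mem_good) hk)
        (mul_mem (sub_mem X_mem_good (C_mem_good r)) (qD_mem_good hk)))
      exact add_mem (natCast_mem _ _) (one_mem _))
    refine ⟨h + C (6 ^ (t + 1) * (t.factorial : ℝ)) * (X ^ t * qD k), add_mem hh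
      (mul_mem (C_mem_good _) (mul_mem (pow_mem X_mem_good _) (qD_mem_good hk))), ?_⟩
    have e : 6 * qD ((X - C r) ^ (t + 1) * k)
        = (X - C r) ^ t * (6 * (((t : ℝ⟦X⟧) + 1) * X * k + (X - C r) * qD k)) := by
      rw [qD_mul, qD_pow, qD_sub, qD_X, qD_C]; ring
    rw [Function.iterate_succ_apply, e, he, Nat.factorial_succ]
    push_cast
    simp only [map_mul, map_pow, map_natCast, map_add, map_one, ← h6]
    ring

/-- A series all of whose derivatives of order `< T` vanish at `r` is divisible by
`(q - r) ^ T`. -/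
lemma exists_quotient_pow {r : ℝ} (h0 : 0 ≤ r) (h1 : r < 1) (hr : 0 < r) {f : ℝ⟦X⟧} (hf : f ∈ good) (T : ℕ)
    (hv : ∀ t < T, val r ((fun f : ℝ⟦X⟧ => 6 * qD f)^[t] f) = 0) :
    ∃ k ∈ good, f = (X - C r) ^ T * k := by
  induction T with
  | zero => exact ⟨f, hf, by simp⟩
  | succ T ih =>
    obtain ⟨k, hk, rfl⟩ := ih fun t ht => hv t (by omega)
    obtain ⟨h, hh, he⟩ := iterate_deriv_pow_mul (r := r) T k hk
    have hT := hv T (by omega)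
    have hX := sub_mem X_mem_good (C_mem_good r)
    have hC := C_mem_good (6 ^ T * (T.factorial : ℝ))
    have hX' := pow_mem X_mem_good T
    rw [he, val_add h0 h1 (mul_mem hX hh) (mul_mem hC (mul_mem hX' hk)), val_mul h0 h1 hX hh,
      val_sub h0 h1 X_mem_good (C_mem_good r), val_X, val_C, sub_self, zero_mul, zero_add,
      val_mul h0 h1 hC (mul_mem hX' hk), val_C, val_mul h0 h1 hX' hk,
      val_pow h0 h1 X_mem_good, val_X] at hT
    have hk0 : val r k = 0 := by
      rcases mul_eq_zero.mp hT with h | h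
      · exact absurd h (by positivity)
      · exact (mul_eq_zero.mp h).resolve_left (by positivity)
    obtain ⟨k', hk', rfl⟩ := exists_quotient h0 h1 hk hk0
    exact ⟨k', hk', by ring⟩

/-- The weighted `ℓ¹`-norm of the coefficients. -/
def nrm (ρ : ℝ) (f : ℝ⟦X⟧) : ℝ := ∑' n, |coeff n f| * ρ ^ n

lemma nrm_quotient {r ρ : ℝ} (h0 : 0 ≤ r) (hρ : r ≤ ρ) (hρ1 : ρ < 1) (T : ℕ) {k : ℝ⟦X⟧}
    (hk : k ∈ good) : (ρ - r) ^ T * nrm ρ k ≤ nrm ρ ((X - C r) ^ T * k) := by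
  have hρ0 := h0.trans hρ
  have key : ∀ k ∈ good, (ρ - r) * nrm ρ k ≤ nrm ρ ((X - C r) * k) := by
    intro k hk
    have s1 := summable_of_good hk hρ0 hρ1
    have s2 := summable_of_good (mul_mem (sub_mem X_mem_good (C_mem_good r)) hk) hρ0 hρ1
    have hX : ρ * nrm ρ k = nrm ρ (X * k) := by
      have s3 := summable_of_good (mul_mem X_mem_good hk) hρ0 hρ1
      rw [nrm, nrm, s3.tsum_eq_zero_add, ← tsum_mul_left, coeff_zero_X_mul, abs_zero, zero_mul,
        zero_add]
      exact tsum_congr fun n => by rw [coeff_succ_X_mul]; ring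
    have h2 : nrm ρ (X * k) ≤ nrm ρ ((X - C r) * k) + r * nrm ρ k := by
      rw [nrm, nrm, nrm, ← tsum_mul_left, ← s2.tsum_add (s1.mul_left r)]
      refine Summable.tsum_le_tsum (fun n => ?_)
        (summable_of_good (mul_mem X_mem_good hk) hρ0 hρ1) (s2.add (s1.mul_left r))
      rw [← mul_assoc, ← add_mul]
      refine mul_le_mul_of_nonneg_right ?_ (by positivity)
      have : coeff n (X * k) = coeff n ((X - C r) * k) + r * coeff n k := by
        rw [sub_mul, map_sub, coeff_C_mul]; ring
      rw [this]
      refine (abs_add_le _ _).trans ?_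
      rw [abs_mul r, abs_of_nonneg h0]
    linarith
  induction T with
  | zero => simp
  | succ T ih =>
    calc (ρ - r) ^ (T + 1) * nrm ρ k = (ρ - r) * ((ρ - r) ^ T * nrm ρ k) := by ring
      _ ≤ (ρ - r) * nrm ρ ((X - C r) ^ T * k) :=
          mul_le_mul_of_nonneg_left ih (by linarith)
      _ ≤ nrm ρ ((X - C r) * ((X - C r) ^ T * k)) :=
          key _ (mul_mem (pow_mem (sub_mem X_mem_good (C_mem_good r)) _) hk)
      _ = _ := by rw [pow_succ' (X - C r), mul_assoc]

end FibTheta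

namespace FibTheta
open PowerSeries

/-! ### The analytic upper bound -/

/-- Integral power series viewed as real ones. -/
abbrev toR : ℤ⟦X⟧ →+* ℝ⟦X⟧ := PowerSeries.map (Int.castRingHom ℝ)

lemma coeff_toR (f : ℤ⟦X⟧) (n : ℕ) : coeff n (toR f) = ((coeff n f : ℤ) : ℝ) := by
  rw [PowerSeries.coeff_map, eq_intCast]

lemma card_sqRoots_le (n : ℕ) : ((sqRoots n).card : ℝ) ≤ 2 * ((n : ℝ) + 1) ^ 1 := by
  have h : (sqRoots n).card ≤ 2 * n + 1 := by
    refine (Finset.card_filter_le _ _).trans ?_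
    rw [Int.card_Icc]; omega
  have : ((sqRoots n).card : ℝ) ≤ 2 * n + 1 := by exact_mod_cast h
  linarith

lemma Dm_t3 : Dm 1 2 (toR t3) := fun n => by
  rw [coeff_toR, t3, coeff_mk, Int.cast_natCast, Nat.abs_cast]
  exact card_sqRoots_le n

lemma Dm_t4 : Dm 1 2 (toR t4) := fun n => by
  rw [coeff_toR, t4, coeff_mk]
  push_cast
  rw [abs_mul, abs_pow, abs_neg, abs_one, one_pow, one_mul, Nat.abs_cast]
  exact card_sqRoots_le n

lemma Dm_sb' : Dm 8 16 (toR sb) := by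
  rw [sb, map_pow]
  exact (Dm_t4.pow 4).mono (by norm_num) (by norm_num)

lemma Dm_sa' : Dm 8 32 (toR sa) := by
  rw [sa, map_sub, map_pow, map_pow, sub_eq_add_neg]
  exact ((Dm_t3.pow 4).add (Dm_t4.pow 4).neg).mono (by norm_num) (by norm_num)

lemma Dm_sb : Dm 8 200 (toR sb) := Dm_sb'.mono le_rfl (by norm_num)

lemma Dm_sa : Dm 8 200 (toR sa) := Dm_sa'.mono le_rfl (by norm_num)

lemma Dm_sP : Dm 8 200 (toR sP) := by
  have hrec : ∀ n, 2 * coeff n sP = 4 * coeff n (dbl sP) - (coeff n sa + 2 * coeff n sb) := by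
    intro n
    have h := congrArg (coeff n) four_dbl_sP
    simp only [ofNat_eq_C, map_add, coeff_C_mul] at h
    linarith
  intro n
  induction n using Nat.strong_induction_on with
  | _ n ih =>
    have h1 := Dm_sa' n
    have h2 := Dm_sb' n
    have h3 : (2 : ℝ) * (coeff n sP : ℤ) = 4 * (coeff n (dbl sP) : ℤ) -
      ((coeff n sa : ℤ) + 2 * (coeff n sb : ℤ)) := by exact_mod_cast hrec n
    rw [coeff_toR] at h1 h2 ⊢
    set Y : ℝ := ((n : ℝ) + 1) ^ 8 with hY
    have hY0 : 0 ≤ Y := by positivity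
    rw [abs_le] at h1 h2
    rcases Nat.eq_zero_or_pos n with h0 | hpos
    · have h4 : coeff n (dbl sP) = coeff n sP := by
        rw [h0]
        have := coeff_expand_mul (p := 2) two_ne_zero sP 0
        rwa [mul_zero] at this
      rw [h4] at h3
      rw [abs_le]; constructor <;> linarith
    by_cases hd : 2 ∣ n
    · obtain ⟨m, rfl⟩ := hd
      have h4 : coeff (2 * m) (dbl sP) = coeff m sP := coeff_expand_mul 2 two_ne_zero sP m
      have h5 := ih m (by omega)
      rw [coeff_toR] at h5
      have h6 : ((m : ℝ) + 1) ^ 8 ≤ Y / 20 := by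
        have hm : (1 : ℝ) ≤ m := by exact_mod_cast (by omega : 1 ≤ m)
        have : (m : ℝ) + 1 ≤ 2 / 3 * (((2 * m : ℕ) : ℝ) + 1) := by push_cast; linarith
        calc ((m : ℝ) + 1) ^ 8 ≤ (2 / 3 * (((2 * m : ℕ) : ℝ) + 1)) ^ 8 := by gcongr
          _ = (2 / 3) ^ 8 * Y := by rw [mul_pow]
          _ ≤ Y / 20 := by norm_num; linarith
      rw [h4] at h3
      rw [abs_le] at h5 ⊢
      constructor <;> linarith
    · have h4 : coeff n (dbl sP) = 0 := coeff_expand_of_not_dvd 2 two_ne_zero sP hd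
      rw [h4] at h3
      rw [abs_le]; push_cast at h3; constructor <;> linarith

lemma Dm.unshift {c M : ℕ} {K : ℝ} {f : ℝ⟦X⟧} (hf : Dm c K (PowerSeries.X ^ M * f)) :
    Dm c (K * ((M : ℝ) + 1) ^ c) f := fun n => by
  have h := hf (n + M)
  have h0 := hf.nonneg
  rw [coeff_X_pow_mul] at h
  refine h.trans ?_
  rw [mul_assoc, ← mul_pow]
  have : ((n + M : ℕ) : ℝ) + 1 ≤ ((M : ℝ) + 1) * ((n : ℝ) + 1) := by
    push_cast
    nlinarith [mul_nonneg (Nat.cast_nonneg (α := ℝ) n) (Nat.cast_nonneg (α := ℝ) M)]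
  gcongr

lemma tsum_pow_geom_le (c : ℕ) {r : ℝ} (h0 : 0 ≤ r) (h1 : r < 1) :
    ∑' n : ℕ, ((n : ℝ) + 1) ^ c * r ^ n ≤ c.factorial * (1 / (1 - r) ^ (c + 1)) := by
  have hr : ‖r‖ < 1 := by rwa [Real.norm_of_nonneg h0]
  rw [← tsum_choose_mul_geometric_of_norm_lt_one c hr, ← tsum_mul_left]
  refine Summable.tsum_le_tsum (fun n => ?_) (by simpa using summable_pow_geom c h0 h1 1)
    ((summable_choose_mul_geometric_of_norm_lt_one c hr).mul_left _)
  rw [← mul_assoc]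
  refine mul_le_mul_of_nonneg_right ?_ (by positivity)
  have h := Nat.pow_succ_le_ascFactorial (n + 1) c
  have h2 := Nat.ascFactorial_eq_factorial_mul_choose n c
  rw [h2] at h
  exact_mod_cast h

lemma Dm.nrm_le {c : ℕ} {K : ℝ} {f : ℝ⟦X⟧} (hf : Dm c K f) {r : ℝ} (h0 : 0 ≤ r) (h1 : r < 1) :
    nrm r f ≤ K * (c.factorial * (1 / (1 - r) ^ (c + 1))) := by
  refine le_trans ?_ (mul_le_mul_of_nonneg_left (tsum_pow_geom_le c h0 h1) hf.nonneg)
  rw [nrm, ← tsum_mul_left]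
  refine Summable.tsum_le_tsum (fun n => ?_) (hf.summable h0 h1)
    ((by simpa using summable_pow_geom c h0 h1 1 :
      Summable fun n : ℕ => ((n : ℝ) + 1) ^ c * r ^ n).mul_left K)
  rw [← mul_assoc]
  exact mul_le_mul_of_nonneg_right (hf n) (by positivity)

/-- The point `q₀ = ((√5 - 1) / 2) ^ 2` at which the theta functions are evaluated. -/
def q0 : ℝ := (3 - Real.sqrt 5) / 2

lemma sqrt5_bounds : 2.236 < Real.sqrt 5 ∧ Real.sqrt 5 < 2.237 :=
  ⟨Real.lt_sqrt_of_sq_lt (by norm_num), (Real.sqrt_lt' (by norm_num)).mpr (by norm_num)⟩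

lemma q0_pos : 0 < q0 := by have := sqrt5_bounds.2; rw [q0]; linarith

lemma q0_lt : q0 < 0.382 := by have := sqrt5_bounds.1; rw [q0]; linarith

lemma q0_lt_one : q0 < 1 := q0_lt.trans (by norm_num)

lemma q0_sq : q0 ^ 2 = 3 * q0 - 1 := by
  have : Real.sqrt 5 ^ 2 = 5 := Real.sq_sqrt (by norm_num)
  rw [q0]; linarith

lemma Dm_mono (l i j k : ℕ) : Dm (9 * (i + j + k) + 2) (200 ^ (i + j + k))
    (toR (X ^ l * (sP ^ i * sa ^ j * sb ^ k))) := by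
  simp only [map_mul, map_pow, PowerSeries.map_X]
  refine Dm.shift ?_ l
  exact (((Dm_sP.pow i).mul (Dm_sa.pow j)).mul (Dm_sb.pow k)).mono (by ring_nf; omega)
    (le_of_eq (by ring))

/-- A nonzero auxiliary function with a zero of order `T` at `q₀` cannot have small
coefficients. -/
theorem analytic_bound {L N T : ℕ} (A : Fin L × Fin N × Fin N × Fin N → ℤ) (hA : A ≠ 0) {H : ℝ}
    (hH : ∀ x, |(A x : ℝ)| ≤ H)
    (hv : ∀ t < T, val q0 ((fun f : ℝ⟦X⟧ => 6 * qD f)^[t] (toR (auxF A))) = 0) :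
    (27 / 20 : ℝ) ^ T ≤ H * (L * N ^ 3) * 200 ^ (3 * N) *
      ((L ^ 2 + 48 * (L * (3 * N + L) + 1) ^ 4 : ℕ) + 1) ^ (27 * N + 2) *
      ((27 * N + 2).factorial * 10 ^ (27 * N + 3)) := by
  obtain ⟨M, hM, g, hg, hg0⟩ := auxF_order A hA
  set M' := L ^ 2 + 48 * (L * (3 * N + L) + 1) ^ 4
  have hH0 : 0 ≤ H := by
    obtain ⟨x, -⟩ := Function.ne_iff.mp hA
    exact (abs_nonneg _).trans (hH x)
  have hF : Dm (27 * N + 2) (H * (L * N ^ 3) * 200 ^ (3 * N)) (toR (auxF A)) := by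
    rw [auxF, map_sum]
    have : Dm (27 * N + 2) (∑ x : Fin L × Fin N × Fin N × Fin N, H * 200 ^ (3 * N))
        (∑ x, toR (C (A x) * (X ^ (x.1 : ℕ) *
          (sP ^ (x.2.1 : ℕ) * sa ^ (x.2.2.1 : ℕ) * sb ^ (x.2.2.2 : ℕ))))) := by
      refine Dm.sum fun x _ => ?_
      rw [map_mul toR, PowerSeries.map_C, eq_intCast (Int.castRingHom ℝ)]
      refine ((Dm_mono _ _ _ _).C_mul _).mono (by omega) ?_
      refine mul_le_mul (hH x) (pow_le_pow_right₀ (by norm_num) (by omega)) (by positivity) hH0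
    refine this.mono le_rfl (le_of_eq ?_)
    simp only [Finset.sum_const, Finset.card_univ, Fintype.card_prod, Fintype.card_fin,
      nsmul_eq_mul]
    push_cast; ring
  have hG : toR (auxF A) = X ^ M * toR g := by rw [hg, map_mul, map_pow, PowerSeries.map_X]
  obtain ⟨k, hk, hk1⟩ := exists_quotient_pow q0_pos.le q0_lt_one q0_pos hF.good T hv
  have hnd : ¬ (X : ℝ⟦X⟧) ∣ (X - C q0) ^ T := by
    intro h
    have h2 := X_prime.dvd_of_dvd_pow h
    rw [X_dvd_iff, map_sub, constantCoeff_X, constantCoeff_C] at h2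
    have := q0_pos
    linarith
  have hd : (X : ℝ⟦X⟧) ^ M ∣ k :=
    X_prime.pow_dvd_of_dvd_mul_left M hnd (by rw [← hk1, hG]; exact dvd_mul_right _ _)
  obtain ⟨k', rfl⟩ := hd
  have hk' : k' ∈ good := by
    obtain ⟨c, K, h⟩ := hk
    exact h.unshift.good
  have hgk : toR g = (X - C q0) ^ T * k' := by
    apply mul_left_cancel₀ (pow_ne_zero M (X_prime (R := ℝ)).ne_zero)
    rw [← hG, hk1]; ring
  rw [hG] at hF
  have hG1 := hF.unshift.nrm_le (r := 9 / 10) (by norm_num) (by norm_num)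
  have hG2 := nrm_quotient (r := q0) (ρ := 9 / 10) q0_pos.le
    (by have := q0_lt; norm_num at this ⊢; linarith) (by norm_num) T hk'
  rw [← hgk] at hG2
  have hc : (1 : ℝ) ≤ q0 ^ T * |coeff 0 k'| := by
    have h1 : coeff 0 (toR g) = (-q0) ^ T * coeff 0 k' := by
      rw [hgk, coeff_zero_eq_constantCoeff, map_mul, map_pow, map_sub, constantCoeff_X,
        constantCoeff_C, zero_sub]
    have h2 : (1 : ℝ) ≤ |coeff 0 (toR g)| := by
      rw [coeff_toR]
      exact_mod_cast Int.one_le_abs hg0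
    rwa [h1, abs_mul, abs_pow, abs_neg, abs_of_pos q0_pos] at h2
  have hk0 : |coeff 0 k'| ≤ nrm (9 / 10) k' := by
    have := (summable_of_good hk' (r := 9 / 10) (by norm_num) (by norm_num)).le_tsum 0
      (fun n _ => by positivity)
    simpa [nrm] using this
  have hq : (27 / 20 : ℝ) * q0 ≤ 9 / 10 - q0 := by
    have := q0_lt; norm_num at this ⊢; linarith
  have hq0 := q0_pos
  calc (27 / 20 : ℝ) ^ T ≤ (27 / 20 : ℝ) ^ T * (q0 ^ T * |coeff 0 k'|) :=
        le_mul_of_one_le_right (by positivity) hc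
    _ = ((27 / 20 : ℝ) * q0) ^ T * |coeff 0 k'| := by rw [mul_pow]; ring
    _ ≤ (9 / 10 - q0) ^ T * nrm (9 / 10) k' := by
      have : 0 ≤ 9 / 10 - q0 := le_trans (by positivity) hq
      gcongr
    _ ≤ nrm (9 / 10) (toR g) := hG2
    _ ≤ _ := hG1
    _ ≤ _ := by
      have e : (1 : ℝ) / (1 - 9 / 10) ^ (27 * N + 2 + 1) = 10 ^ (27 * N + 3) := by
        rw [show (1 : ℝ) - 9 / 10 = (10 : ℝ)⁻¹ by norm_num, inv_pow, one_div, inv_inv]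
      rw [e]
      gcongr

end FibTheta

namespace FibTheta

/-! ### Integral representations of values -/

section Span
open Polynomial

/-- Degree and height bounds for a family of integral polynomials. -/
def Bd (J : ℕ) (B : ℤ) (p : ℕ → ℤ[X]) : Prop :=
  ∀ κ, (p κ).natDegree ≤ J ∧ ∀ j, |(p κ).coeff j| ≤ B

lemma abs_coeff_mul_le {δ : ℕ} {h B : ℤ} {f p : ℤ[X]} (hf : f.natDegree ≤ δ)
    (hf' : ∀ j, |f.coeff j| ≤ h) (hp : ∀ j, |p.coeff j| ≤ B) (n : ℕ) :
    |(f * p).coeff n| ≤ (δ + 1) * h * B := by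
  have h0 : 0 ≤ h := (abs_nonneg _).trans (hf' 0)
  have hB : 0 ≤ B := (abs_nonneg _).trans (hp 0)
  conv_lhs => rw [f.as_sum_range_C_mul_X_pow' (n := δ + 1) (by omega)]
  rw [Finset.sum_mul, finsetSum_coeff]
  refine (Finset.abs_sum_le_sum_abs _ _).trans ?_
  refine (Finset.sum_le_card_nsmul _ _ (h * B) fun i _ => ?_).trans ?_
  · rw [mul_assoc, coeff_C_mul, abs_mul, coeff_X_pow_mul']
    refine mul_le_mul (hf' i) ?_ (abs_nonneg _) h0
    split_ifs
    · exact hp _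
    · simpa using hB
  · rw [Finset.card_range, nsmul_eq_mul]
    exact le_of_eq (by push_cast; ring)

/-- Pseudo-division: if `y` is a root of a polynomial of degree `d` with coefficients in `ℤ[x]` and
leading coefficient `g`, then `g ^ W x ^ j y ^ k`, for `j + k ≤ W`, is a `ℤ[x]`-combination of
`1, y, …, y ^ (d - 1)` with controlled degrees and heights. -/
lemma exists_reduction (x y : ℝ) (d : ℕ) (hd : 1 ≤ d) (G : ℕ → ℤ[X])
    (hG : ∑ i ∈ Finset.range (d + 1), aeval x (G i) * y ^ i = 0) :
    ∃ δ c : ℕ, ∀ W j k, j + k ≤ W → ∃ p, Bd (δ * W) ((c : ℤ) ^ W) p ∧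
      aeval x (G d) ^ W * (x ^ j * y ^ k) = ∑ κ ∈ Finset.range d, aeval x (p κ) * y ^ κ := by
  obtain ⟨δ, hδ⟩ : ∃ δ, ∀ i ≤ d, (G i).natDegree ≤ δ :=
    ⟨∑ i ∈ Finset.range (d + 1), (G i).natDegree, fun i hi =>
      Finset.single_le_sum (f := fun i => (G i).natDegree) (fun _ _ => Nat.zero_le _)
        (Finset.mem_range.mpr (by omega))⟩
  obtain ⟨h, hh⟩ : ∃ h : ℕ, ∀ i ≤ d, ∀ j, |(G i).coeff j| ≤ (h : ℤ) := by
    refine ⟨∑ i ∈ Finset.range (d + 1), ∑ j ∈ Finset.range (δ + 1), (|(G i).coeff j|).toNat,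
      fun i hi j => ?_⟩
    have h1 : |(G i).coeff j| = ((|(G i).coeff j|).toNat : ℤ) :=
      (Int.toNat_of_nonneg (abs_nonneg _)).symm
    rw [h1]
    by_cases hj : j ≤ δ
    · have h2 : (|(G i).coeff j|).toNat ≤ ∑ j ∈ Finset.range (δ + 1), (|(G i).coeff j|).toNat :=
        Finset.single_le_sum (f := fun j => (|(G i).coeff j|).toNat) (fun _ _ => Nat.zero_le _)
          (Finset.mem_range.mpr (by omega))
      have h3 := Finset.single_le_sum
        (f := fun i => ∑ j ∈ Finset.range (δ + 1), (|(G i).coeff j|).toNat)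
        (s := Finset.range (d + 1)) (fun _ _ => Nat.zero_le _) (Finset.mem_range.mpr (by omega :
          i < d + 1))
      exact_mod_cast h2.trans h3
    · rw [coeff_eq_zero_of_natDegree_lt (by have := hδ i hi; omega)]; simp; positivity
  let vl : (ℕ → ℤ[X]) → ℝ := fun p => ∑ κ ∈ Finset.range d, aeval x (p κ) * y ^ κ
  let c : ℕ := 2 * ((δ + 1) * h) + 1
  have hB0 : ∀ {J B p}, Bd J B p → 0 ≤ B := fun hp => (abs_nonneg _).trans ((hp 0).2 0)
  have hmono : ∀ {J J' : ℕ} {B B' : ℤ} {p}, Bd J B p → J ≤ J' → B ≤ B' → Bd J' B' p :=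
    fun hp h1 h2 κ => ⟨(hp κ).1.trans h1, fun j => ((hp κ).2 j).trans h2⟩
  -- multiplication by `x`
  have stepx : ∀ J B p, Bd J B p → ∃ p', Bd (J + 1) B p' ∧ vl p' = x * vl p := by
    intro J B p hp
    refine ⟨fun κ => X * p κ, fun κ => ⟨?_, fun j => ?_⟩, ?_⟩
    · refine natDegree_mul_le.trans ?_
      have := (hp κ).1
      have := natDegree_X_le (R := ℤ)
      omega
    · cases j with
      | zero => rw [mul_coeff_zero, coeff_X_zero, zero_mul, abs_zero]; exact hB0 hp
      | succ j => rw [coeff_X_mul]; exact (hp κ).2 j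
    · simp only [vl, map_mul, aeval_X, Finset.mul_sum, mul_assoc]
  -- multiplication by `g`
  have stepg : ∀ J B p, Bd J B p → ∃ p', Bd (J + δ) (c * B) p' ∧
      vl p' = aeval x (G d) * vl p := by
    intro J B p hp
    refine ⟨fun κ => G d * p κ, fun κ => ⟨?_, fun j => ?_⟩, ?_⟩
    · refine natDegree_mul_le.trans ?_
      have := (hp κ).1
      have := hδ d le_rfl
      omega
    · refine (abs_coeff_mul_le (hδ d le_rfl) (hh d le_rfl) (hp κ).2 j).trans ?_
      have := hB0 hp
      refine mul_le_mul_of_nonneg_right ?_ this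
      simp only [c]; push_cast
      nlinarith [mul_nonneg (Int.natCast_nonneg δ) (Int.natCast_nonneg h), Int.natCast_nonneg h]
    · simp only [vl, map_mul, Finset.mul_sum, mul_assoc]
  -- multiplication by `g * y`
  have stepy : ∀ J B p, Bd J B p → ∃ p', Bd (J + δ) (c * B) p' ∧
      vl p' = aeval x (G d) * y * vl p := by
    intro J B p hp
    have hB := hB0 hp
    let sh : ℕ → ℤ[X] := fun κ => if κ = 0 then 0 else p (κ - 1)
    have hsh : Bd J B sh := by
      intro κ
      by_cases h0 : κ = 0
      · simp [sh, h0, hB]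
      · simp only [sh, h0, if_false]; exact hp _
    refine ⟨fun κ => if κ ≤ d then G d * sh κ - G κ * p (d - 1) else 0,
      fun κ => ⟨?_, fun j => ?_⟩, ?_⟩
    · dsimp only
      split_ifs with hκ
      · refine (natDegree_sub_le_of_le (m := J + δ) (n := J + δ) ?_ ?_).trans (by simp)
        · refine natDegree_mul_le.trans ?_
          have := (hsh κ).1
          have := hδ d le_rfl
          omega
        · refine natDegree_mul_le.trans ?_
          have := (hp (d - 1)).1
          have := hδ κ hκ
          omega
      · simp
    · dsimp only
      split_ifs with hκ
      · rw [coeff_sub]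
        refine (abs_sub _ _).trans ?_
        have h1 := abs_coeff_mul_le (hδ d le_rfl) (hh d le_rfl) (hsh κ).2 j
        have h2 := abs_coeff_mul_le (hδ κ hκ) (hh κ hκ) (hp (d - 1)).2 j
        simp only [c]; push_cast
        linarith
      · rw [coeff_zero, abs_zero]; positivity
    · obtain ⟨e, rfl⟩ : ∃ e, d = e + 1 := ⟨d - 1, by omega⟩
      have h1 : vl (fun κ => if κ ≤ e + 1 then G (e + 1) * sh κ - G κ * p (e + 1 - 1) else 0)
          = ∑ κ ∈ Finset.range (e + 1), (aeval x (G (e + 1)) * aeval x (sh κ) * y ^ κ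
              - aeval x (p e) * (aeval x (G κ) * y ^ κ)) := by
        refine Finset.sum_congr rfl fun κ hκ => ?_
        dsimp only
        rw [if_pos (by have := Finset.mem_range.mp hκ; omega)]
        simp only [map_sub, map_mul, Nat.add_sub_cancel]
        ring
      rw [h1, Finset.sum_sub_distrib, ← Finset.mul_sum, Finset.sum_range_succ' _ e]
      rw [Finset.sum_range_succ] at hG
      have h2 : ∑ κ ∈ Finset.range (e + 1), aeval x (G κ) * y ^ κ
          = - (aeval x (G (e + 1)) * y ^ (e + 1)) := by linarith
      rw [h2]
      simp only [vl, sh, Nat.add_sub_cancel, if_true, map_zero, mul_zero, zero_mul, add_zero,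
        Nat.succ_ne_zero, if_false]
      rw [Finset.sum_range_succ _ e, mul_add, Finset.mul_sum]
      have h3 : ∀ i ∈ Finset.range e, aeval x (G (e + 1)) * aeval x (p i) * y ^ (i + 1)
          = aeval x (G (e + 1)) * y * (aeval x (p i) * y ^ i) := fun i _ => by ring
      rw [Finset.sum_congr rfl h3]
      ring
  refine ⟨δ + 1, c, fun W j k hjk => ?_⟩
  have base : ∃ p, Bd 0 1 p ∧ vl p = 1 := by
    refine ⟨fun κ => if κ = 0 then 1 else 0, fun κ => ⟨?_, fun j => ?_⟩, ?_⟩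
    · dsimp only; split_ifs <;> simp
    · dsimp only; split_ifs
      · rw [coeff_one]; split_ifs <;> simp
      · simp
    · simp only [vl]
      rw [Finset.sum_eq_single 0]
      · simp
      · intro κ _ hκ; simp [hκ]
      · intro h; simp at h; omega
  have hx : ∀ j, ∃ p, Bd j 1 p ∧ vl p = x ^ j := by
    intro j
    induction j with
    | zero => simpa using base
    | succ j ih =>
      obtain ⟨p, hp, hv⟩ := ih
      obtain ⟨p', hp', hv'⟩ := stepx _ _ _ hp
      exact ⟨p', hp', by rw [hv', hv]; ring⟩
  have hy : ∀ k, ∃ p, Bd (j + δ * k) ((c : ℤ) ^ k) p ∧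
      vl p = (aeval x (G d)) ^ k * (x ^ j * y ^ k) := by
    intro k
    induction k with
    | zero => simpa using hx j
    | succ k ih =>
      obtain ⟨p, hp, hv⟩ := ih
      obtain ⟨p', hp', hv'⟩ := stepy _ _ _ hp
      exact ⟨p', hmono hp' (le_of_eq (by ring)) (le_of_eq (by ring)), by rw [hv', hv]; ring⟩
  have hg : ∀ m, ∃ p, Bd (j + δ * (k + m)) ((c : ℤ) ^ (k + m)) p ∧
      vl p = (aeval x (G d)) ^ (k + m) * (x ^ j * y ^ k) := by
    intro m
    induction m with
    | zero => simpa using hy k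
    | succ m ih =>
      obtain ⟨p, hp, hv⟩ := ih
      obtain ⟨p', hp', hv'⟩ := stepg _ _ _ hp
      exact ⟨p', hmono hp' (le_of_eq (by ring)) (le_of_eq (by ring)), by rw [hv', hv]; ring⟩
  obtain ⟨p, hp, hv⟩ := hg (W - k)
  rw [show k + (W - k) = W by omega] at hp hv
  exact ⟨p, hmono hp (by rw [add_mul]; omega) le_rfl, hv.symm⟩

lemma q0_pow_eq (l : ℕ) : ∃ u v : ℤ, |u| ≤ 4 ^ l ∧ |v| ≤ 4 ^ l ∧ q0 ^ l = u + v * q0 := by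
  induction l with
  | zero => exact ⟨1, 0, by simp, by simp, by simp⟩
  | succ l ih =>
    obtain ⟨u, v, hu, hv, h⟩ := ih
    refine ⟨-v, u + 3 * v, ?_, ?_, ?_⟩
    · rw [abs_neg, pow_succ]
      have := abs_nonneg v
      linarith
    · rw [pow_succ]
      rw [abs_le] at *
      constructor <;> linarith
    · rw [pow_succ, h]
      push_cast
      linear_combination (v : ℝ) * q0_sq

/-- The monomials `q₀ ^ l P₀ ^ i x ^ j y ^ k` with `i + j + k ≤ W` are, up to the common factor
`g ^ W`, integral combinations with controlled coefficients of `O(W ^ 2)` real numbers. -/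
lemma exists_span (P0 x y : ℝ) (d : ℕ) (hd : 1 ≤ d) (G : ℕ → ℤ[X])
    (hG : ∑ i ∈ Finset.range (d + 1), aeval x (G i) * y ^ i = 0) :
    ∃ δ c : ℕ, ∀ W, ∃ e : Fin 2 × Fin (W + 1) × Fin (δ * W + 1) × Fin d → ℝ,
      ∀ l i j k, i + j + k ≤ W → ∃ z : Fin 2 × Fin (W + 1) × Fin (δ * W + 1) × Fin d → ℤ,
        (∀ s, |z s| ≤ 4 ^ l * c ^ W) ∧
        aeval x (G d) ^ W * (q0 ^ l * (P0 ^ i * x ^ j * y ^ k)) = ∑ s, (z s : ℝ) * e s := by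
  obtain ⟨δ, c, h⟩ := exists_reduction x y d hd G hG
  refine ⟨δ, c, fun W => ⟨fun s => q0 ^ (s.1 : ℕ) * (P0 ^ (s.2.1 : ℕ) *
    (x ^ (s.2.2.1 : ℕ) * y ^ (s.2.2.2 : ℕ))), fun l i j k hW => ?_⟩⟩
  obtain ⟨p, hp, hv⟩ := h W j k (by omega)
  obtain ⟨u, v, hu, hv', hq⟩ := q0_pow_eq l
  refine ⟨fun s => (if (s.1 : ℕ) = 0 then u else v) * ((if (s.2.1 : ℕ) = i then 1 else 0) *
    (p s.2.2.2).coeff (s.2.2.1 : ℕ)), fun s => ?_, ?_⟩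
  · rw [abs_mul]
    refine mul_le_mul ?_ ?_ (abs_nonneg _) (by positivity)
    · split_ifs <;> assumption
    · rw [abs_mul]
      have h1 := (hp s.2.2.2).2 (s.2.2.1 : ℕ)
      have h2 := abs_nonneg ((p s.2.2.2).coeff (s.2.2.1 : ℕ))
      split_ifs
      · simpa using h1
      · simpa using h2.trans h1
  · have e1 : ∑ a : Fin 2, (((if (a : ℕ) = 0 then u else v : ℤ) : ℝ)) * q0 ^ (a : ℕ) = q0 ^ l := by
      rw [Fin.sum_univ_two, hq]; simp
    have e2 : ∑ a : Fin (W + 1), (((if (a : ℕ) = i then 1 else 0 : ℤ) : ℝ)) * P0 ^ (a : ℕ)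
        = P0 ^ i := by
      rw [Finset.sum_eq_single (⟨i, by omega⟩ : Fin (W + 1))]
      · simp
      · intro b _ hb
        rw [if_neg (fun h => hb (Fin.ext h))]; simp
      · simp
    have e3 : ∑ a : Fin (δ * W + 1), ∑ b : Fin d, ((p b).coeff (a : ℕ) : ℝ) *
        (x ^ (a : ℕ) * y ^ (b : ℕ)) = ∑ κ ∈ Finset.range d, aeval x (p κ) * y ^ κ := by
      rw [Finset.sum_comm, Finset.sum_range]
      refine Finset.sum_congr rfl fun b _ => ?_
      rw [aeval_eq_sum_range' (n := δ * W + 1) (by have := (hp b).1; omega), Finset.sum_mul,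
        Finset.sum_range]
      refine Finset.sum_congr rfl fun a _ => ?_
      rw [zsmul_eq_mul]; ring
    calc _ = q0 ^ l * (P0 ^ i * (aeval x (G d) ^ W * (x ^ j * y ^ k))) := by ring
      _ = _ := by
        rw [hv, ← e3, ← e2, ← e1]
        simp only [Fintype.sum_prod_type]
        rw [Finset.sum_mul]
        refine Finset.sum_congr rfl fun a _ => ?_
        rw [Finset.sum_mul, Finset.mul_sum]
        refine Finset.sum_congr rfl fun b _ => ?_
        rw [Finset.mul_sum, Finset.mul_sum]
        refine Finset.sum_congr rfl fun f _ => ?_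
        rw [Finset.mul_sum, Finset.mul_sum]
        refine Finset.sum_congr rfl fun t _ => ?_
        push_cast
        ring

end Span

end FibTheta

namespace FibTheta
open PowerSeries

/-! ### Derivatives of monomials and the auxiliary function -/

/-- `Cmb l w B f`: the series `f` is an integral combination of the monomials
`q ^ l P ^ i a ^ j b ^ k` with `i + j + k ≤ w`, the absolute values of the coefficients summing to
at most `B`. -/
inductive Cmb (l w : ℕ) : ℤ → ℤ⟦X⟧ → Prop
  | zero : Cmb l w 0 0
  | term {B f} (c : ℤ) (i j k : ℕ) (h : i + j + k ≤ w) (hf : Cmb l w B f) :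
      Cmb l w (|c| + B) (C c * (X ^ l * (sP ^ i * sa ^ j * sb ^ k)) + f)
  | mono {B B' f} (h : B ≤ B') (hf : Cmb l w B f) : Cmb l w B' f

lemma Cmb.weight {l w w' : ℕ} {B : ℤ} {f : ℤ⟦X⟧} (hf : Cmb l w B f) (h : w ≤ w') :
    Cmb l w' B f := by
  induction hf with
  | zero => exact .zero
  | term c i j k h' _ ih => exact .term c i j k (h'.trans h) ih
  | mono h' _ ih => exact .mono h' ih

lemma Cmb.single {l w : ℕ} (i j k : ℕ) (h : i + j + k ≤ w) :
    Cmb l w 1 (X ^ l * (sP ^ i * sa ^ j * sb ^ k)) := by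
  simpa using Cmb.term (l := l) 1 i j k h .zero

lemma Cmb.add {l w : ℕ} {B B' : ℤ} {f g : ℤ⟦X⟧} (hf : Cmb l w B f) (hg : Cmb l w B' g) :
    Cmb l w (B + B') (f + g) := by
  induction hf with
  | zero => simpa using hg
  | term c i j k h' _ ih =>
    rw [add_assoc, add_assoc]
    exact .term c i j k h' ih
  | mono h' _ ih => exact .mono (by linarith) ih

lemma Cmb.smul {l w : ℕ} {B : ℤ} {f : ℤ⟦X⟧} (c : ℤ) (hf : Cmb l w B f) :
    Cmb l w (|c| * B) (C c * f) := by
  induction hf with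
  | zero => simpa using Cmb.zero
  | term c' i j k h' _ ih =>
    have := Cmb.term (c * c') i j k h' ih
    rw [map_mul, abs_mul] at this
    convert this using 1 <;> ring
  | mono h' _ ih => exact .mono (mul_le_mul_of_nonneg_left h' (abs_nonneg _)) ih

lemma six_qD_sP_pow (i : ℕ) :
    6 * qD (sP ^ i) = (i : ℤ⟦X⟧) * sP ^ (i - 1) * (sP ^ 2 - sa ^ 2 - sa * sb - sb ^ 2) := by
  cases i with
  | zero => simp [qD_one]
  | succ i =>
    rw [qD_pow, ← qD_sP, Nat.add_sub_cancel]; push_cast; ring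

lemma six_qD_sa_pow (j : ℕ) :
    6 * qD (sa ^ j) = 2 * (j : ℤ⟦X⟧) * sa ^ j * (sP + sa + 2 * sb) := by
  cases j with
  | zero => simp [qD_one]
  | succ i =>
    rw [qD_pow]
    push_cast
    linear_combination (2 * ((i : ℤ⟦X⟧) + 1) * sa ^ i) * qD_sa

lemma six_qD_sb_pow (k : ℕ) :
    6 * qD (sb ^ k) = 2 * (k : ℤ⟦X⟧) * sb ^ k * (sP - 2 * sa - sb) := by
  cases k with
  | zero => simp [qD_one]
  | succ i =>
    rw [qD_pow]
    push_cast
    linear_combination (2 * ((i : ℤ⟦X⟧) + 1) * sb ^ i) * qD_sb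

lemma Cmb.deriv_mono {l w : ℕ} (i j k : ℕ) (h : i + j + k ≤ w) :
    Cmb l (w + 1) (6 * l + 8 * w) (6 * qD (X ^ l * (sP ^ i * sa ^ j * sb ^ k))) := by
  -- the contribution of `P ^ i`, where `i - 1` is only meaningful for `i ≠ 0`
  have hP : Cmb l (w + 1) (4 * i) (X ^ l * (6 * qD (sP ^ i) * sa ^ j * sb ^ k)) := by
    rw [six_qD_sP_pow]
    rcases Nat.eq_zero_or_pos i with rfl | hi
    · simpa using Cmb.zero
    obtain ⟨m, rfl⟩ : ∃ m, i = m + 1 := ⟨i - 1, by omega⟩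
    rw [Nat.add_sub_cancel]
    have := (((Cmb.single (l := l) (w := w + 1) (m + 2) j k (by omega)).add
      ((Cmb.single m (j + 2) k (by omega)).smul (-1))).add
      ((Cmb.single m (j + 1) (k + 1) (by omega)).smul (-1))).add
      ((Cmb.single m j (k + 2) (by omega)).smul (-1))
    have := this.smul ((m + 1 : ℕ) : ℤ)
    convert this using 1
    · rw [Nat.abs_cast]; simp; ring
    · simp only [map_neg, map_one, map_natCast]; ring
  have h1 := (Cmb.single (l := l) (w := w + 1) (i + 1) j k (by omega))
  have h2 := (Cmb.single (l := l) (w := w + 1) i (j + 1) k (by omega))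
  have h3 := (Cmb.single (l := l) (w := w + 1) i j (k + 1) (by omega))
  have ha := ((h1.add h2).add (h3.smul 2)).smul (2 * j : ℤ)
  have hb := ((h1.add (h2.smul (-2))).add (h3.smul (-1))).smul (2 * k : ℤ)
  have h0 := (Cmb.single (l := l) (w := w + 1) i j k (by omega)).smul (6 * l : ℤ)
  have hs := ((h0.add hP).add ha).add hb
  have hc : (i : ℤ) + j + k ≤ w := by exact_mod_cast h
  refine Cmb.mono ?_ (?_ : Cmb l (w + 1) (6 * l + 4 * i + 8 * j + 8 * k) _)
  · have := Int.natCast_nonneg i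
    linarith
  · convert hs using 1
    · simp only [abs_mul, Nat.abs_cast, abs_neg, abs_one, Nat.abs_ofNat]; ring
    · rw [qD_mul, qD_mul, qD_mul, qD_X_pow]
      simp only [map_neg, map_one, map_natCast, map_mul, map_ofNat]
      linear_combination (X ^ l * sP ^ i * sb ^ k) * six_qD_sa_pow j +
        (X ^ l * sP ^ i * sa ^ j) * six_qD_sb_pow k

lemma Cmb.deriv {l w : ℕ} {B : ℤ} {f : ℤ⟦X⟧} (hf : Cmb l w B f) :
    Cmb l (w + 1) ((6 * l + 8 * w) * B) (6 * qD f) := by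
  induction hf with
  | zero => simpa [qD_zero] using Cmb.zero
  | term c i j k h' _ ih =>
    have := ((Cmb.deriv_mono (l := l) i j k h').smul c).add ih
    rw [qD_add, qD_C_mul]
    convert this using 1 <;> ring
  | mono h' _ ih => exact .mono (mul_le_mul_of_nonneg_left h' (by positivity)) ih

lemma Cmb.nonneg {l w : ℕ} {B : ℤ} {f : ℤ⟦X⟧} (hf : Cmb l w B f) : 0 ≤ B := by
  induction hf with
  | zero => exact le_rfl
  | term c i j k h' _ ih => positivity
  | mono h' _ ih => exact ih.trans h'

lemma Cmb.iterate {l w W : ℕ} (i j k : ℕ) (h : i + j + k ≤ w) (t : ℕ) (ht : w + t ≤ W) :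
    Cmb l (w + t) ((6 * l + 8 * W) ^ t)
      ((fun f : ℤ⟦X⟧ => 6 * qD f)^[t] (X ^ l * (sP ^ i * sa ^ j * sb ^ k))) := by
  induction t with
  | zero => simpa using Cmb.single (l := l) i j k h
  | succ t ih =>
    rw [Function.iterate_succ_apply', pow_succ']
    refine Cmb.mono ?_ (ih (by omega)).deriv
    have : ((w + t : ℕ) : ℤ) ≤ W := by exact_mod_cast (by omega : w + t ≤ W)
    gcongr

lemma toR_iterate (t : ℕ) (f : ℤ⟦X⟧) :
    toR ((fun f : ℤ⟦X⟧ => 6 * qD f)^[t] f) = (fun f : ℝ⟦X⟧ => 6 * qD f)^[t] (toR f) := by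
  induction t generalizing f with
  | zero => rfl
  | succ t ih => rw [Function.iterate_succ_apply, ih, map_mul, ← qD_map, map_ofNat]; rfl

lemma iterate_sum {ι : Type*} (s : Finset ι) (c : ι → ℤ) (f : ι → ℤ⟦X⟧) (t : ℕ) :
    (fun f : ℤ⟦X⟧ => 6 * qD f)^[t] (∑ x ∈ s, C (c x) * f x)
      = ∑ x ∈ s, C (c x) * (fun f : ℤ⟦X⟧ => 6 * qD f)^[t] (f x) := by
  induction t with
  | zero => rfl
  | succ t ih =>
    simp only [Function.iterate_succ_apply', ih, qD_sum, qD_C_mul, Finset.mul_sum]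
    exact Finset.sum_congr rfl fun x _ => by ring

/-- The value `a(q₀)`. -/
def a0 : ℝ := val q0 (toR sa)

/-- The value `b(q₀)`. -/
def b0 : ℝ := val q0 (toR sb)

/-- The value `P(q₀)`. -/
def P0 : ℝ := val q0 (toR sP)

lemma val_mono (l i j k : ℕ) : val q0 (toR (X ^ l * (sP ^ i * sa ^ j * sb ^ k)))
    = q0 ^ l * (P0 ^ i * a0 ^ j * b0 ^ k) := by
  have hl := pow_mem X_mem_good l
  have hP := pow_mem Dm_sP.good i
  have ha := pow_mem Dm_sa.good j
  have hb := pow_mem Dm_sb.good k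
  have z := q0_pos.le
  have o := q0_lt_one
  simp only [map_mul, map_pow, PowerSeries.map_X]
  rw [val_mul z o hl (mul_mem (mul_mem hP ha) hb), val_mul z o (mul_mem hP ha) hb,
    val_mul z o hP ha, val_pow z o X_mem_good, val_pow z o Dm_sP.good, val_pow z o Dm_sa.good,
    val_pow z o Dm_sb.good, val_X]
  rfl

lemma mono_good (l i j k : ℕ) : toR (X ^ l * (sP ^ i * sa ^ j * sb ^ k)) ∈ good :=
  (Dm_mono l i j k).good

lemma Cmb.good {l w : ℕ} {B : ℤ} {f : ℤ⟦X⟧} (hf : Cmb l w B f) : toR f ∈ good := by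
  induction hf with
  | zero => rw [map_zero]; exact zero_mem _
  | term c i j k h' _ ih =>
    rw [map_add, map_mul, PowerSeries.map_C]
    exact add_mem (mul_mem (C_mem_good _) (mono_good _ _ _ _)) ih
  | mono h' _ ih => exact ih

/-- Values of integral combinations of monomials inherit integral representations. -/
lemma Cmb.repr {S : Type*} [Fintype S] {l W : ℕ} {E : ℤ} {g : ℝ} (e : S → ℝ)
    (hspan : ∀ i j k, i + j + k ≤ W → ∃ z : S → ℤ, (∀ s, |z s| ≤ E) ∧
        g * (q0 ^ l * (P0 ^ i * a0 ^ j * b0 ^ k)) = ∑ s, (z s : ℝ) * e s)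
    {B : ℤ} {f : ℤ⟦X⟧} (hf : Cmb l W B f) (hE : 0 ≤ E) :
    ∃ z : S → ℤ, (∀ s, |z s| ≤ B * E) ∧ g * val q0 (toR f) = ∑ s, (z s : ℝ) * e s := by
  induction hf with
  | zero => exact ⟨0, by simp, by simpa using Or.inr (val_C (r := q0) 0)⟩
  | term c i j k h' hf ih =>
    obtain ⟨z, hz, hv⟩ := ih
    obtain ⟨z', hz', hv'⟩ := hspan i j k h'
    refine ⟨fun s => c * z' s + z s, fun s => ?_, ?_⟩
    · rw [add_mul]
      refine (abs_add_le _ _).trans (add_le_add ?_ (hz s))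
      rw [abs_mul]
      exact mul_le_mul_of_nonneg_left (hz' s) (abs_nonneg _)
    · rw [map_add, val_add q0_pos.le q0_lt_one (by
          rw [map_mul, PowerSeries.map_C]; exact mul_mem (C_mem_good _) (mono_good _ _ _ _)) hf.good,
        map_mul toR, PowerSeries.map_C, val_mul q0_pos.le q0_lt_one (C_mem_good _)
          (mono_good _ _ _ _), val_C, val_mono, mul_add, hv, eq_intCast,
        mul_left_comm, hv', Finset.mul_sum, ← Finset.sum_add_distrib]
      refine Finset.sum_congr rfl fun s _ => ?_
      push_cast; ring
  | mono h' _ ih =>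
    obtain ⟨z, hz, hv⟩ := ih
    exact ⟨z, fun s => (hz s).trans (mul_le_mul_of_nonneg_right h' hE), hv⟩

/-- Siegel's lemma produces a nonzero auxiliary function with a zero of order `T` at `q₀`. -/
theorem exists_aux {S : Type*} [Fintype S] [Nonempty S] {L N T : ℕ} {c : ℕ} {g : ℝ} (hg : g ≠ 0)
    (e : S → ℝ)
    (hspan : ∀ l i j k, i + j + k ≤ 3 * N + T → ∃ z : S → ℤ,
      (∀ s, |z s| ≤ 4 ^ l * c ^ (3 * N + T)) ∧
        g * (q0 ^ l * (P0 ^ i * a0 ^ j * b0 ^ k)) = ∑ s, (z s : ℝ) * e s)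
    (hT : 0 < T) (hc : T * Fintype.card S < L * N ^ 3) :
    ∃ A : Fin L × Fin N × Fin N × Fin N → ℤ, A ≠ 0 ∧
      (∀ x, |(A x : ℝ)| ≤ ((L * N ^ 3) *
        max 1 ((6 * L + 8 * (3 * N + T)) ^ T * (4 ^ L * c ^ (3 * N + T)))) ^
          ((T * Fintype.card S : ℝ) / (L * N ^ 3 - T * Fintype.card S))) ∧
      ∀ t < T, val q0 ((fun f : ℝ⟦X⟧ => 6 * qD f)^[t] (toR (auxF A))) = 0 := by
  set W := 3 * N + T with hW
  have hrep : ∀ (t : Fin T) (x : Fin L × Fin N × Fin N × Fin N), ∃ z : S → ℤ,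
      (∀ s, |z s| ≤ (6 * L + 8 * W) ^ T * (4 ^ L * c ^ W)) ∧
      g * val q0 (toR ((fun f : ℤ⟦X⟧ => 6 * qD f)^[(t : ℕ)] (X ^ (x.1 : ℕ) *
        (sP ^ (x.2.1 : ℕ) * sa ^ (x.2.2.1 : ℕ) * sb ^ (x.2.2.2 : ℕ)))))
        = ∑ s, (z s : ℝ) * e s := by
    intro t x
    have h1 := Cmb.iterate (l := x.1) (w := 3 * N) (W := W) x.2.1 x.2.2.1 x.2.2.2 (by omega) t
      (by omega)
    obtain ⟨z, hz, hv⟩ := Cmb.repr e (fun i j k h => hspan (x.1 : ℕ) i j k h)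
      (h1.weight (by omega)) (by positivity)
    refine ⟨z, fun s => (hz s).trans ?_, hv⟩
    have hl : ((x.1 : ℕ) : ℤ) ≤ L := by exact_mod_cast x.1.2.le
    have hL1 : (1 : ℤ) ≤ L := by exact_mod_cast (by have := x.1.2; omega : 1 ≤ L)
    have hW0 : (0 : ℤ) ≤ W := Int.natCast_nonneg _
    refine mul_le_mul ?_ ?_ (by positivity) (by positivity)
    · calc (6 * ((x.1 : ℕ) : ℤ) + 8 * W) ^ (t : ℕ) ≤ (6 * L + 8 * W) ^ (t : ℕ) := by gcongr
        _ ≤ _ := pow_le_pow_right₀ (by linarith) t.2.le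
    · refine mul_le_mul_of_nonneg_right (pow_le_pow_right₀ (by norm_num) x.1.2.le) (by positivity)
  choose z hz hv using hrep
  let Mt : Matrix (Fin T × S) (Fin L × Fin N × Fin N × Fin N) ℤ := Matrix.of fun p x => z p.1 x p.2
  have hcard1 : Fintype.card (Fin T × S) = T * Fintype.card S := by simp
  have hcard2 : Fintype.card (Fin L × Fin N × Fin N × Fin N) = L * N ^ 3 := by
    simp only [Fintype.card_prod, Fintype.card_fin]; ring
  obtain ⟨A, hA0, hA, hAn⟩ := Int.Matrix.exists_ne_zero_int_vec_norm_le Mt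
    (by rw [hcard1, hcard2]; exact hc)
    (by rw [hcard1]; exact Nat.mul_pos hT Fintype.card_pos)
  refine ⟨A, hA0, fun x => ?_, fun t ht => ?_⟩
  · have h1 : |(A x : ℝ)| ≤ ‖A‖ := by
      have := norm_le_pi_norm A x
      rwa [Int.norm_eq_abs] at this
    refine h1.trans (hAn.trans ?_)
    rw [hcard1, hcard2]
    push_cast
    have hpos : (0 : ℝ) < L * N ^ 3 - T * Fintype.card S := by
      have : ((T * Fintype.card S : ℕ) : ℝ) < ((L * N ^ 3 : ℕ) : ℝ) := by exact_mod_cast hc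
      push_cast at this
      linarith
    refine Real.rpow_le_rpow (by positivity) ?_ (by positivity)
    refine mul_le_mul_of_nonneg_left (max_le_max le_rfl ?_) (by positivity)
    refine (Matrix.norm_le_iff (by positivity)).mpr fun p x => ?_
    rw [Int.norm_eq_abs]
    have := hz p.1 x p.2
    have h2 : ((|Mt p x| : ℤ) : ℝ) ≤ ((6 * L + 8 * W) ^ T * (4 ^ L * c ^ W) : ℤ) := by
      exact_mod_cast this
    push_cast at h2
    simpa [hW] using h2
  · rw [← toR_iterate, auxF, iterate_sum, map_sum, val_sum q0_pos.le q0_lt_one]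
    · apply mul_left_cancel₀ hg
      rw [mul_zero, Finset.mul_sum]
      have h1 : ∀ x : Fin L × Fin N × Fin N × Fin N,
          g * val q0 (toR (C (A x) * (fun f : ℤ⟦X⟧ => 6 * qD f)^[t] (X ^ (x.1 : ℕ) *
            (sP ^ (x.2.1 : ℕ) * sa ^ (x.2.2.1 : ℕ) * sb ^ (x.2.2.2 : ℕ)))))
          = ∑ s, ((z ⟨t, ht⟩ x s * A x : ℤ) : ℝ) * e s := by
        intro x
        have hc := (Cmb.iterate (l := x.1) (w := 3 * N) (W := W) x.2.1 x.2.2.1 x.2.2.2 (by omega) t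
          (by omega)).good
        have h2 := hv ⟨t, ht⟩ x
        rw [map_mul toR, PowerSeries.map_C, val_mul q0_pos.le q0_lt_one (C_mem_good _) hc, val_C,
          eq_intCast, mul_left_comm, h2, Finset.mul_sum]
        refine Finset.sum_congr rfl fun s _ => ?_
        push_cast; ring
      rw [Finset.sum_congr rfl fun x _ => h1 x, Finset.sum_comm]
      refine Finset.sum_eq_zero fun s _ => ?_
      rw [← Finset.sum_mul, ← Int.cast_sum]
      have h3 := congrFun hA (⟨t, ht⟩, s)
      have h4 : ∑ x, z ⟨t, ht⟩ x s * A x = 0 := h3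
      rw [h4]; simp
    · intro x
      rw [map_mul toR, PowerSeries.map_C]
      exact mul_mem (C_mem_good _) (Cmb.iterate (l := x.1) (w := 3 * N) (W := W) x.2.1 x.2.2.1
        x.2.2.2 (by omega) t (by omega)).good

end FibTheta

namespace FibTheta
open PowerSeries

/-! ### Choice of parameters -/

/-- The bound supplied by Siegel's lemma for the parameters `N = s ^ 3`, `T = s ^ 4`, `L = s ^ 8`. -/
lemma siegel_height_le {s C c m : ℕ} (hs : 1 ≤ s) (hC : 2 * C ≤ s) (hm : m ≤ C * s ^ 12) :
    (((s : ℝ) ^ 8 * (s : ℝ) ^ 9) *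
        max 1 ((6 * (s : ℝ) ^ 8 + 8 * (3 * (s : ℝ) ^ 3 + (s : ℝ) ^ 4)) ^ (s ^ 4) *
          (4 ^ (s ^ 8) * (c : ℝ) ^ (3 * s ^ 3 + s ^ 4)))) ^
          ((m : ℝ) / ((s : ℝ) ^ 8 * (s : ℝ) ^ 9 - m))
      ≤ (((2 : ℝ) ^ 17 * (38 * 2 ^ 8) * (4 * (c + 1) ^ 4)) ^ (2 * C)) ^ (s ^ 3) := by
  have hs1 : (1 : ℝ) ≤ s := by exact_mod_cast hs
  have hpow : ∀ {i j : ℕ}, i ≤ j → (s : ℝ) ^ i ≤ (s : ℝ) ^ j := fun h => pow_le_pow_right₀ hs1 h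
  have hpowN : ∀ {i j : ℕ}, i ≤ j → s ^ i ≤ s ^ j := fun h => Nat.pow_le_pow_right hs h
  have h2s : (s : ℝ) ≤ 2 ^ s := by exact_mod_cast (Nat.lt_two_pow_self).le
  set K : ℝ := (2 : ℝ) ^ 17 * (38 * 2 ^ 8) * (4 * (c + 1) ^ 4) with hK
  have hc0 : (0 : ℝ) ≤ c := Nat.cast_nonneg c
  have hc1 : (1 : ℝ) ≤ (c + 1) ^ 4 := one_le_pow₀ (by linarith)
  have hK1 : 1 ≤ K := by rw [hK]; nlinarith
  have e1 : (s : ℝ) ^ 8 * (s : ℝ) ^ 9 ≤ (2 ^ 17) ^ (s ^ 8) := by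
    calc (s : ℝ) ^ 8 * (s : ℝ) ^ 9 = s ^ 17 := by ring
      _ ≤ (2 ^ s) ^ 17 := by gcongr
      _ = (2 ^ 17) ^ s := by rw [← pow_mul, ← pow_mul, mul_comm]
      _ ≤ _ := pow_le_pow_right₀ (by norm_num) (by simpa using hpowN (show 1 ≤ 8 by norm_num))
  have e2 : (6 * (s : ℝ) ^ 8 + 8 * (3 * (s : ℝ) ^ 3 + (s : ℝ) ^ 4)) ^ (s ^ 4)
      ≤ (38 * 2 ^ 8) ^ (s ^ 8) := by
    have : 6 * (s : ℝ) ^ 8 + 8 * (3 * (s : ℝ) ^ 3 + (s : ℝ) ^ 4) ≤ 38 * s ^ 8 := by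
      have h1 := hpow (show 3 ≤ 8 by norm_num)
      have h2 := hpow (show 4 ≤ 8 by norm_num)
      linarith
    calc (6 * (s : ℝ) ^ 8 + 8 * (3 * (s : ℝ) ^ 3 + (s : ℝ) ^ 4)) ^ (s ^ 4)
        ≤ (38 * s ^ 8) ^ (s ^ 4) := by gcongr
      _ ≤ (38 * (2 ^ s) ^ 8) ^ (s ^ 4) := by gcongr
      _ = 38 ^ (s ^ 4) * (2 ^ 8) ^ (s ^ 5) := by
          rw [mul_pow, ← pow_mul, ← pow_mul, ← pow_mul]
          congr 2; ring
      _ ≤ 38 ^ (s ^ 8) * (2 ^ 8) ^ (s ^ 8) := by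
          gcongr ?_ * ?_
          · exact pow_le_pow_right₀ (by norm_num) (hpowN (by norm_num))
          · exact pow_le_pow_right₀ (by norm_num) (hpowN (by norm_num))
      _ = _ := (mul_pow _ _ _).symm
  have e3 : (c : ℝ) ^ (3 * s ^ 3 + s ^ 4) ≤ ((c + 1) ^ 4) ^ (s ^ 8) := by
    calc (c : ℝ) ^ (3 * s ^ 3 + s ^ 4) ≤ ((c : ℝ) + 1) ^ (3 * s ^ 3 + s ^ 4) := by
          gcongr; linarith
      _ ≤ ((c : ℝ) + 1) ^ (4 * s ^ 8) := pow_le_pow_right₀ (by linarith) (by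
          have h1 := hpowN (show 3 ≤ 8 by norm_num)
          have h2 := hpowN (show 4 ≤ 8 by norm_num)
          omega)
      _ = _ := pow_mul _ _ _
  have hB : ((s : ℝ) ^ 8 * (s : ℝ) ^ 9) *
        max 1 ((6 * (s : ℝ) ^ 8 + 8 * (3 * (s : ℝ) ^ 3 + (s : ℝ) ^ 4)) ^ (s ^ 4) *
          (4 ^ (s ^ 8) * (c : ℝ) ^ (3 * s ^ 3 + s ^ 4))) ≤ K ^ (s ^ 8) := by
    rw [hK, mul_assoc ((2 : ℝ) ^ 17), mul_pow ((2 : ℝ) ^ 17)]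
    refine mul_le_mul e1 ?_ (by positivity) (by positivity)
    refine max_le (one_le_pow₀ (by nlinarith)) ?_
    rw [mul_pow (38 * 2 ^ 8 : ℝ), mul_pow (4 : ℝ)]
    gcongr
  have hB1 : 1 ≤ ((s : ℝ) ^ 8 * (s : ℝ) ^ 9) *
        max 1 ((6 * (s : ℝ) ^ 8 + 8 * (3 * (s : ℝ) ^ 3 + (s : ℝ) ^ 4)) ^ (s ^ 4) *
          (4 ^ (s ^ 8) * (c : ℝ) ^ (3 * s ^ 3 + s ^ 4))) :=
    one_le_mul_of_one_le_of_one_le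
      (one_le_mul_of_one_le_of_one_le (one_le_pow₀ hs1) (one_le_pow₀ hs1)) (le_max_left _ _)
  have hm' : (m : ℝ) ≤ C * s ^ 12 := by exact_mod_cast hm
  have hC' : 2 * (C : ℝ) ≤ s := by exact_mod_cast hC
  have hs12 : (0 : ℝ) < s ^ 12 := by positivity
  have hhalf : 2 * (m : ℝ) ≤ s ^ 17 := by
    calc 2 * (m : ℝ) ≤ (2 * C) * s ^ 12 := by linarith
      _ ≤ s * s ^ 12 := by gcongr
      _ = s ^ 13 := by ring
      _ ≤ _ := hpow (by norm_num)
  have hs17 : (s : ℝ) ^ 8 * (s : ℝ) ^ 9 = s ^ 17 := by ring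
  have hexp : (m : ℝ) / ((s : ℝ) ^ 8 * (s : ℝ) ^ 9 - m) ≤ 2 * C / s ^ 5 := by
    rw [hs17]
    have hp : (0 : ℝ) < s ^ 17 := by positivity
    rw [div_le_div_iff₀ (by linarith) (by positivity)]
    have : (s : ℝ) ^ 17 = s ^ 5 * s ^ 12 := by ring
    have h5 : (0 : ℝ) ≤ s ^ 5 := by positivity
    have hC0 : (0 : ℝ) ≤ C := Nat.cast_nonneg _
    calc (m : ℝ) * (s : ℝ) ^ 5 ≤ (C * (s : ℝ) ^ 12) * (s : ℝ) ^ 5 := by gcongr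
      _ = C * (s : ℝ) ^ 17 := by ring
      _ ≤ C * (2 * ((s : ℝ) ^ 17 - m)) := by gcongr; linarith
      _ = _ := by ring
  have hexp0 : (0 : ℝ) ≤ 2 * C / s ^ 5 := by positivity
  calc _ ≤ (((s : ℝ) ^ 8 * (s : ℝ) ^ 9) *
        max 1 ((6 * (s : ℝ) ^ 8 + 8 * (3 * (s : ℝ) ^ 3 + (s : ℝ) ^ 4)) ^ (s ^ 4) *
          (4 ^ (s ^ 8) * (c : ℝ) ^ (3 * s ^ 3 + s ^ 4)))) ^ (2 * (C : ℝ) / s ^ 5) :=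
        Real.rpow_le_rpow_of_exponent_le hB1 hexp
    _ ≤ (K ^ (s ^ 8)) ^ (2 * (C : ℝ) / s ^ 5) :=
        Real.rpow_le_rpow (by linarith) hB hexp0
    _ = _ := by
        rw [← Real.rpow_natCast K, ← Real.rpow_mul (by linarith), ← pow_mul,
          ← Real.rpow_natCast K]
        congr 1
        push_cast
        have : (s : ℝ) ≠ 0 := by positivity
        field_simp

/-- The right-hand side of the analytic estimate for `N = s ^ 3`, `L = s ^ 8` is of size
`s ^ O(s ^ 3)`. -/
lemma analytic_rhs_le {s : ℕ} (hs : 1 ≤ s) {H M : ℝ} (hM : 0 ≤ M) (hH : H ≤ M ^ (s ^ 3)) :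
    H * ((s ^ 8 : ℕ) * (s ^ 3 : ℕ) ^ 3) * 200 ^ (3 * s ^ 3) *
      ((((s ^ 8) ^ 2 + 48 * (s ^ 8 * (3 * s ^ 3 + s ^ 8) + 1) ^ 4 : ℕ) : ℝ) + 1) ^ (27 * s ^ 3 + 2) *
      (((27 * s ^ 3 + 2).factorial : ℝ) * 10 ^ (27 * s ^ 3 + 3))
      ≤ ((M * 2 ^ 17 * 200 ^ 3 * 30002 ^ 29 * 29 ^ 29 * 10 ^ 30) * (s : ℝ) ^ 1943) ^ (s ^ 3) := by
  have hs1 : (1 : ℝ) ≤ s := by exact_mod_cast hs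
  have hpow : ∀ {i j : ℕ}, i ≤ j → (s : ℝ) ^ i ≤ (s : ℝ) ^ j := fun h => pow_le_pow_right₀ hs1 h
  have hpowN : ∀ {i j : ℕ}, i ≤ j → s ^ i ≤ s ^ j := fun h => Nat.pow_le_pow_right hs h
  have h2s : (s : ℝ) ≤ 2 ^ s := by exact_mod_cast (Nat.lt_two_pow_self).le
  have hs3 : 1 ≤ s ^ 3 := Nat.one_le_pow _ _ hs
  have e1 : (((s ^ 8 : ℕ) : ℝ) * ((s ^ 3 : ℕ) : ℝ) ^ 3) ≤ (2 ^ 17) ^ (s ^ 3) := by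
    calc (((s ^ 8 : ℕ) : ℝ) * ((s ^ 3 : ℕ) : ℝ) ^ 3) = s ^ 17 := by push_cast; ring
      _ ≤ (2 ^ s) ^ 17 := by gcongr
      _ = (2 ^ 17) ^ s := by rw [← pow_mul, ← pow_mul, mul_comm]
      _ ≤ _ := pow_le_pow_right₀ (by norm_num) (by simpa using hpowN (show 1 ≤ 3 by norm_num))
  have e2 : (200 : ℝ) ^ (3 * s ^ 3) = (200 ^ 3) ^ (s ^ 3) := pow_mul _ _ _
  have e3 : ((((s ^ 8) ^ 2 + 48 * (s ^ 8 * (3 * s ^ 3 + s ^ 8) + 1) ^ 4 : ℕ) : ℝ) + 1)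
      ^ (27 * s ^ 3 + 2) ≤ (30002 ^ 29 * s ^ 1856) ^ (s ^ 3) := by
    have hb : (((s ^ 8) ^ 2 + 48 * (s ^ 8 * (3 * s ^ 3 + s ^ 8) + 1) ^ 4 : ℕ) : ℝ) + 1
        ≤ 30002 * s ^ 64 := by
      push_cast
      have hi : (s : ℝ) ^ 8 * (3 * s ^ 3 + s ^ 8) + 1 ≤ 5 * s ^ 16 := by
        have h1 := hpow (show 11 ≤ 16 by norm_num)
        have h2 := hpow (show 0 ≤ 16 by norm_num)
        have : (s : ℝ) ^ 8 * (3 * s ^ 3 + s ^ 8) = 3 * s ^ 11 + s ^ 16 := by ring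
        rw [this]; rw [pow_zero] at h2; linarith
      have hi4 : ((s : ℝ) ^ 8 * (3 * s ^ 3 + s ^ 8) + 1) ^ 4 ≤ (5 * s ^ 16) ^ 4 := by gcongr
      have h1 := hpow (show 16 ≤ 64 by norm_num)
      have h2 := hpow (show 0 ≤ 64 by norm_num)
      rw [pow_zero] at h2
      have e : (5 * (s : ℝ) ^ 16) ^ 4 = 625 * s ^ 64 := by ring
      have e' : ((s : ℝ) ^ 8) ^ 2 = s ^ 16 := by ring
      rw [e']; rw [e] at hi4
      linarith
    calc _ ≤ (30002 * (s : ℝ) ^ 64) ^ (27 * s ^ 3 + 2) := by gcongr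
      _ ≤ (30002 * (s : ℝ) ^ 64) ^ (29 * s ^ 3) := by
          refine pow_le_pow_right₀ ?_ (by omega)
          have := one_le_pow₀ hs1 (n := 64)
          linarith
      _ = _ := by rw [pow_mul, mul_pow, ← pow_mul]
  have e4 : ((27 * s ^ 3 + 2).factorial : ℝ) ≤ (29 ^ 29 * s ^ 87) ^ (s ^ 3) := by
    calc ((27 * s ^ 3 + 2).factorial : ℝ) ≤ ((29 * s ^ 3).factorial : ℝ) := by
          exact_mod_cast Nat.factorial_le (by omega)
      _ ≤ ((29 * s ^ 3 : ℕ) : ℝ) ^ (29 * s ^ 3) := by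
          exact_mod_cast Nat.factorial_le_pow _
      _ = _ := by
          rw [pow_mul]; push_cast; congr 1; rw [mul_pow, ← pow_mul]
  have e5 : (10 : ℝ) ^ (27 * s ^ 3 + 3) ≤ (10 ^ 30) ^ (s ^ 3) := by
    rw [← pow_mul]
    exact pow_le_pow_right₀ (by norm_num) (by omega)
  have hM3 : 0 ≤ M ^ (s ^ 3) := by positivity
  calc _ ≤ M ^ (s ^ 3) * (2 ^ 17) ^ (s ^ 3) * (200 ^ 3) ^ (s ^ 3) *
        (30002 ^ 29 * (s : ℝ) ^ 1856) ^ (s ^ 3) *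
        ((29 ^ 29 * (s : ℝ) ^ 87) ^ (s ^ 3) * (10 ^ 30) ^ (s ^ 3)) := by
        rw [e2]
        gcongr
    _ = _ := by
        rw [← mul_pow, ← mul_pow, ← mul_pow, ← mul_pow, ← mul_pow]
        congr 1
        rw [show (1943 : ℕ) = 1856 + 87 from rfl, pow_add]
        ring

/-- A relation `∑ Gᵢ(x) yⁱ = 0` with `G_d(x) ≠ 0` between `a₀` and `b₀` is impossible: for the
parameters `N = s ^ 3`, `T = s ^ 4`, `L = s ^ 8` the auxiliary function from Siegel's lemma contradicts
`analytic_bound` once `s` is large. -/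
theorem no_relation {x y : ℝ}
    (hxy : (x = a0 ∧ y = b0) ∨ (x = b0 ∧ y = a0)) (d : ℕ) (hd : 1 ≤ d)
    (G : ℕ → Polynomial ℤ)
    (hG : ∑ i ∈ Finset.range (d + 1), Polynomial.aeval x (G i) * y ^ i = 0)
    (hg : Polynomial.aeval x (G d) ≠ 0) : False := by
  obtain ⟨δ, c, hspan⟩ := exists_span P0 x y d hd G hG
  set C : ℕ := 10 * (4 * δ + 1) * d with hC
  set M : ℝ := ((2 : ℝ) ^ 17 * (38 * 2 ^ 8) * (4 * (c + 1) ^ 4)) ^ (2 * C) with hM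
  have hM0 : 0 < M := by positivity
  set M' : ℝ := M * 2 ^ 17 * 200 ^ 3 * 30002 ^ 29 * 29 ^ 29 * 10 ^ 30 with hM'
  have hM'0 : 0 < M' := by positivity
  have key : ∀ s : ℕ, 1 ≤ s → 2 * C + 1 ≤ s → (27 / 20 : ℝ) ^ s ≤ M' * (s : ℝ) ^ 1943 := by
    intro s hs hCs
    have hpowN : ∀ {i j : ℕ}, i ≤ j → s ^ i ≤ s ^ j := fun h => Nat.pow_le_pow_right hs h
    set W := 3 * s ^ 3 + s ^ 4 with hW
    have hW4 : W ≤ 4 * s ^ 4 := by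
      have := hpowN (show 3 ≤ 4 by norm_num); omega
    obtain ⟨e, he⟩ := hspan W
    have : NeZero d := ⟨by omega⟩
    have hcard : Fintype.card (Fin 2 × Fin (W + 1) × Fin (δ * W + 1) × Fin d)
        = 2 * ((W + 1) * ((δ * W + 1) * d)) := by
      simp only [Fintype.card_prod, Fintype.card_fin]
    have hcard' : s ^ 4 * Fintype.card (Fin 2 × Fin (W + 1) × Fin (δ * W + 1) × Fin d)
        ≤ C * s ^ 12 := by
      have h1 : 1 ≤ s ^ 4 := Nat.one_le_pow _ _ hs
      have h2 : W + 1 ≤ 5 * s ^ 4 := by omega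
      have h3 : δ * W + 1 ≤ (4 * δ + 1) * s ^ 4 := by nlinarith
      rw [hcard]
      calc s ^ 4 * (2 * ((W + 1) * ((δ * W + 1) * d)))
          ≤ s ^ 4 * (2 * ((5 * s ^ 4) * (((4 * δ + 1) * s ^ 4) * d))) := by gcongr
        _ = C * s ^ 12 := by rw [hC]; ring
    have hlt : s ^ 4 * Fintype.card (Fin 2 × Fin (W + 1) × Fin (δ * W + 1) × Fin d)
        < s ^ 8 * (s ^ 3) ^ 3 := by
      refine hcard'.trans_lt ?_
      calc C * s ^ 12 < s * s ^ 12 := by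
            apply Nat.mul_lt_mul_of_pos_right (by omega) (by positivity)
        _ = s ^ 13 := by ring
        _ ≤ s ^ 17 := hpowN (by norm_num)
        _ = _ := by ring
    obtain ⟨A, hA, hAH, hAv⟩ := exists_aux (L := s ^ 8) (N := s ^ 3) (T := s ^ 4) (c := c)
      (g := Polynomial.aeval x (G d) ^ W) (pow_ne_zero _ hg) e
      (by
        intro l i j k hijk
        rcases hxy with ⟨rfl, rfl⟩ | ⟨rfl, rfl⟩
        · exact he l i j k hijk
        · obtain ⟨z, hz, hz'⟩ := he l i k j (by omega)
          refine ⟨z, hz, ?_⟩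
          rw [← hz', mul_right_comm]) (by positivity) hlt
    have hfin := analytic_bound A hA hAH hAv
    have hsieg := siegel_height_le (s := s) (C := C) (c := c) hs (by omega) hcard'
    have hlast := (hfin.trans (analytic_rhs_le hs hM0.le (by
      refine le_trans (le_of_eq ?_) hsieg
      push_cast
      congr 2 <;> ring)))
    have h43 : (27 / 20 : ℝ) ^ (s ^ 4) = ((27 / 20 : ℝ) ^ s) ^ (s ^ 3) := by
      rw [← pow_mul]; congr 1; ring
    rw [h43] at hlast
    exact le_of_pow_le_pow_left₀ (by positivity) (by positivity) hlast
  have hlim := tendsto_pow_const_div_const_pow_of_one_lt 1943 (show (1 : ℝ) < 27 / 20 by norm_num)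
  have hev := hlim.eventually (gt_mem_nhds (show (0 : ℝ) < 1 / M' by positivity))
  obtain ⟨s, h1, h2⟩ := (hev.and (Filter.eventually_ge_atTop (2 * C + 1))).exists
  have h3 := key s (by omega) h2
  rw [div_lt_div_iff₀ (by positivity) hM'0] at h1
  linarith

end FibTheta

namespace FibTheta

/-! ### Algebraic independence of the two theta values -/

/-- Clearing denominators turns an algebraic dependence into a relation excluded by
`no_relation`. -/
lemma not_isAlgebraic_adjoin {x y : ℝ} (hxy : (x = a0 ∧ y = b0) ∨ (x = b0 ∧ y = a0)) :
    ¬ IsAlgebraic (Algebra.adjoin ℚ ({x} : Set ℝ)) y := by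
  rintro ⟨p, hp0, hp⟩
  have hrep : ∀ i, ∃ g : Polynomial ℚ, Polynomial.aeval x g = ((p.coeff i : ℝ)) := by
    intro i
    have hle := (Algebra.adjoin_singleton_eq_range_aeval ℚ x).le
    exact hle (p.coeff i).2
  choose g hg using hrep
  have h_clear : ∀ i, ∃ (m : ℤ) (h : Polynomial ℤ), m ≠ 0 ∧
      Polynomial.aeval x h = (m : ℝ) * (p.coeff i : ℝ) := by
    intro i
    obtain ⟨m, hm, hmap⟩ := IsLocalization.integerNormalization_spec (nonZeroDivisors ℤ) (g i)
    refine ⟨m, IsLocalization.integerNormalization (nonZeroDivisors ℤ) (g i),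
      nonZeroDivisors.ne_zero hm, ?_⟩
    rw [← hg i, ← Polynomial.aeval_map_algebraMap ℚ, hmap, map_zsmul, zsmul_eq_mul]
  choose m h hm hh using h_clear
  have hd : 1 ≤ p.natDegree := by
    by_contra hcon
    have h0 : p.natDegree = 0 := by omega
    rw [Polynomial.eq_C_of_natDegree_eq_zero h0, Polynomial.aeval_C] at hp
    apply hp0
    rw [Polynomial.eq_C_of_natDegree_eq_zero h0]
    have : p.coeff 0 = 0 := Subtype.ext hp
    rw [this, map_zero]
  set d := p.natDegree with hdd
  let G : ℕ → Polynomial ℤ := fun i =>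
    Polynomial.C (∏ j ∈ (Finset.range (d + 1)).erase i, m j) * h i
  have hG : ∀ i ∈ Finset.range (d + 1), Polynomial.aeval x (G i)
      = ((∏ j ∈ Finset.range (d + 1), m j : ℤ) : ℝ) * (p.coeff i : ℝ) := by
    intro i hi
    rw [← Finset.prod_erase_mul _ _ hi]
    simp only [G, map_mul, Polynomial.aeval_C, hh]
    push_cast
    simp only [eq_intCast]
    ring
  refine no_relation hxy d hd G ?_ ?_
  · rw [Finset.sum_congr rfl fun i hi => by rw [hG i hi, mul_assoc], ← Finset.mul_sum]
    rw [Polynomial.aeval_eq_sum_range] at hp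
    have : ∑ i ∈ Finset.range (d + 1), (p.coeff i : ℝ) * y ^ i = 0 := by
      rw [← hp]; rfl
    rw [this, mul_zero]
  · rw [hG d (by simp)]
    refine mul_ne_zero ?_ ?_
    · exact_mod_cast Finset.prod_ne_zero_iff.2 fun j _ => hm j
    · have : p.coeff d ≠ 0 := by rw [hdd]; simpa using hp0
      exact fun h => this (Subtype.ext h)

theorem algebraicIndependent_a0_b0 : AlgebraicIndependent ℚ ![a0, b0] := by
  rw [AlgebraicIndependent.iff_transcendental_adjoin_image 1]
  have him : Set.image ![a0, b0] {1}ᶜ = {a0} := by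
    ext z
    simp only [Set.mem_image, Set.mem_compl_iff, Set.mem_singleton_iff]
    constructor
    · rintro ⟨i, hi, rfl⟩
      fin_cases i
      · rfl
      · exact absurd rfl hi
    · rintro rfl
      exact ⟨0, by decide, rfl⟩
  constructor
  · have : Subsingleton {j : Fin 2 // j ∈ ({1}ᶜ : Set (Fin 2))} := by
      constructor
      rintro ⟨i, hi⟩ ⟨j, hj⟩
      simp only [Set.mem_compl_iff, Set.mem_singleton_iff] at hi hj
      apply Subtype.ext
      change i = j
      omega
    refine (algebraicIndependent_singleton_iff
      (⟨0, by decide⟩ : {j : Fin 2 // j ∈ ({1}ᶜ : Set (Fin 2))})).2 ?_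
    intro halg
    refine not_isAlgebraic_adjoin (x := b0) (y := a0) (Or.inr ⟨rfl, rfl⟩) ?_
    exact halg.extendScalars (FaithfulSMul.algebraMap_injective ℚ _)
  · rw [him]
    exact not_isAlgebraic_adjoin (Or.inl ⟨rfl, rfl⟩)

/-- Two numbers over which two algebraically independent numbers are algebraic are themselves
algebraically independent. -/
lemma algebraicIndependent_pair_of_isAlgebraic {a b x y : ℝ}
    (h : AlgebraicIndependent ℚ ![a, b])
    (ha : IsAlgebraic (Algebra.adjoin ℚ ({x, y} : Set ℝ)) a)
    (hb : IsAlgebraic (Algebra.adjoin ℚ ({x, y} : Set ℝ)) b) :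
    AlgebraicIndependent ℚ ![x, y] := by
  set M := AlgebraicIndependent.matroid ℚ ℝ
  have hab : a ≠ b := by
    intro he
    have := h.injective (show ![a, b] 0 = ![a, b] 1 from he)
    exact absurd this (by decide)
  have hr : ∀ u v : ℝ, Set.range ![u, v] = {u, v} := fun u v => by
    simp [Set.pair_comm]
  have hI : M.Indep {a, b} := by
    rw [AlgebraicIndependent.matroid_indep_iff, ← hr]
    exact (algebraicIndependent_subtype_range h.injective).2 h
  have hsub : ({a, b} : Set ℝ) ⊆ M.closure {x, y} := by
    rw [AlgebraicIndependent.matroid_closure_eq]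
    rintro z (rfl | rfl)
    · exact ha
    · exact hb
  have h2 : 2 ≤ M.eRk {x, y} := by
    rw [← Set.encard_pair hab, ← hI.eRk_eq_encard, ← M.eRk_closure_eq {x, y}]
    exact M.eRk_mono hsub
  have h3 : M.eRk {x, y} ≤ ({x, y} : Set ℝ).encard := M.eRk_le_encard _
  have hxy : x ≠ y := by
    rintro rfl
    simp only [Set.pair_eq_singleton, Set.encard_singleton] at h3 h2
    exact absurd (h2.trans h3) (by decide)
  have hJ : M.Indep {x, y} := by
    rw [Matroid.indep_iff_eRk_eq_encard_of_finite (Set.toFinite _)]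
    refine le_antisymm h3 ?_
    rw [Set.encard_pair hxy]; exact h2
  rw [AlgebraicIndependent.matroid_indep_iff, ← hr] at hJ
  refine (algebraicIndependent_subtype_range ?_).1 hJ
  intro i j hij
  fin_cases i <;> fin_cases j <;> simp_all

end FibTheta

namespace FibTheta
open Filter Topology

/-! ### Infinite products and the triple product identity -/

/-- `∏ (1 + z q ^ k)` over `k ≥ 1`. -/
def fullP (z q : ℝ) : ℝ := ∏' k : ℕ, (1 + z * q ^ (k + 1))

/-- `∏ (1 + z q ^ k)` over odd `k ≥ 1`. -/
def oddP (z q : ℝ) : ℝ := ∏' k : ℕ, (1 + z * q ^ (2 * k + 1))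

lemma summable_norm_full {q : ℝ} (h0 : 0 < q) (h1 : q < 1) (z : ℝ) :
    Summable fun k : ℕ => ‖z * q ^ (k + 1)‖ := by
  have h := ((summable_geometric_of_lt_one h0.le h1).mul_left (|z| * q))
  refine h.congr fun k => ?_
  rw [norm_mul, norm_pow, Real.norm_eq_abs, Real.norm_eq_abs, abs_of_pos h0, pow_succ]
  ring

lemma summable_norm_odd {q : ℝ} (h0 : 0 < q) (h1 : q < 1) (z : ℝ) :
    Summable fun k : ℕ => ‖z * q ^ (2 * k + 1)‖ := by
  have h := ((summable_geometric_of_lt_one (sq_nonneg q) (by nlinarith)).mul_left (|z| * q))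
  refine h.congr fun k => ?_
  rw [norm_mul, norm_pow, Real.norm_eq_abs, Real.norm_eq_abs, abs_of_pos h0, pow_add, pow_mul]
  ring

lemma tendsto_fullP {q : ℝ} (h0 : 0 < q) (h1 : q < 1) (z : ℝ) :
    Tendsto (fun n => ∏ k ∈ Finset.range n, (1 + z * q ^ (k + 1))) atTop (𝓝 (fullP z q)) :=
  (multipliable_one_add_of_summable (summable_norm_full h0 h1 z)).hasProd.tendsto_prod_nat

lemma tendsto_oddP {q : ℝ} (h0 : 0 < q) (h1 : q < 1) (z : ℝ) :
    Tendsto (fun n => ∏ k ∈ Finset.range n, (1 + z * q ^ (2 * k + 1))) atTop (𝓝 (oddP z q)) :=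
  (multipliable_one_add_of_summable (summable_norm_odd h0 h1 z)).hasProd.tendsto_prod_nat

lemma factor_pos {q z : ℝ} (h0 : 0 < q) (h1 : q < 1) (hz : -1 ≤ z) (k : ℕ) :
    0 < 1 + z * q ^ (k + 1) := by
  have hp : 0 < q ^ (k + 1) := by positivity
  have hq : q ^ (k + 1) < 1 := pow_lt_one₀ h0.le h1 (by omega)
  nlinarith

lemma fullP_pos {q z : ℝ} (h0 : 0 < q) (h1 : q < 1) (hz : -1 ≤ z) : 0 < fullP z q := by
  refine lt_of_le_of_ne ?_ (Ne.symm ?_)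
  · exact ge_of_tendsto' (tendsto_fullP h0 h1 z)
      fun n => Finset.prod_nonneg fun k _ => (factor_pos h0 h1 hz k).le
  · exact tprod_one_add_ne_zero_of_summable (fun k => (factor_pos h0 h1 hz k).ne')
      (summable_norm_full h0 h1 z)

lemma oddP_pos {q z : ℝ} (h0 : 0 < q) (h1 : q < 1) (hz : -1 ≤ z) : 0 < oddP z q := by
  refine lt_of_le_of_ne ?_ (Ne.symm ?_)
  · exact ge_of_tendsto' (tendsto_oddP h0 h1 z)
      fun n => Finset.prod_nonneg fun k _ => (factor_pos h0 h1 hz (2 * k)).le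
  · exact tprod_one_add_ne_zero_of_summable (fun k => (factor_pos h0 h1 hz (2 * k)).ne')
      (summable_norm_odd h0 h1 z)

/-- The Gaussian binomial coefficients, by Pascal's recursion. -/
def gb (Q : ℝ) : ℕ → ℕ → ℝ
  | _, 0 => 1
  | 0, _ + 1 => 0
  | n + 1, k + 1 => gb Q n k + Q ^ (k + 1) * gb Q n (k + 1)

lemma gb_zero_right (Q : ℝ) (n : ℕ) : gb Q n 0 = 1 := by cases n <;> rfl

lemma gb_eq_zero (Q : ℝ) {n k : ℕ} (h : n < k) : gb Q n k = 0 := by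
  induction n generalizing k with
  | zero => obtain ⟨k, rfl⟩ : ∃ j, k = j + 1 := ⟨k - 1, by omega⟩; rfl
  | succ n ih =>
    obtain ⟨k, rfl⟩ : ∃ j, k = j + 1 := ⟨k - 1, by omega⟩
    rw [gb, ih (by omega), ih (by omega), mul_zero, add_zero]

/-- The finite `q`-Pochhammer symbol `(Q; Q)_n`. -/
def ph (Q : ℝ) (n : ℕ) : ℝ := ∏ k ∈ Finset.range n, (1 + (-1) * Q ^ (k + 1))

lemma ph_succ (Q : ℝ) (n : ℕ) : ph Q (n + 1) = ph Q n * (1 - Q ^ (n + 1)) := by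
  rw [ph, ph, Finset.prod_range_succ]; ring

lemma ph_zero (Q : ℝ) : ph Q 0 = 1 := rfl

lemma gb_mul_ph (Q : ℝ) : ∀ n i j : ℕ, i + j = n → gb Q n i * ph Q i * ph Q j = ph Q n := by
  intro n
  induction n with
  | zero =>
    intro i j h
    obtain ⟨rfl, rfl⟩ : i = 0 ∧ j = 0 := by omega
    simp [ph_zero, gb]
  | succ n ih =>
    intro i j h
    rcases i with _ | i
    · obtain rfl : j = n + 1 := by omega
      simp [ph_zero, gb]
    · rcases j with _ | j
      · obtain rfl : i = n := by omega
        have := ih i 0 (by omega)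
        rw [gb, gb_eq_zero Q (show i < i + 1 by omega), ph_succ, ph_zero]
        rw [ph_zero] at this
        linear_combination (1 - Q ^ (i + 1)) * this
      · have e1 := ih i (j + 1) (by omega)
        have e2 := ih (i + 1) j (by omega)
        rw [gb, ph_succ Q n]
        rw [ph_succ] at e1 e2 ⊢
        rw [ph_succ]
        obtain rfl : n = i + j + 1 := by omega
        linear_combination (1 - Q ^ (i + 1)) * e1 + Q ^ (i + 1) * (1 - Q ^ (j + 1)) * e2

/-- The `q`-binomial theorem in base `q ^ 2`. -/
lemma qbinomial (q : ℝ) (N : ℕ) (z : ℝ) :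
    ∏ k ∈ Finset.range N, (1 + z * q ^ (2 * k + 1))
      = ∑ i ∈ Finset.range (N + 1), z ^ i * q ^ (i ^ 2) * gb (q ^ 2) N i := by
  induction N generalizing z with
  | zero => simp [gb]
  | succ N ih =>
    rw [Finset.prod_range_succ']
    have hstep : ∏ k ∈ Finset.range N, (1 + z * q ^ (2 * (k + 1) + 1))
        = ∏ k ∈ Finset.range N, (1 + (z * q ^ 2) * q ^ (2 * k + 1)) :=
      Finset.prod_congr rfl fun k _ => by ring
    rw [hstep, ih, Finset.sum_range_succ' _ (N + 1)]
    have hR : ∀ i, z ^ (i + 1) * q ^ ((i + 1) ^ 2) * gb (q ^ 2) (N + 1) (i + 1)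
        = z * q * ((z * q ^ 2) ^ i * q ^ (i ^ 2) * gb (q ^ 2) N i)
          + (z * q ^ 2) ^ (i + 1) * q ^ ((i + 1) ^ 2) * gb (q ^ 2) N (i + 1) := by
      intro i
      rw [gb]; ring
    rw [Finset.sum_congr rfl fun i _ => hR i, Finset.sum_add_distrib, ← Finset.mul_sum,
      Finset.sum_range_succ (fun i => (z * q ^ 2) ^ (i + 1) * q ^ ((i + 1) ^ 2)
        * gb (q ^ 2) N (i + 1)) N, gb_eq_zero _ (show N < N + 1 by omega)]
    have hs := Finset.sum_range_succ'
      (fun i => (z * q ^ 2) ^ i * q ^ (i ^ 2) * gb (q ^ 2) N i) N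
    simp only [gb_zero_right] at hs ⊢
    rw [hs]
    ring

/-- The number of integers of absolute value `k`. -/
def wt (k : ℕ) : ℝ := if k = 0 then 1 else 2

lemma sum_fold {n : ℕ} {h u : ℕ → ℝ} (h1 : ∀ k ≤ n, h (n + k) = u k)
    (h2 : ∀ k ≤ n, h (n - k) = u k) :
    ∑ i ∈ Finset.range (2 * n + 1), h i = ∑ k ∈ Finset.range (n + 1), wt k * u k := by
  rw [show 2 * n + 1 = n + (n + 1) by ring, Finset.sum_range_add, ← Finset.sum_range_reflect]
  have e1 : ∑ i ∈ Finset.range n, h (n - 1 - i) = ∑ i ∈ Finset.range n, u (i + 1) := by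
    refine Finset.sum_congr rfl fun i hi => ?_
    rw [Finset.mem_range] at hi
    rw [← h2 (i + 1) (by omega)]
    congr 1; omega
  have e2 : ∑ k ∈ Finset.range (n + 1), h (n + k) = ∑ k ∈ Finset.range (n + 1), u k :=
    Finset.sum_congr rfl fun k hk => h1 k (by rw [Finset.mem_range] at hk; omega)
  rw [e1, e2, Finset.sum_range_succ' u, Finset.sum_range_succ' (fun k => wt k * u k)]
  have e3 : ∑ k ∈ Finset.range n, wt (k + 1) * u (k + 1)
      = 2 * ∑ k ∈ Finset.range n, u (k + 1) := by
    rw [Finset.mul_sum]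
    exact Finset.sum_congr rfl fun k _ => by simp [wt]
  rw [e3]
  simp [wt]
  ring

lemma gb_symm {Q : ℝ} (hQ : ∀ n, ph Q n ≠ 0) {n i j : ℕ} (h : i + j = n) :
    gb Q n i = gb Q n j := by
  have h1 := gb_mul_ph Q n i j h
  have h2 := gb_mul_ph Q n j i (by omega)
  have h3 := mul_ne_zero (hQ i) (hQ j)
  refine mul_right_cancel₀ h3 ?_
  linear_combination h1 - h2

/-- The finite form of Jacobi's triple product at `z = ±1`. -/
lemma finite_triple {q z : ℝ} (h0 : 0 < q) (h1 : q < 1) (hz : z ^ 2 = 1) (n : ℕ) :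
    ∑ k ∈ Finset.range (n + 1), wt k * (z ^ k * q ^ (k ^ 2) * gb (q ^ 2) (2 * n) (n + k))
      = (∏ k ∈ Finset.range n, (1 + z * q ^ (2 * k + 1))) ^ 2 := by
  have hph : ∀ m, ph (q ^ 2) m ≠ 0 := fun m =>
    Finset.prod_ne_zero_iff.2 fun k _ =>
      (factor_pos (by positivity) (by nlinarith) le_rfl k).ne'
  have hq : q ≠ 0 := h0.ne'
  have hzk : ∀ m, (z ^ m) * (z ^ m) = 1 := fun m => by
    rw [← pow_add, ← two_mul, pow_mul, hz, one_pow]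
  have hodd : q ^ (n ^ 2) = ∏ k ∈ Finset.range n, q ^ (2 * k + 1) := by
    induction n with
    | zero => simp
    | succ n ih => rw [Finset.prod_range_succ, ← ih]; ring
  -- The factors with negative exponents of `q` are the reflections of the others.
  have hA : q ^ (n ^ 2) * ∏ k ∈ Finset.range n, (1 + (z / q ^ (2 * n)) * q ^ (2 * k + 1))
      = z ^ n * ∏ k ∈ Finset.range n, (1 + z * q ^ (2 * k + 1)) := by
    rw [← Finset.prod_range_reflect (fun k => 1 + (z / q ^ (2 * n)) * q ^ (2 * k + 1)), hodd,
      ← Finset.prod_mul_distrib]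
    rw [show z ^ n = ∏ _k ∈ Finset.range n, z by simp, ← Finset.prod_mul_distrib]
    refine Finset.prod_congr rfl fun k hk => ?_
    rw [Finset.mem_range] at hk
    have hexp : q ^ (2 * k + 1) * q ^ (2 * (n - 1 - k) + 1) = q ^ (2 * n) := by
      rw [← pow_add]; congr 1; omega
    have hqn : q ^ (2 * n) ≠ 0 := pow_ne_zero _ hq
    field_simp
    linear_combination z * hexp - q ^ (2 * k + 1) * q ^ (2 * n) * hz
  have hB : ∏ k ∈ Finset.range n, (1 + (z / q ^ (2 * n)) * q ^ (2 * (n + k) + 1))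
      = ∏ k ∈ Finset.range n, (1 + z * q ^ (2 * k + 1)) := by
    refine Finset.prod_congr rfl fun k _ => ?_
    have hqn : q ^ (2 * n) ≠ 0 := pow_ne_zero _ hq
    rw [show 2 * (n + k) + 1 = 2 * n + (2 * k + 1) by ring, pow_add]
    field_simp
  have hmain := qbinomial q (2 * n) (z / q ^ (2 * n))
  rw [show Finset.range (2 * n) = Finset.range (n + n) by rw [two_mul], Finset.prod_range_add,
    hB] at hmain
  have hprod : (∏ k ∈ Finset.range n, (1 + z * q ^ (2 * k + 1))) ^ 2
      = z ^ n * q ^ (n ^ 2) * ∑ i ∈ Finset.range (2 * n + 1),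
          (z / q ^ (2 * n)) ^ i * q ^ (i ^ 2) * gb (q ^ 2) (2 * n) i := by
    rw [← hmain]
    linear_combination (-(hzk n)) * (∏ k ∈ Finset.range n, (1 + z * q ^ (2 * k + 1))) ^ 2
      - z ^ n * (∏ k ∈ Finset.range n, (1 + z * q ^ (2 * k + 1))) * hA
  rw [hprod, Finset.mul_sum]
  refine (sum_fold ?_ ?_).symm
  · intro k hk
    have e : q ^ (n ^ 2) * q ^ ((n + k) ^ 2) = q ^ (k ^ 2) * (q ^ (2 * n)) ^ (n + k) := by
      rw [← pow_mul, ← pow_add, ← pow_add]; congr 1; ring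
    have hqn : (q ^ (2 * n)) ^ (n + k) ≠ 0 := by positivity
    rw [div_pow]
    field_simp
    have hz' : z ^ n * z ^ (n + k) = z ^ k := by
      rw [pow_add, ← mul_assoc, hzk, one_mul]
    calc _ = (z ^ n * z ^ (n + k)) * (q ^ (n ^ 2) * q ^ ((n + k) ^ 2))
          * gb (q ^ 2) (2 * n) (n + k) := by ring
      _ = _ := by rw [hz', e]; ring
  · intro k hk
    obtain ⟨m, rfl⟩ : ∃ m, n = m + k := ⟨n - k, by omega⟩
    rw [Nat.add_sub_cancel]
    have e : q ^ ((m + k) ^ 2) * q ^ (m ^ 2) = q ^ (k ^ 2) * (q ^ (2 * (m + k))) ^ m := by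
      rw [← pow_mul, ← pow_add, ← pow_add]; congr 1; ring
    have hqn : (q ^ (2 * (m + k))) ^ m ≠ 0 := by positivity
    rw [gb_symm hph (show (m + k + k) + m = 2 * (m + k) by ring), div_pow]
    field_simp
    have hz' : z ^ (m + k) * z ^ m = z ^ k := by
      rw [pow_add, mul_right_comm, hzk, one_mul]
    calc _ = (z ^ (m + k) * z ^ m) * (q ^ ((m + k) ^ 2) * q ^ (m ^ 2))
          * gb (q ^ 2) (2 * (m + k)) m := by ring
      _ = _ := by rw [hz', e]; ring

/-- Jacobi's triple product at `z = ±1`, by dominated convergence from the finite form. -/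
lemma theta_product {q z : ℝ} (h0 : 0 < q) (h1 : q < 1) (hz : z ^ 2 = 1) :
    ∑' k : ℕ, wt k * (z ^ k * q ^ (k ^ 2)) = fullP (-1) (q ^ 2) * oddP z q ^ 2 := by
  have hQ0 : 0 < q ^ 2 := by positivity
  have hQ1 : q ^ 2 < 1 := by nlinarith
  have hlim : Tendsto (ph (q ^ 2)) atTop (𝓝 (fullP (-1) (q ^ 2))) := tendsto_fullP hQ0 hQ1 (-1)
  set E := fullP (-1) (q ^ 2) with hE
  have hEpos : 0 < E := fullP_pos hQ0 hQ1 le_rfl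
  have hpos : ∀ n, 0 < ph (q ^ 2) n := fun n =>
    Finset.prod_pos fun k _ => factor_pos hQ0 hQ1 le_rfl k
  have hanti : Antitone (ph (q ^ 2)) := by
    refine antitone_nat_of_succ_le fun n => ?_
    rw [ph_succ]
    have : 0 < (q ^ 2) ^ (n + 1) := by positivity
    nlinarith [hpos n]
  have hge : ∀ n, E ≤ ph (q ^ 2) n := hanti.le_of_tendsto hlim
  have hle : ∀ n, ph (q ^ 2) n ≤ 1 := fun n => hanti (Nat.zero_le n)
  have hgb : ∀ n k, k ≤ n → gb (q ^ 2) (2 * n) (n + k)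
      = ph (q ^ 2) (2 * n) / (ph (q ^ 2) (n + k) * ph (q ^ 2) (n - k)) := by
    intro n k hk
    rw [eq_div_iff (mul_pos (hpos _) (hpos _)).ne', ← mul_assoc]
    exact gb_mul_ph _ _ _ _ (by omega)
  let f : ℕ → ℕ → ℝ := fun n k => if k ∈ Finset.range (n + 1) then
    wt k * (z ^ k * q ^ (k ^ 2) * gb (q ^ 2) (2 * n) (n + k)) else 0
  have hwt0 : ∀ k, 0 ≤ wt k := fun k => by unfold wt; split_ifs <;> norm_num
  have hwt2 : ∀ k, wt k ≤ 2 := fun k => by unfold wt; split_ifs <;> norm_num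
  have hzabs : ∀ k, |z ^ k| = 1 := fun k => by
    have : |z| = 1 := by
      rcases eq_or_eq_neg_of_sq_eq_sq z 1 (by rw [hz, one_pow]) with h | h <;> simp [h]
    rw [abs_pow, this, one_pow]
  have hT := tendsto_tsum_of_dominated_convergence (f := f) (𝓕 := atTop)
    (g := fun k => wt k * (z ^ k * q ^ (k ^ 2)) * (1 / E))
    (bound := fun k => 2 * q ^ k * (1 / E ^ 2)) ?_ ?_ ?_
  · have hsum : ∀ n, ∑' k, f n k = (∏ k ∈ Finset.range n, (1 + z * q ^ (2 * k + 1))) ^ 2 := by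
      intro n
      rw [← finite_triple h0 h1 hz, tsum_eq_sum (s := Finset.range (n + 1))]
      · exact Finset.sum_congr rfl fun k hk => if_pos hk
      · intro k hk; exact if_neg hk
    simp only [hsum] at hT
    have huniq := tendsto_nhds_unique hT ((tendsto_oddP h0 h1 z).pow 2)
    rw [tsum_mul_right] at huniq
    rw [← huniq]
    field_simp
  · exact (((summable_geometric_of_lt_one h0.le h1).mul_left 2).mul_right _)
  · intro k
    have hev : ∀ᶠ n in atTop, wt k * (z ^ k * q ^ (k ^ 2)) *
        (ph (q ^ 2) (2 * n) / (ph (q ^ 2) (n + k) * ph (q ^ 2) (n - k))) = f n k := by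
      filter_upwards [eventually_ge_atTop k] with n hn
      simp only [f]
      rw [if_pos (by simp; omega), hgb n k hn]
      ring
    refine Tendsto.congr' hev (Tendsto.const_mul _ ?_)
    have t1 : Tendsto (fun n => ph (q ^ 2) (2 * n)) atTop (𝓝 E) :=
      hlim.comp (tendsto_id.const_mul_atTop' two_pos)
    have t2 : Tendsto (fun n => ph (q ^ 2) (n + k)) atTop (𝓝 E) :=
      hlim.comp (tendsto_add_atTop_nat k)
    have t3' : Tendsto (fun n => ph (q ^ 2) (n - k)) atTop (𝓝 E) :=
      hlim.comp (tendsto_sub_atTop_nat k)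
    have := t1.div (t2.mul t3') (mul_pos hEpos hEpos).ne'
    have he : E / (E * E) = 1 / E := by field_simp
    rw [he] at this
    exact this
  · refine Eventually.of_forall fun n k => ?_
    simp only [f]
    split_ifs with hk
    · have hk' : k ≤ n := by simp at hk; omega
      rw [hgb n k hk', Real.norm_eq_abs, abs_mul, abs_of_nonneg (hwt0 k), abs_mul, abs_mul, hzabs,
        one_mul, abs_of_pos (by positivity : 0 < q ^ (k ^ 2)),
        abs_of_pos (div_pos (hpos _) (mul_pos (hpos _) (hpos _)))]
      have b1 : q ^ (k ^ 2) ≤ q ^ k :=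
        pow_le_pow_of_le_one h0.le h1.le (Nat.le_self_pow two_ne_zero k)
      have b2 : ph (q ^ 2) (2 * n) / (ph (q ^ 2) (n + k) * ph (q ^ 2) (n - k)) ≤ 1 / E ^ 2 := by
        rw [sq E]
        exact div_le_div₀ zero_le_one (hle _) (mul_pos hEpos hEpos)
          (mul_le_mul (hge _) (hge _) hEpos.le (hpos _).le)
      rw [← mul_assoc]
      exact mul_le_mul (mul_le_mul (hwt2 k) b1 (by positivity) (by norm_num)) b2
        (div_pos (hpos _) (mul_pos (hpos _) (hpos _))).le (by positivity)
    · rw [norm_zero]; positivity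

end FibTheta

namespace FibTheta
open Filter Topology PowerSeries

/-! ### Product formulas for the theta values -/

lemma card_sqRoots_sq (k : ℕ) : ((sqRoots (k ^ 2)).card : ℝ) = wt k := by
  have h : sqRoots (k ^ 2) = {(k : ℤ), -(k : ℤ)} := by
    ext x
    rw [mem_sqRoots, Finset.mem_insert, Finset.mem_singleton]
    push_cast
    exact sq_eq_sq_iff_eq_or_eq_neg
  rw [h, wt]
  split_ifs with hk
  · subst hk; simp
  · rw [Finset.card_pair]
    · norm_num
    · omega

lemma sqRoots_eq_empty {n : ℕ} (h : n ∉ Set.range fun k : ℕ => k ^ 2) : sqRoots n = ∅ := by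
  rw [Finset.eq_empty_iff_forall_notMem]
  intro x hx
  rw [mem_sqRoots] at hx
  refine h ⟨x.natAbs, ?_⟩
  have : ((x.natAbs ^ 2 : ℕ) : ℤ) = n := by push_cast; rw [sq_abs]; exact hx
  exact_mod_cast this

lemma sq_injective : Function.Injective fun k : ℕ => k ^ 2 :=
  Nat.pow_left_injective two_ne_zero

lemma val_t3 (q : ℝ) : val q (toR t3) = ∑' k : ℕ, wt k * ((1 : ℝ) ^ k * q ^ (k ^ 2)) := by
  rw [val, ← sq_injective.tsum_eq]
  · refine tsum_congr fun k => ?_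
    rw [coeff_toR, t3, coeff_mk, Int.cast_natCast, card_sqRoots_sq, one_pow, one_mul]
  · intro n hn
    by_contra h
    refine hn ?_
    change _ * _ = (0 : ℝ)
    rw [coeff_toR, t3, coeff_mk, sqRoots_eq_empty h]
    simp

lemma val_t4 (q : ℝ) : val q (toR t4) = ∑' k : ℕ, wt k * ((-1 : ℝ) ^ k * q ^ (k ^ 2)) := by
  rw [val, ← sq_injective.tsum_eq]
  · refine tsum_congr fun k => ?_
    rw [coeff_toR, t4, coeff_mk]
    push_cast
    rw [card_sqRoots_sq]
    have : (-1 : ℝ) ^ (k ^ 2) = (-1) ^ k := by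
      rcases Nat.even_or_odd k with h | h
      · rw [h.neg_one_pow, (h.pow_of_ne_zero two_ne_zero).neg_one_pow]
      · rw [h.neg_one_pow, h.pow.neg_one_pow]
    rw [this]; ring
  · intro n hn
    by_contra h
    refine hn ?_
    change _ * _ = (0 : ℝ)
    rw [coeff_toR, t4, coeff_mk, sqRoots_eq_empty h]
    simp

lemma val_dbl (q : ℝ) (f : ℤ⟦X⟧) : val q (toR (dbl f)) = val (q ^ 2) (toR f) := by
  have hinj : Function.Injective fun k : ℕ => 2 * k := fun a b h => by
    simp only at h; omega
  rw [val, val, ← hinj.tsum_eq]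
  · refine tsum_congr fun k => ?_
    rw [coeff_toR, coeff_toR, coeff_expand_mul 2 two_ne_zero, pow_mul]
  · intro n hn
    by_contra h
    refine hn ?_
    change _ * _ = (0 : ℝ)
    rw [coeff_toR, coeff_expand_of_not_dvd 2 two_ne_zero]
    · simp
    · rintro ⟨k, rfl⟩
      exact h ⟨k, rfl⟩

lemma t3_product {q : ℝ} (h0 : 0 < q) (h1 : q < 1) :
    val q (toR t3) = fullP (-1) (q ^ 2) * oddP 1 q ^ 2 := by
  rw [val_t3, theta_product h0 h1 (by norm_num)]

lemma t4_product {q : ℝ} (h0 : 0 < q) (h1 : q < 1) :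
    val q (toR t4) = fullP (-1) (q ^ 2) * oddP (-1) q ^ 2 := by
  rw [val_t4, theta_product h0 h1 (by norm_num)]

lemma prod_range_two_mul (f : ℕ → ℝ) (n : ℕ) :
    ∏ k ∈ Finset.range (2 * n), f k
      = (∏ k ∈ Finset.range n, f (2 * k)) * ∏ k ∈ Finset.range n, f (2 * k + 1) := by
  induction n with
  | zero => simp
  | succ n ih =>
    rw [Finset.prod_range_succ, Finset.prod_range_succ, show 2 * (n + 1) = 2 * n + 1 + 1 by ring,
      Finset.prod_range_succ, Finset.prod_range_succ, ih]
    ring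

lemma fullP_split {q : ℝ} (h0 : 0 < q) (h1 : q < 1) (z : ℝ) :
    fullP z q = oddP z q * fullP z (q ^ 2) := by
  have hq1 : q ^ 2 < 1 := by nlinarith
  have hA : Tendsto (fun n => ∏ k ∈ Finset.range (2 * n), (1 + z * q ^ (k + 1))) atTop
      (𝓝 (fullP z q)) :=
    (tendsto_fullP h0 h1 z).comp (tendsto_id.const_mul_atTop' two_pos)
  refine tendsto_nhds_unique hA
    (((tendsto_oddP h0 h1 z).mul (tendsto_fullP (by positivity) hq1 z)).congr fun n => ?_)
  rw [prod_range_two_mul]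
  congr 1
  exact Finset.prod_congr rfl fun k _ => by ring

lemma fullP_sq {q : ℝ} (h0 : 0 < q) (h1 : q < 1) :
    fullP (-1) (q ^ 2) = fullP (-1) q * fullP 1 q := by
  have hq1 : q ^ 2 < 1 := by nlinarith
  refine tendsto_nhds_unique (tendsto_fullP (by positivity) hq1 (-1))
    (((tendsto_fullP h0 h1 (-1)).mul (tendsto_fullP h0 h1 1)).congr fun n => ?_)
  rw [← Finset.prod_mul_distrib]
  exact Finset.prod_congr rfl fun k _ => by ring

lemma oddP_sq {q : ℝ} (h0 : 0 < q) (h1 : q < 1) :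
    oddP (-1) (q ^ 2) = oddP (-1) q * oddP 1 q := by
  have hq1 : q ^ 2 < 1 := by nlinarith
  refine tendsto_nhds_unique (tendsto_oddP (by positivity) hq1 (-1))
    (((tendsto_oddP h0 h1 (-1)).mul (tendsto_oddP h0 h1 1)).congr fun n => ?_)
  rw [← Finset.prod_mul_distrib]
  exact Finset.prod_congr rfl fun k _ => by ring

/-- Euler's identity: partitions into odd parts against partitions into distinct parts. -/
lemma euler_identity {q : ℝ} (h0 : 0 < q) (h1 : q < 1) : oddP (-1) q * fullP 1 q = 1 := by
  have e1 := fullP_split h0 h1 (-1)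
  have e2 := fullP_sq h0 h1
  have hp := fullP_pos h0 h1 (z := -1) le_rfl
  rw [e2] at e1
  refine mul_left_cancel₀ hp.ne' ?_
  linarith

lemma t4_eq_div {q : ℝ} (h0 : 0 < q) (h1 : q < 1) :
    val q (toR t4) = fullP (-1) q / fullP 1 q := by
  have hp := fullP_pos h0 h1 (z := 1) (by norm_num)
  rw [eq_div_iff hp.ne', t4_product h0 h1]
  have e1 := fullP_split h0 h1 (-1)
  have e2 := euler_identity h0 h1
  linear_combination fullP (-1) (q ^ 2) * oddP (-1) q * e2 - e1

/-- The product `16 q ∏ (1 - q ^ (2 k)) ^ 4 (1 + q ^ (2 k)) ^ 8` for `a = θ₂ ^ 4`. -/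
def aProd (q : ℝ) : ℝ := 16 * q * (fullP (-1) (q ^ 2) * fullP 1 (q ^ 2) ^ 2) ^ 4

lemma aProd_pos {q : ℝ} (h0 : 0 < q) (h1 : q < 1) : 0 < aProd q := by
  have hq0 : 0 < q ^ 2 := by positivity
  have hq1 : q ^ 2 < 1 := by nlinarith
  have := fullP_pos hq0 hq1 (z := -1) le_rfl
  have := fullP_pos hq0 hq1 (z := 1) (by norm_num)
  unfold aProd
  positivity

lemma good_t3 : toR t3 ∈ good := Dm_t3.good
lemma good_t4 : toR t4 ∈ good := Dm_t4.good

lemma val_sa_eq {q : ℝ} (h0 : 0 < q) (h1 : q < 1) :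
    val q (toR sa) = val q (toR t3) ^ 4 - val q (toR t4) ^ 4 := by
  rw [sa, map_sub, map_pow, map_pow, val_sub h0.le h1 (pow_mem good_t3 4) (pow_mem good_t4 4),
    val_pow h0.le h1 good_t3, val_pow h0.le h1 good_t4]

lemma val_sb_eq {q : ℝ} (h0 : 0 < q) (h1 : q < 1) :
    val q (toR sb) = val q (toR t4) ^ 4 := by
  rw [sb, map_pow, val_pow h0.le h1 good_t4]

lemma sa_functional {q : ℝ} (h0 : 0 < q) (h1 : q < 1) :
    val q (toR sa) ^ 2 = 16 * val (q ^ 2) (toR sa) * val (q ^ 2) (toR t3) ^ 4 := by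
  have e1 := congrArg (fun f => val q (toR f)) four_dbl_sa
  have e2 := congrArg (fun f => val q (toR f)) t3_sq_add_t4_sq
  have g3 := pow_mem good_t3 2
  have g4 := pow_mem good_t4 2
  have hd : toR (dbl t3) ∈ good := by
    refine Dm.good (c := 1) (K := 2) fun n => ?_
    rw [coeff_toR]
    by_cases hn : 2 ∣ n
    · obtain ⟨k, rfl⟩ := hn
      rw [coeff_expand_mul 2 two_ne_zero, ← coeff_toR]
      refine (Dm_t3 k).trans ?_
      push_cast
      gcongr
      have : (0 : ℝ) ≤ k := Nat.cast_nonneg k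
      linarith
    · rw [coeff_expand_of_not_dvd 2 two_ne_zero _ hn]
      simp only [Int.cast_zero, abs_zero]
      positivity
  have hda : toR (dbl sa) ∈ good := by
    refine Dm.good (c := 8) (K := 200) fun n => ?_
    rw [coeff_toR]
    by_cases hn : 2 ∣ n
    · obtain ⟨k, rfl⟩ := hn
      rw [coeff_expand_mul 2 two_ne_zero, ← coeff_toR]
      refine (Dm_sa k).trans ?_
      push_cast
      gcongr
      have : (0 : ℝ) ≤ k := Nat.cast_nonneg k
      linarith
    · rw [coeff_expand_of_not_dvd 2 two_ne_zero _ hn]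
      simp only [Int.cast_zero, abs_zero]
      positivity
  have hnum : ∀ m : ℕ, toR ((m : ℤ⟦X⟧)) = C (m : ℝ) := fun m => by
    rw [map_natCast, map_natCast]
  have h4 : toR (4 : ℤ⟦X⟧) = C (4 : ℝ) := by simpa using hnum 4
  have h2 : toR (2 : ℤ⟦X⟧) = C (2 : ℝ) := by simpa using hnum 2
  simp only [map_mul, map_pow, map_sub, map_add, h4, h2] at e1 e2
  rw [val_mul h0.le h1 (C_mem_good _) hda, val_C, val_pow h0.le h1 (sub_mem g3 g4),
    val_sub h0.le h1 g3 g4, val_pow h0.le h1 good_t3, val_pow h0.le h1 good_t4, val_dbl] at e1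
  rw [val_mul h0.le h1 (C_mem_good _) (pow_mem hd 2), val_C, val_add h0.le h1 g3 g4,
    val_pow h0.le h1 good_t3, val_pow h0.le h1 good_t4, val_pow h0.le h1 hd, val_dbl] at e2
  rw [val_sa_eq h0 h1]
  set x := val q (toR t3)
  set y := val q (toR t4)
  calc (x ^ 4 - y ^ 4) ^ 2 = (x ^ 2 - y ^ 2) ^ 2 * (x ^ 2 + y ^ 2) ^ 2 := by ring
    _ = _ := by rw [← e1, e2]; ring

lemma aProd_functional {q : ℝ} (h0 : 0 < q) (h1 : q < 1) :
    aProd q ^ 2 = 16 * aProd (q ^ 2) * val (q ^ 2) (toR t3) ^ 4 := by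
  have hq0 : 0 < q ^ 2 := by positivity
  have hq1 : q ^ 2 < 1 := by nlinarith
  rw [t3_product hq0 hq1, aProd, aProd, fullP_sq hq0 hq1, fullP_split hq0 hq1 1]
  ring

end FibTheta

namespace FibTheta
open Filter Topology PowerSeries

/-! ### The product formula for `a` -/

lemma fullP_neg_one_le_one {q : ℝ} (h0 : 0 < q) (h1 : q < 1) : fullP (-1) q ≤ 1 := by
  refine le_of_tendsto (tendsto_fullP h0 h1 (-1)) (Eventually.of_forall fun n => ?_)
  refine Finset.prod_le_one (fun k _ => (factor_pos h0 h1 le_rfl k).le) fun k _ => ?_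
  have : 0 < q ^ (k + 1) := by positivity
  linarith

lemma fullP_neg_one_anti {x q : ℝ} (hx : 0 < x) (hxq : x ≤ q) (h1 : q < 1) :
    fullP (-1) q ≤ fullP (-1) x := by
  have h0 : 0 < q := hx.trans_le hxq
  refine le_of_tendsto_of_tendsto' (tendsto_fullP h0 h1 (-1))
    (tendsto_fullP hx (hxq.trans_lt h1) (-1)) fun n => ?_
  refine Finset.prod_le_prod (fun k _ => (factor_pos h0 h1 le_rfl k).le) fun k _ => ?_
  have : x ^ (k + 1) ≤ q ^ (k + 1) := by gcongr
  linarith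

lemma one_le_fullP_one {q : ℝ} (h0 : 0 < q) (h1 : q < 1) : 1 ≤ fullP 1 q := by
  refine ge_of_tendsto (tendsto_fullP h0 h1 1) (Eventually.of_forall fun n => ?_)
  refine le_trans (Finset.prod_const_one (s := Finset.range n)).ge
    (Finset.prod_le_prod (fun _ _ => zero_le_one) fun k _ => ?_)
  have : 0 < q ^ (k + 1) := by positivity
  linarith

lemma fullP_one_mono {x q : ℝ} (hx : 0 < x) (hxq : x ≤ q) (h1 : q < 1) :
    fullP 1 x ≤ fullP 1 q := by
  have h0 : 0 < q := hx.trans_le hxq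
  refine le_of_tendsto_of_tendsto' (tendsto_fullP hx (hxq.trans_lt h1) 1)
    (tendsto_fullP h0 h1 1) fun n => ?_
  refine Finset.prod_le_prod (fun k _ => by positivity) fun k _ => ?_
  gcongr

lemma one_add_le_val_t3 {x : ℝ} (h0 : 0 < x) (h1 : x < 1) : 1 + 2 * x ≤ val x (toR t3) := by
  have hs : Summable fun n => coeff n (toR t3) * x ^ n := summable_of_good' good_t3 h0.le h1
  have h := hs.sum_le_tsum (Finset.range 2) fun n _ => by
    rw [coeff_toR, t3, coeff_mk]
    positivity
  refine le_trans (le_of_eq ?_) h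
  have e0 := card_sqRoots_sq 0
  have e1 := card_sqRoots_sq 1
  simp only [wt] at e0 e1
  norm_num at e0 e1
  simp only [Finset.sum_range_succ, Finset.sum_range_zero, coeff_toR, t3, coeff_mk]
  norm_num [e0, e1]

lemma eight_mul_le_val_sa {x : ℝ} (h0 : 0 < x) (h1 : x < 1) : 8 * x ≤ val x (toR sa) := by
  rw [val_sa_eq h0 h1]
  have a := one_add_le_val_t3 h0 h1
  have hp := fullP_pos h0 h1 (z := 1) (by norm_num)
  have hm := fullP_pos h0 h1 (z := -1) le_rfl
  have b0 : 0 ≤ val x (toR t4) := by rw [t4_eq_div h0 h1]; positivity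
  have b1 : val x (toR t4) ≤ 1 := by
    rw [t4_eq_div h0 h1, div_le_one hp]
    exact (fullP_neg_one_le_one h0 h1).trans (one_le_fullP_one h0 h1)
  have c : (1 + 2 * x) ^ 4 ≤ val x (toR t3) ^ 4 := by gcongr
  have d : val x (toR t4) ^ 4 ≤ 1 := pow_le_one₀ b0 b1
  have e : 1 + 8 * x ≤ (1 + 2 * x) ^ 4 := by
    have : (1 + 2 * x) ^ 4 = 1 + 8 * x + (24 * x ^ 2 + 32 * x ^ 3 + 16 * x ^ 4) := by ring
    rw [this]
    have : 0 ≤ 24 * x ^ 2 + 32 * x ^ 3 + 16 * x ^ 4 := by positivity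
    linarith
  linarith

lemma val_sa_le {x q : ℝ} (hx : 0 < x) (hxq : x ≤ q) (h1 : q < 1) :
    val x (toR sa) ≤ x * ((∑' n, |coeff n (toR sa)| * q ^ n) / q) := by
  have h0 : 0 < q := hx.trans_le hxq
  have hs : Summable fun n => coeff n (toR sa) * x ^ n :=
    summable_of_good' Dm_sa.good hx.le (hxq.trans_lt h1)
  have hS : Summable fun n => |coeff n (toR sa)| * q ^ n := Dm_sa.summable h0.le h1
  have h : val x (toR sa) ≤ ∑' n, (x / q) * (|coeff n (toR sa)| * q ^ n) := by
    refine hs.tsum_le_tsum (fun n => ?_) (hS.mul_left _)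
    rcases n with _ | n
    · rw [coeff_toR, constCoeff_sa]
      simp
    · have e : x / q * (|coeff (n + 1) (toR sa)| * q ^ (n + 1))
          = |coeff (n + 1) (toR sa)| * (x * q ^ n) := by
        field_simp
        ring
      rw [e, pow_succ']
      refine mul_le_mul (le_abs_self _) (by gcongr) (by positivity) (abs_nonneg _)
  rw [tsum_mul_left] at h
  refine h.trans (le_of_eq ?_)
  ring

lemma aProd_le {x q : ℝ} (hx : 0 < x) (hxq : x ≤ q) (h1 : q < 1) :
    aProd x ≤ x * (16 * fullP 1 (q ^ 2) ^ 8) := by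
  have hx1 : x ^ 2 < 1 := by nlinarith
  have hq1 : q ^ 2 < 1 := by nlinarith
  have hx0 : 0 < x ^ 2 := by positivity
  have hle : x ^ 2 ≤ q ^ 2 := by gcongr
  have a := fullP_neg_one_le_one hx0 hx1
  have a0 := fullP_pos hx0 hx1 (z := -1) le_rfl
  have b0 := fullP_pos hx0 hx1 (z := 1) (by norm_num)
  have b := fullP_one_mono hx0 hle hq1
  calc aProd x = x * (16 * (fullP (-1) (x ^ 2) * fullP 1 (x ^ 2) ^ 2) ^ 4) := by
        unfold aProd; ring
    _ ≤ x * (16 * (1 * fullP 1 (q ^ 2) ^ 2) ^ 4) := by gcongr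
    _ = _ := by ring

lemma le_aProd {x q : ℝ} (hx : 0 < x) (hxq : x ≤ q) (h1 : q < 1) :
    x * (16 * fullP (-1) (q ^ 2) ^ 4) ≤ aProd x := by
  have hx1 : x ^ 2 < 1 := by nlinarith
  have hq1 : q ^ 2 < 1 := by nlinarith
  have hx0 : 0 < x ^ 2 := by positivity
  have hle : x ^ 2 ≤ q ^ 2 := by gcongr
  have a := fullP_neg_one_anti hx0 hle hq1
  have a0 := fullP_pos (hx0.trans_le hle) hq1 (z := -1) le_rfl
  have a1 := a0.trans_le a
  have b := one_le_fullP_one hx0 hx1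
  calc x * (16 * fullP (-1) (q ^ 2) ^ 4) = x * (16 * (fullP (-1) (q ^ 2) * 1 ^ 2) ^ 4) := by ring
    _ ≤ x * (16 * (fullP (-1) (x ^ 2) * fullP 1 (x ^ 2) ^ 2) ^ 4) := by gcongr
    _ = aProd x := by unfold aProd; ring

/-- A positive number whose powers `r ^ (2 ^ k)` stay in a compact subset of `(0, ∞)` is `1`. -/
lemma eq_one_of_pow_bounded {r c C : ℝ} (hr : 0 < r) (hc : 0 < c)
    (hlo : ∀ k : ℕ, c ≤ r ^ (2 ^ k)) (hhi : ∀ k : ℕ, r ^ (2 ^ k) ≤ C) : r = 1 := by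
  have h2 : Tendsto (fun k : ℕ => 2 ^ k) atTop atTop :=
    tendsto_pow_atTop_atTop_of_one_lt one_lt_two
  rcases lt_trichotomy r 1 with h | h | h
  · have := ge_of_tendsto ((tendsto_pow_atTop_nhds_zero_of_lt_one hr.le h).comp h2)
      (Eventually.of_forall hlo)
    linarith
  · exact h
  · obtain ⟨k, hk⟩ := (((tendsto_pow_atTop_atTop_of_one_lt h).comp h2).eventually_gt_atTop C).exists
    exact absurd (hhi k) (not_le.2 hk)

/-- The ratio of the two sides squares under `q ↦ q ^ 2` and is bounded above and below near
`q = 0`, hence is `1`. -/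
lemma val_sa_eq_aProd {q : ℝ} (h0 : 0 < q) (h1 : q < 1) : val q (toR sa) = aProd q := by
  set r : ℝ → ℝ := fun x => val x (toR sa) / aProd x with hr
  have hsq : ∀ x, 0 < x → x < 1 → r x ^ 2 = r (x ^ 2) := by
    intro x hx hx1
    have hx0 : 0 < x ^ 2 := by positivity
    have hx2 : x ^ 2 < 1 := by nlinarith
    have ht : 0 < val (x ^ 2) (toR t3) :=
      lt_of_lt_of_le (by positivity) (one_add_le_val_t3 hx0 hx2)
    have hp := aProd_pos hx0 hx2
    simp only [hr]
    rw [div_pow, sa_functional hx hx1, aProd_functional hx hx1]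
    field_simp
  have hpow : ∀ k : ℕ, r q ^ (2 ^ k) = r (q ^ (2 ^ k)) := by
    intro k
    induction k with
    | zero => simp
    | succ k ih =>
      rw [pow_succ, pow_mul, ih, hsq _ (by positivity) (pow_lt_one₀ h0.le h1 (by positivity)),
        ← pow_mul]
  have hq0 : 0 < q ^ 2 := by positivity
  have hq1 : q ^ 2 < 1 := by nlinarith
  have hm := fullP_pos hq0 hq1 (z := -1) le_rfl
  have hM := fullP_pos hq0 hq1 (z := 1) (by norm_num)
  set S := (∑' n, |coeff n (toR sa)| * q ^ n) / q with hS
  have key : r q = 1 := by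
    refine eq_one_of_pow_bounded (c := 8 / (16 * fullP 1 (q ^ 2) ^ 8))
      (C := S / (16 * fullP (-1) (q ^ 2) ^ 4)) ?_ (by positivity) (fun k => ?_) fun k => ?_
    · have := eight_mul_le_val_sa h0 h1
      exact div_pos (by linarith) (aProd_pos h0 h1)
    all_goals
      have hx : 0 < q ^ (2 ^ k) := by positivity
      have hxq : q ^ (2 ^ k) ≤ q := pow_le_of_le_one h0.le h1.le (by positivity)
      have hx1 := hxq.trans_lt h1
      have ha := aProd_pos hx hx1
      rw [hpow]
      simp only [hr]
    · rw [div_le_div_iff₀ (by positivity) ha]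
      have e1 := aProd_le hx hxq h1
      have e2 := eight_mul_le_val_sa hx hx1
      have e3 : 0 < 16 * fullP 1 (q ^ 2) ^ 8 := by positivity
      nlinarith [mul_le_mul_of_nonneg_right e2 e3.le]
    · rw [div_le_div_iff₀ ha (by positivity)]
      have e1 := le_aProd hx hxq h1
      have e2 := val_sa_le hx hxq h1
      have e3 : 0 < 16 * fullP (-1) (q ^ 2) ^ 4 := by positivity
      have e4 : 0 ≤ S := by
        refine div_nonneg (tsum_nonneg fun n => by positivity) h0.le
      nlinarith [mul_le_mul_of_nonneg_right e2 e3.le, mul_le_mul_of_nonneg_left e1 e4]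
  exact (div_eq_one_iff_eq (aProd_pos h0 h1).ne').1 key

/-- The quotient of eta products expressing `ξ₁ ξ₂`. -/
def kap (q : ℝ) : ℝ := fullP (-1) (q ^ 2) ^ 2 / oddP 1 q ^ 2

/-- The quotient of eta products expressing `ξ₁ / ξ₂`. -/
def rho (q : ℝ) : ℝ := fullP (-1) q / fullP 1 q

lemma kap_pos {q : ℝ} (h0 : 0 < q) (h1 : q < 1) : 0 < kap q := by
  have hq0 : 0 < q ^ 2 := by positivity
  have hq1 : q ^ 2 < 1 := by nlinarith
  have := fullP_pos hq0 hq1 (z := -1) le_rfl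
  have := oddP_pos h0 h1 (z := 1) (by norm_num)
  unfold kap
  positivity

lemma rho_pos {q : ℝ} (h0 : 0 < q) (h1 : q < 1) : 0 < rho q := by
  have := fullP_pos h0 h1 (z := -1) le_rfl
  have := fullP_pos h0 h1 (z := 1) (by norm_num)
  unfold rho
  positivity

lemma b0_eq : b0 = rho q0 ^ 4 := by
  rw [b0, val_sb_eq q0_pos q0_lt_one, t4_eq_div q0_pos q0_lt_one, rho]

lemma a0_mul_b0 : a0 * b0 = 16 * q0 * kap q0 ^ 4 := by
  have h0 := q0_pos
  have h1 := q0_lt_one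
  have hq0 : 0 < q0 ^ 2 := by positivity
  have hq1 : q0 ^ 2 < 1 := by nlinarith
  have ho := oddP_pos h0 h1 (z := 1) (by norm_num)
  have e1 := oddP_sq h0 h1
  have e2 := euler_identity hq0 hq1
  rw [a0, b0, val_sb_eq h0 h1, val_sa_eq_aProd h0 h1, t4_product h0 h1, aProd, kap]
  rw [e1] at e2
  have e3 : oddP (-1) q0 * fullP 1 (q0 ^ 2) = 1 / oddP 1 q0 := by
    rw [eq_div_iff ho.ne']; linarith
  calc _ = 16 * q0 * (fullP (-1) (q0 ^ 2) ^ 2 * (oddP (-1) q0 * fullP 1 (q0 ^ 2)) ^ 2) ^ 4 := by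
        ring
    _ = _ := by rw [e3]; field_simp

end FibTheta

namespace FibTheta
open Filter Topology

/-! ### Fibonacci products -/

open scoped goldenRatio

lemma goldenConj_eq : ψ = φ * (-q0) := by
  have h : (√5) ^ 2 = 5 := Real.sq_sqrt (by norm_num)
  rw [Real.goldenConj, Real.goldenRatio, q0]
  linear_combination (-1 / 4 : ℝ) * h

lemma fib_eq (n : ℕ) : (Nat.fib n : ℝ) = φ ^ n * (1 - (-q0) ^ n) / √5 := by
  rw [Real.coe_fib_eq, goldenConj_eq, mul_pow]
  ring

/-- Binet's formula for the Lucas numbers, written as `2 f_{n+1} - f_n`. -/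
lemma lucas_eq (n : ℕ) :
    2 * (Nat.fib (n + 1) : ℝ) - Nat.fib n = φ ^ n * (1 + (-q0) ^ n) := by
  have h5 : (0 : ℝ) < √5 := by positivity
  have h : φ ^ n * (1 + (-q0) ^ n) = φ ^ n + ψ ^ n := by
    rw [goldenConj_eq, mul_pow]; ring
  rw [h, Real.coe_fib_eq, Real.coe_fib_eq]
  field_simp
  have e1 : √5 = 2 * φ - 1 := by rw [Real.goldenRatio]; ring
  have e2 : √5 = 1 - 2 * ψ := by rw [Real.goldenConj]; ring
  rw [pow_succ, pow_succ]
  linear_combination -(φ ^ n) * e1 - ψ ^ n * e2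

/-- Cassini's identity at an even index. -/
lemma cassini (n : ℕ) :
    (Nat.fib (2 * n + 1) : ℝ) ^ 2 - Nat.fib (2 * n + 1) * Nat.fib (2 * n)
      - (Nat.fib (2 * n) : ℝ) ^ 2 = 1 := by
  induction n with
  | zero => simp
  | succ n ih =>
    have e1 : (Nat.fib (2 * n + 2) : ℝ) = Nat.fib (2 * n) + Nat.fib (2 * n + 1) := by
      rw [Nat.fib_add_two]; push_cast; ring
    have e2 : (Nat.fib (2 * n + 3) : ℝ) = Nat.fib (2 * n + 1) + Nat.fib (2 * n + 2) := by
      rw [Nat.fib_add_two]; push_cast; ring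
    rw [show 2 * (n + 1) + 1 = 2 * n + 3 by ring, show 2 * (n + 1) = 2 * n + 2 by ring, e2, e1]
    linear_combination ih

/-- The partial products of `ξ₁` without its first two factors. -/
def Tp (N : ℕ) : ℝ := ∏ i ∈ Finset.range N, (1 + 1 / (Nat.fib (i + 4) : ℝ))

/-- The partial products of `ξ₂`. -/
def Tm (N : ℕ) : ℝ := ∏ i ∈ Finset.range N, (1 - 1 / (Nat.fib (i + 4) : ℝ))

lemma three_le_fib (i : ℕ) : (3 : ℝ) ≤ Nat.fib (i + 4) := by
  have : Nat.fib 4 ≤ Nat.fib (i + 4) := Nat.fib_mono (by omega)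
  exact_mod_cast this

lemma Tm_pos (N : ℕ) : 0 < Tm N := by
  refine Finset.prod_pos fun i _ => ?_
  have := three_le_fib i
  rw [sub_pos, div_lt_one (by linarith)]
  linarith

lemma pow_q0_lt (n : ℕ) : 0 < 1 - q0 ^ (n + 1) := by
  have := pow_lt_one₀ q0_pos.le q0_lt_one (n := n + 1) (by omega)
  linarith

/-- Partial products of `fullP z q0`. -/
def fp (z : ℝ) (n : ℕ) : ℝ := ∏ k ∈ Finset.range n, (1 + z * q0 ^ (k + 1))

/-- Partial products of `oddP 1 q0`. -/
def op (n : ℕ) : ℝ := ∏ k ∈ Finset.range n, (1 + 1 * q0 ^ (2 * k + 1))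

/-- Partial products of `fullP (-1) (q0 ^ 2)`. -/
def ep (n : ℕ) : ℝ := ∏ k ∈ Finset.range n, (1 + (-1) * (q0 ^ 2) ^ (k + 1))

lemma fp_pos {z : ℝ} (hz : -1 ≤ z) (n : ℕ) : 0 < fp z n :=
  Finset.prod_pos fun k _ => factor_pos q0_pos q0_lt_one hz k

lemma op_pos (n : ℕ) : 0 < op n :=
  Finset.prod_pos fun k _ => factor_pos q0_pos q0_lt_one (by norm_num) (2 * k)

lemma ep_pos (n : ℕ) : 0 < ep n :=
  Finset.prod_pos fun k _ => factor_pos (by have := q0_pos; positivity)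
    (by have := q0_pos; have := q0_lt_one; nlinarith) le_rfl k

/-- Two consecutive factors of `ξ₁ ξ₂`, from `f_m ^ 2 - 1 = f_{m-2} f_{m+2}` for even `m` and
`f_m ^ 2 - 1 = f_{m-1} f_{m+1}` for odd `m`. -/
lemma block_two (n : ℕ) :
    (1 + 1 / (Nat.fib (2 * n + 4) : ℝ)) * (1 + 1 / (Nat.fib (2 * n + 5) : ℝ))
      * ((1 - 1 / (Nat.fib (2 * n + 4) : ℝ)) * (1 - 1 / (Nat.fib (2 * n + 5) : ℝ)))
    = (1 - q0 ^ (2 * n + 2)) * (1 - q0 ^ (2 * n + 6)) ^ 2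
      / ((1 - q0 ^ (2 * n + 4)) * (1 + q0 ^ (2 * n + 5)) ^ 2) := by
  have c := cassini (n + 2)
  rw [show 2 * (n + 2) + 1 = 2 * n + 5 by ring, show 2 * (n + 2) = 2 * n + 4 by ring] at c
  have hx := three_le_fib (2 * n)
  have hy := three_le_fib (2 * n + 1)
  rw [show 2 * n + 1 + 4 = 2 * n + 5 by ring] at hy
  have r1 : (Nat.fib (2 * n + 6) : ℝ) = Nat.fib (2 * n + 4) + Nat.fib (2 * n + 5) := by
    rw [Nat.fib_add_two]; push_cast; ring
  have r2 : (Nat.fib (2 * n + 2) : ℝ) = 2 * Nat.fib (2 * n + 4) - Nat.fib (2 * n + 5) := by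
    rw [Nat.fib_add_two (n := 2 * n + 3), Nat.fib_add_two (n := 2 * n + 2)]; push_cast; ring
  have s1 : (Nat.fib (2 * n + 4) : ℝ) ^ 2 - 1 = Nat.fib (2 * n + 2) * Nat.fib (2 * n + 6) := by
    rw [r1, r2]; linear_combination c
  have s2 : (Nat.fib (2 * n + 5) : ℝ) ^ 2 - 1 = Nat.fib (2 * n + 4) * Nat.fib (2 * n + 6) := by
    rw [r1]; linear_combination c
  have lhs : (1 + 1 / (Nat.fib (2 * n + 4) : ℝ)) * (1 + 1 / (Nat.fib (2 * n + 5) : ℝ))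
      * ((1 - 1 / (Nat.fib (2 * n + 4) : ℝ)) * (1 - 1 / (Nat.fib (2 * n + 5) : ℝ)))
      = Nat.fib (2 * n + 2) * Nat.fib (2 * n + 6) ^ 2
        / (Nat.fib (2 * n + 4) * Nat.fib (2 * n + 5) ^ 2) := by
    generalize (Nat.fib (2 * n + 4) : ℝ) = x at *
    generalize (Nat.fib (2 * n + 5) : ℝ) = y at *
    generalize (Nat.fib (2 * n + 2) : ℝ) = u at *
    generalize (Nat.fib (2 * n + 6) : ℝ) = v at *
    have hx0 : x ≠ 0 := by linarith
    have hy0 : y ≠ 0 := by linarith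
    have : (1 + 1 / x) * (1 + 1 / y) * ((1 - 1 / x) * (1 - 1 / y))
        = (x ^ 2 - 1) * (y ^ 2 - 1) / (x ^ 2 * y ^ 2) := by field_simp; ring
    rw [this, s1, s2]
    field_simp
  rw [lhs, fib_eq, fib_eq, fib_eq, fib_eq]
  have h5 : (0 : ℝ) < √5 := by positivity
  have hφ := Real.goldenRatio_pos
  have p4 := pow_q0_lt (2 * n + 3)
  have hq := q0_pos
  have p5 : 0 < 1 + q0 ^ (2 * n + 5) := by positivity
  have n2 : (-q0) ^ (2 * n + 2) = q0 ^ (2 * n + 2) := Even.neg_pow ⟨n + 1, by ring⟩ _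
  have n4 : (-q0) ^ (2 * n + 4) = q0 ^ (2 * n + 4) := Even.neg_pow ⟨n + 2, by ring⟩ _
  have n6 : (-q0) ^ (2 * n + 6) = q0 ^ (2 * n + 6) := Even.neg_pow ⟨n + 3, by ring⟩ _
  have n5 : (-q0) ^ (2 * n + 5) = -q0 ^ (2 * n + 5) := Odd.neg_pow ⟨n + 2, by ring⟩ _
  rw [n2, n4, n6, n5, sub_neg_eq_add]
  rw [show 2 * n + 3 + 1 = 2 * n + 4 by ring] at p4
  generalize 1 - q0 ^ (2 * n + 4) = d4 at *
  generalize 1 + q0 ^ (2 * n + 5) = d5 at *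
  generalize 1 - q0 ^ (2 * n + 2) = d2 at *
  generalize 1 - q0 ^ (2 * n + 6) = d6 at *
  rw [show φ ^ (2 * n + 4) = φ ^ (2 * n) * φ ^ 4 by ring,
    show φ ^ (2 * n + 5) = φ ^ (2 * n) * φ ^ 5 by ring,
    show φ ^ (2 * n + 2) = φ ^ (2 * n) * φ ^ 2 by ring,
    show φ ^ (2 * n + 6) = φ ^ (2 * n) * φ ^ 6 by ring]
  have hP : 0 < φ ^ (2 * n) := by positivity
  generalize φ ^ (2 * n) = P at *
  generalize φ = w at *
  field_simp

/-- The ratio of four consecutive factors of `ξ₁` and of `ξ₂`, from the factorizations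
`f_{4j} ± 1`, …, `f_{4j+3} ± 1` into Fibonacci and Lucas numbers of index about `2j`. -/
lemma block_four (n : ℕ) :
    (1 + 1 / (Nat.fib (4 * n + 4) : ℝ)) * (1 + 1 / (Nat.fib (4 * n + 5) : ℝ))
      * (1 + 1 / (Nat.fib (4 * n + 6) : ℝ)) * (1 + 1 / (Nat.fib (4 * n + 7) : ℝ))
      * ((1 - q0 ^ (2 * n + 1)) * (1 - q0 ^ (2 * n + 2)) ^ 2 * (1 - q0 ^ (2 * n + 3)))
    = (1 - 1 / (Nat.fib (4 * n + 4) : ℝ)) * (1 - 1 / (Nat.fib (4 * n + 5) : ℝ))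
      * (1 - 1 / (Nat.fib (4 * n + 6) : ℝ)) * (1 - 1 / (Nat.fib (4 * n + 7) : ℝ))
      * ((1 + q0 ^ (2 * n + 1)) * (1 + q0 ^ (2 * n + 2)) ^ 2 * (1 + q0 ^ (2 * n + 3))) := by
  have c := cassini (n + 1)
  rw [show 2 * (n + 1) + 1 = 2 * n + 3 by ring, show 2 * (n + 1) = 2 * n + 2 by ring] at c
  have h4 := three_le_fib (4 * n)
  have h5 := three_le_fib (4 * n + 1)
  have h6 := three_le_fib (4 * n + 2)
  have h7 := three_le_fib (4 * n + 3)
  rw [show 4 * n + 1 + 4 = 4 * n + 5 by ring] at h5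
  rw [show 4 * n + 2 + 4 = 4 * n + 6 by ring] at h6
  rw [show 4 * n + 3 + 4 = 4 * n + 7 by ring] at h7
  have b1 := fib_eq (2 * n + 1)
  have b2 := fib_eq (2 * n + 2)
  have b3 := fib_eq (2 * n + 3)
  have l1 := lucas_eq (2 * n + 1)
  have l2 := lucas_eq (2 * n + 2)
  have l3 := lucas_eq (2 * n + 3)
  have n1 : (-q0) ^ (2 * n + 1) = -q0 ^ (2 * n + 1) := Odd.neg_pow ⟨n, by ring⟩ _
  have n2 : (-q0) ^ (2 * n + 2) = q0 ^ (2 * n + 2) := Even.neg_pow ⟨n + 1, by ring⟩ _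
  have n3 : (-q0) ^ (2 * n + 3) = -q0 ^ (2 * n + 3) := Odd.neg_pow ⟨n + 1, by ring⟩ _
  rw [show 2 * n + 1 + 1 = 2 * n + 2 by ring] at l1
  rw [show 2 * n + 2 + 1 = 2 * n + 3 by ring] at l2
  rw [show 2 * n + 3 + 1 = 2 * n + 4 by ring] at l3
  rw [n1] at b1 l1
  rw [n2] at b2 l2
  rw [n3] at b3 l3
  have r1 : (Nat.fib (2 * n + 1) : ℝ) = Nat.fib (2 * n + 3) - Nat.fib (2 * n + 2) := by
    rw [Nat.fib_add_two (n := 2 * n + 1)]; push_cast; ring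
  have r4 : (Nat.fib (2 * n + 4) : ℝ) = Nat.fib (2 * n + 3) + Nat.fib (2 * n + 2) := by
    rw [Nat.fib_add_two (n := 2 * n + 2)]; push_cast; ring
  have d5 : (Nat.fib (4 * n + 5) : ℝ) = Nat.fib (2 * n + 3) ^ 2 + Nat.fib (2 * n + 2) ^ 2 := by
    rw [show 4 * n + 5 = 2 * (2 * n + 2) + 1 by ring, Nat.fib_two_mul_add_one]; push_cast; ring
  have d4 : (Nat.fib (4 * n + 4) : ℝ)
      = Nat.fib (2 * n + 2) * (2 * Nat.fib (2 * n + 3) - Nat.fib (2 * n + 2)) := by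
    rw [show 4 * n + 4 = 2 * (2 * n + 2) by ring, Nat.fib_two_mul, Nat.cast_mul, Nat.cast_sub]
    · push_cast; ring
    · have : Nat.fib (2 * n + 2) ≤ Nat.fib (2 * n + 2 + 1) := Nat.fib_mono (by omega)
      omega
  have d6 : (Nat.fib (4 * n + 6) : ℝ) = Nat.fib (4 * n + 4) + Nat.fib (4 * n + 5) := by
    rw [Nat.fib_add_two]; push_cast; ring
  have d7 : (Nat.fib (4 * n + 7) : ℝ) = Nat.fib (4 * n + 5) + Nat.fib (4 * n + 6) := by
    rw [Nat.fib_add_two]; push_cast; ring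
  have hs : (0 : ℝ) < √5 := by positivity
  have hφ := Real.goldenRatio_pos
  have k1 : 0 < φ ^ (2 * n + 1) := by positivity
  have k2 : 0 < φ ^ (2 * n + 2) := by positivity
  have k3 : 0 < φ ^ (2 * n + 3) := by positivity
  rw [r1] at b1 l1
  rw [r4] at l3
  generalize (Nat.fib (2 * n + 2) : ℝ) = x at *
  generalize (Nat.fib (2 * n + 3) : ℝ) = y at *
  generalize (Nat.fib (4 * n + 4) : ℝ) = f4 at *
  generalize (Nat.fib (4 * n + 5) : ℝ) = f5 at *
  generalize (Nat.fib (4 * n + 6) : ℝ) = f6 at *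
  generalize (Nat.fib (4 * n + 7) : ℝ) = f7 at *
  generalize q0 ^ (2 * n + 1) = t1 at *
  generalize q0 ^ (2 * n + 2) = t2 at *
  generalize q0 ^ (2 * n + 3) = t3 at *
  generalize φ ^ (2 * n + 1) = w1 at *
  generalize φ ^ (2 * n + 2) = w2 at *
  generalize φ ^ (2 * n + 3) = w3 at *
  generalize √5 = s at *
  have p4 : f4 + 1 = (y - x) * (2 * x + y) := by rw [d4]; linear_combination -c
  have m4 : f4 - 1 = y * (3 * x - y) := by rw [d4]; linear_combination c
  have p5 : f5 + 1 = y * (2 * y - x) := by rw [d5]; linear_combination -c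
  have m5 : f5 - 1 = x * (2 * x + y) := by rw [d5]; linear_combination c
  have p6 : f6 + 1 = (x + y) * (2 * y - x) := by rw [d6, d5, d4]; linear_combination -c
  have m6 : f6 - 1 = x * (x + 3 * y) := by rw [d6, d5, d4]; linear_combination c
  have p7 : f7 + 1 = y * (x + 3 * y) := by rw [d7, d6, d5, d4]; linear_combination -c
  have m7 : f7 - 1 = (x + y) * (2 * x + y) := by rw [d7, d6, d5, d4]; linear_combination c
  have z4 : f4 ≠ 0 := by linarith
  have z5 : f5 ≠ 0 := by linarith
  have z6 : f6 ≠ 0 := by linarith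
  have z7 : f7 ≠ 0 := by linarith
  have g1 : 1 + t1 = (y - x) * s / w1 := by rw [b1]; field_simp; ring
  have g2 : 1 - t2 = x * s / w2 := by rw [b2]; field_simp
  have g3 : 1 + t3 = y * s / w3 := by rw [b3]; field_simp; ring
  have e1 : 1 - t1 = (3 * x - y) / w1 := by
    rw [eq_div_iff k1.ne']; linear_combination -l1
  have e2 : 1 + t2 = (2 * y - x) / w2 := by
    rw [eq_div_iff k2.ne']; linear_combination -l2
  have e3 : 1 - t3 = (2 * x + y) / w3 := by
    rw [eq_div_iff k3.ne']; linear_combination -l3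
  have hp : ∀ f : ℝ, f ≠ 0 → 1 + 1 / f = (f + 1) * f⁻¹ := fun f hf => by field_simp
  have hm : ∀ f : ℝ, f ≠ 0 → 1 - 1 / f = (f - 1) * f⁻¹ := fun f hf => by field_simp
  rw [hp _ z4, hp _ z5, hp _ z6, hp _ z7, hm _ z4, hm _ z5, hm _ z6, hm _ z7,
    p4, p5, p6, p7, m4, m5, m6, m7, g1, g2, g3, e1, e2, e3]
  generalize 2 * x + y = u1
  generalize 2 * y - x = u2
  generalize x + 3 * y = u3
  generalize 3 * x - y = u4
  generalize y - x = u5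
  generalize x + y = u6
  ring

end FibTheta

/-! ### The limits and the conclusion -/

namespace FibTheta
open Filter Topology

/-- The algebraic constant with `ξ₁ ξ₂ = 3 c₁ κ(q₀)`. -/
def c1 : ℝ := op 2 ^ 2 * ep 1 / ep 2 ^ 2

lemma c1_pos : 0 < c1 := by
  have := op_pos 2
  have := ep_pos 1
  have := ep_pos 2
  unfold c1
  positivity

lemma ep_succ (n : ℕ) : ep (n + 1) = ep n * (1 - q0 ^ (2 * n + 2)) := by
  rw [ep, ep, Finset.prod_range_succ]; ring

lemma op_succ (n : ℕ) : op (n + 1) = op n * (1 + q0 ^ (2 * n + 1)) := by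
  rw [op, op, Finset.prod_range_succ]; ring

lemma fp_succ (z : ℝ) (n : ℕ) : fp z (n + 1) = fp z n * (1 + z * q0 ^ (n + 1)) := by
  rw [fp, fp, Finset.prod_range_succ]

/-- Telescoping form of `block_two`. -/
lemma Tp_mul_Tm (n : ℕ) :
    Tp (2 * n) * Tm (2 * n) = c1 * (ep n * ep (n + 2) ^ 2 / (ep (n + 1) * op (n + 2) ^ 2)) := by
  induction n with
  | zero =>
    have h0 : ep 0 = 1 := by simp [ep]
    have := (op_pos 2).ne'
    have := (ep_pos 1).ne'
    have := (ep_pos 2).ne'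
    simp only [Tp, Tm, c1, h0, mul_zero, Finset.range_zero, Finset.prod_empty, zero_add]
    field_simp
  | succ n ih =>
    have a0 := (ep_pos n).ne'
    have a1 := (ep_pos (n + 1)).ne'
    have a2 := (ep_pos (n + 2)).ne'
    have a3 := (op_pos (n + 2)).ne'
    have b := block_two n
    have hq := q0_pos
    have q4 : 1 - q0 ^ (2 * n + 4) ≠ 0 := (pow_q0_lt (2 * n + 3)).ne'
    have q5 : 1 + q0 ^ (2 * n + 5) ≠ 0 := by positivity
    have s0 := ep_succ n
    have s1 : ep (n + 2) = ep (n + 1) * (1 - q0 ^ (2 * n + 4)) := ep_succ (n + 1)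
    have s2 : ep (n + 3) = ep (n + 2) * (1 - q0 ^ (2 * n + 6)) := ep_succ (n + 2)
    have s3 : op (n + 3) = op (n + 2) * (1 + q0 ^ (2 * n + 5)) := op_succ (n + 2)
    have eT : Tp (2 * (n + 1)) * Tm (2 * (n + 1)) = Tp (2 * n) * Tm (2 * n) *
        ((1 + 1 / (Nat.fib (2 * n + 4) : ℝ)) * (1 + 1 / (Nat.fib (2 * n + 5) : ℝ))
        * ((1 - 1 / (Nat.fib (2 * n + 4) : ℝ)) * (1 - 1 / (Nat.fib (2 * n + 5) : ℝ)))) := by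
      rw [show 2 * (n + 1) = 2 * n + 1 + 1 by ring, Tp, Tp, Tm, Tm, Finset.prod_range_succ,
        Finset.prod_range_succ, Finset.prod_range_succ, Finset.prod_range_succ,
        show 2 * n + 1 + 4 = 2 * n + 5 by ring]
      ring
    rw [eT, ih, b, show n + 1 + 2 = n + 3 by ring, show n + 1 + 1 = n + 2 by ring, s3, s2]
    generalize op (n + 2) = o at *
    generalize 1 + q0 ^ (2 * n + 5) = r5 at *
    generalize 1 - q0 ^ (2 * n + 6) = r6 at *
    have s1' : 1 - q0 ^ (2 * n + 4) = ep (n + 2) / ep (n + 1) := by rw [s1]; field_simp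
    have s0' : 1 - q0 ^ (2 * n + 2) = ep (n + 1) / ep n := by rw [s0]; field_simp
    rw [s1', s0']
    generalize ep (n + 2) = x2 at *
    generalize ep (n + 1) = x1 at *
    generalize ep n = x0 at *
    field_simp

/-- Telescoping form of `block_four`. -/
lemma Tp_mul_fp (n : ℕ) :
    Tp (4 * n) * (fp (-1) (2 * n) * fp (-1) (2 * n + 1)) * (1 + q0)
      = Tm (4 * n) * (fp 1 (2 * n) * fp 1 (2 * n + 1)) * (1 - q0) := by
  induction n with
  | zero =>
    simp only [Tp, Tm, fp, mul_zero, Finset.range_zero, Finset.prod_empty, zero_add,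
      Finset.prod_range_one]
    ring
  | succ n ih =>
    have b := block_four n
    have eP : Tp (4 * (n + 1)) = Tp (4 * n) * ((1 + 1 / (Nat.fib (4 * n + 4) : ℝ))
        * (1 + 1 / (Nat.fib (4 * n + 5) : ℝ)) * (1 + 1 / (Nat.fib (4 * n + 6) : ℝ))
        * (1 + 1 / (Nat.fib (4 * n + 7) : ℝ))) := by
      rw [show 4 * (n + 1) = 4 * n + 1 + 1 + 1 + 1 by ring, Tp, Tp, Finset.prod_range_succ,
        Finset.prod_range_succ, Finset.prod_range_succ, Finset.prod_range_succ,
        show 4 * n + 1 + 4 = 4 * n + 5 by ring, show 4 * n + 1 + 1 + 4 = 4 * n + 6 by ring,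
        show 4 * n + 1 + 1 + 1 + 4 = 4 * n + 7 by ring]
      ring
    have eM : Tm (4 * (n + 1)) = Tm (4 * n) * ((1 - 1 / (Nat.fib (4 * n + 4) : ℝ))
        * (1 - 1 / (Nat.fib (4 * n + 5) : ℝ)) * (1 - 1 / (Nat.fib (4 * n + 6) : ℝ))
        * (1 - 1 / (Nat.fib (4 * n + 7) : ℝ))) := by
      rw [show 4 * (n + 1) = 4 * n + 1 + 1 + 1 + 1 by ring, Tm, Tm, Finset.prod_range_succ,
        Finset.prod_range_succ, Finset.prod_range_succ, Finset.prod_range_succ,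
        show 4 * n + 1 + 4 = 4 * n + 5 by ring, show 4 * n + 1 + 1 + 4 = 4 * n + 6 by ring,
        show 4 * n + 1 + 1 + 1 + 4 = 4 * n + 7 by ring]
      ring
    have hf : ∀ z, fp z (2 * (n + 1)) * fp z (2 * (n + 1) + 1) = fp z (2 * n) * fp z (2 * n + 1) *
        ((1 + z * q0 ^ (2 * n + 1)) * (1 + z * q0 ^ (2 * n + 2)) ^ 2
          * (1 + z * q0 ^ (2 * n + 3))) := by
      intro z
      rw [show 2 * (n + 1) + 1 = 2 * n + 2 + 1 by ring, show 2 * (n + 1) = 2 * n + 1 + 1 by ring,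
        fp_succ z (2 * n + 2), show 2 * n + 2 = 2 * n + 1 + 1 by ring, fp_succ z (2 * n + 1),
        fp_succ z (2 * n)]
      ring
    rw [eP, eM, hf, hf]
    simp only [neg_mul, one_mul, ← sub_eq_add_neg]
    generalize (1 + 1 / (Nat.fib (4 * n + 4) : ℝ)) * (1 + 1 / (Nat.fib (4 * n + 5) : ℝ))
      * (1 + 1 / (Nat.fib (4 * n + 6) : ℝ)) * (1 + 1 / (Nat.fib (4 * n + 7) : ℝ)) = A at *
    generalize (1 - 1 / (Nat.fib (4 * n + 4) : ℝ)) * (1 - 1 / (Nat.fib (4 * n + 5) : ℝ))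
      * (1 - 1 / (Nat.fib (4 * n + 6) : ℝ)) * (1 - 1 / (Nat.fib (4 * n + 7) : ℝ)) = B at *
    generalize (1 - q0 ^ (2 * n + 1)) * (1 - q0 ^ (2 * n + 2)) ^ 2 * (1 - q0 ^ (2 * n + 3))
      = U at *
    generalize (1 + q0 ^ (2 * n + 1)) * (1 + q0 ^ (2 * n + 2)) ^ 2 * (1 + q0 ^ (2 * n + 3))
      = V at *
    generalize fp (-1) (2 * n) * fp (-1) (2 * n + 1) = W at *
    generalize fp 1 (2 * n) * fp 1 (2 * n + 1) = Z at *
    linear_combination A * U * ih + Tm (4 * n) * Z * (1 - q0) * b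

lemma F_eq_fib : ∀ n, F n = Nat.fib (n + 1)
  | 0 => rfl
  | 1 => rfl
  | n + 2 => by rw [F, F_eq_fib (n + 1), F_eq_fib n, Nat.fib_add_two (n := n + 1), add_comm]

lemma prod_xi1 (N : ℕ) : ∏ n ∈ Finset.Icc 1 (N + 2), (1 + 1 / (F n : ℝ)) = 3 * Tp N := by
  induction N with
  | zero =>
    rw [show Finset.Icc 1 (0 + 2) = {1, 2} by decide, Finset.prod_pair (by norm_num), Tp]
    norm_num [F]
  | succ N ih =>
    rw [show N + 1 + 2 = N + 2 + 1 by ring, Finset.prod_Icc_succ_top (by omega), ih, Tp, Tp,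
      Finset.prod_range_succ, F_eq_fib]
    ring

lemma prod_xi2 (N : ℕ) : ∏ n ∈ Finset.Icc 3 (N + 2), (1 - 1 / (F n : ℝ)) = Tm N := by
  induction N with
  | zero => simp [Tm]
  | succ N ih =>
    rw [show N + 1 + 2 = N + 2 + 1 by ring, Finset.prod_Icc_succ_top (by omega), ih, Tm, Tm,
      Finset.prod_range_succ, F_eq_fib]

section Limits
variable {ξ1 ξ2 : ℝ}

lemma xi_mul (h1 : Tendsto Tp atTop (𝓝 (ξ1 / 3))) (h2 : Tendsto Tm atTop (𝓝 ξ2)) :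
    ξ1 * ξ2 = 3 * c1 * kap q0 := by
  have h0 := q0_pos
  have hl := q0_lt_one
  have hq0 : 0 < q0 ^ 2 := by positivity
  have hq1 : q0 ^ 2 < 1 := by nlinarith
  have hE : Tendsto ep atTop (𝓝 (fullP (-1) (q0 ^ 2))) := tendsto_fullP hq0 hq1 (-1)
  have hO : Tendsto op atTop (𝓝 (oddP 1 q0)) := tendsto_oddP h0 hl 1
  have e0 := fullP_pos hq0 hq1 (z := -1) le_rfl
  have o0 := oddP_pos h0 hl (z := 1) (by norm_num)
  have h2n : Tendsto (fun n : ℕ => 2 * n) atTop atTop := tendsto_id.const_mul_atTop' two_pos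
  have hL := (h1.comp h2n).mul (h2.comp h2n)
  have hR := ((hE.mul ((hE.comp (tendsto_add_atTop_nat 2)).pow 2)).div
    ((hE.comp (tendsto_add_atTop_nat 1)).mul ((hO.comp (tendsto_add_atTop_nat 2)).pow 2))
    (by positivity)).const_mul c1
  have := tendsto_nhds_unique (hL.congr fun n => Tp_mul_Tm n) hR
  rw [kap]
  field_simp at this ⊢
  linarith

lemma xi_div (h1 : Tendsto Tp atTop (𝓝 (ξ1 / 3))) (h2 : Tendsto Tm atTop (𝓝 ξ2)) :
    ξ1 * rho q0 ^ 2 * (1 + q0) = 3 * ξ2 * (1 - q0) := by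
  have h0 := q0_pos
  have hl := q0_lt_one
  have hN : Tendsto (fp (-1)) atTop (𝓝 (fullP (-1) q0)) := tendsto_fullP h0 hl (-1)
  have hP : Tendsto (fp 1) atTop (𝓝 (fullP 1 q0)) := tendsto_fullP h0 hl 1
  have p0 := fullP_pos h0 hl (z := 1) (by norm_num)
  have h2n : Tendsto (fun n : ℕ => 2 * n) atTop atTop := tendsto_id.const_mul_atTop' two_pos
  have h2n1 : Tendsto (fun n : ℕ => 2 * n + 1) atTop atTop := (tendsto_add_atTop_nat 1).comp h2n
  have h4n : Tendsto (fun n : ℕ => 4 * n) atTop atTop :=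
    tendsto_id.const_mul_atTop' (by norm_num)
  have hL := ((h1.comp h4n).mul ((hN.comp h2n).mul (hN.comp h2n1))).mul_const (1 + q0)
  have hR := ((h2.comp h4n).mul ((hP.comp h2n).mul (hP.comp h2n1))).mul_const (1 - q0)
  have := tendsto_nhds_unique (hL.congr fun n => Tp_mul_fp n) hR
  rw [rho]
  field_simp at this ⊢
  linarith

end Limits

lemma isAlgebraic_q0 : IsAlgebraic ℚ q0 := by
  refine ⟨Polynomial.X ^ 2 - 3 * Polynomial.X + 1, ?_, ?_⟩
  · intro h
    have := congrArg (Polynomial.eval 0) h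
    simp at this
  · have := q0_sq
    simp only [map_add, map_sub, map_mul, map_pow, Polynomial.aeval_X, map_one, map_ofNat]
    linarith

lemma isAlgebraic_c1 : IsAlgebraic ℚ c1 := by
  have hq := isAlgebraic_q0
  have one : IsAlgebraic ℚ (1 : ℝ) := isAlgebraic_one
  have he : ∀ n, IsAlgebraic ℚ (ep n) := fun n => by
    induction n with
    | zero => simpa [ep] using one
    | succ n ih => rw [ep_succ]; exact ih.mul (one.sub (hq.pow _))
  have ho : ∀ n, IsAlgebraic ℚ (op n) := fun n => by
    induction n with
    | zero => simpa [op] using one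
    | succ n ih => rw [op_succ]; exact ih.mul (one.add (hq.pow _))
  rw [c1, div_eq_mul_inv]
  exact (((ho 2).pow 2).mul (he 1)).mul ((he 2).pow 2).inv

/-- The theorem in terms of `Nat.fib`: the values `a₀`, `b₀` are algebraic over `ℚ(ξ₁, ξ₂)`, so
`ξ₁`, `ξ₂` inherit their algebraic independence. -/
theorem main {ξ1 ξ2 : ℝ} (h1 : Tendsto Tp atTop (𝓝 (ξ1 / 3))) (h2 : Tendsto Tm atTop (𝓝 ξ2)) :
    AlgebraicIndependent ℚ ![ξ1, ξ2] := by
  have hm := xi_mul h1 h2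
  have hd := xi_div h1 h2
  have h0 := q0_pos
  have hl := q0_lt_one
  have hk := kap_pos h0 hl
  have hr := rho_pos h0 hl
  have hc := c1_pos
  have hne : ξ1 * ξ2 ≠ 0 := by rw [hm]; positivity
  have hx1 : ξ1 ≠ 0 := left_ne_zero_of_mul hne
  set A := Algebra.adjoin ℚ ({ξ1, ξ2} : Set ℝ) with hA
  have lift : ∀ {x : ℝ}, IsAlgebraic ℚ x → IsAlgebraic A x := fun h =>
    h.extendScalars (FaithfulSMul.algebraMap_injective ℚ A)
  have m1 : IsAlgebraic A ξ1 :=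
    isAlgebraic_algebraMap (⟨ξ1, Algebra.subset_adjoin (by simp)⟩ : A)
  have m2 : IsAlgebraic A ξ2 :=
    isAlgebraic_algebraMap (⟨ξ2, Algebra.subset_adjoin (by simp)⟩ : A)
  have hq := lift isAlgebraic_q0
  have hcc := lift isAlgebraic_c1
  have one : IsAlgebraic A (1 : ℝ) := isAlgebraic_one
  have three : IsAlgebraic A (3 : ℝ) := by simpa using isAlgebraic_natCast (R := A) (A := ℝ) 3
  have sixteen : IsAlgebraic A (16 : ℝ) := by simpa using isAlgebraic_natCast (R := A) (A := ℝ) 16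
  have eb : b0 = (3 * ξ2 * (1 - q0) * (ξ1 * (1 + q0))⁻¹) ^ 2 := by
    have : rho q0 ^ 2 = 3 * ξ2 * (1 - q0) * (ξ1 * (1 + q0))⁻¹ := by
      rw [← hd]; field_simp
    rw [← this, b0_eq]; ring
  have hb : IsAlgebraic A b0 := by
    rw [eb]
    exact ((((three.mul m2).mul (one.sub hq))).mul (m1.mul (one.add hq)).inv).pow 2
  have hb0 : b0 ≠ 0 := by rw [b0_eq]; positivity
  have ek : kap q0 = ξ1 * ξ2 * (3 * c1)⁻¹ := by rw [hm]; field_simp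
  have ea : a0 = 16 * q0 * (ξ1 * ξ2 * (3 * c1)⁻¹) ^ 4 * b0⁻¹ := by
    rw [← ek, ← a0_mul_b0]; field_simp
  refine algebraicIndependent_pair_of_isAlgebraic algebraicIndependent_a0_b0 ?_ hb
  rw [ea]
  exact ((sixteen.mul hq).mul (((m1.mul m2).mul (three.mul hcc).inv).pow 4)).mul hb.inv

end FibTheta

theorem xi1_xi2_algebraically_independent (ξ1 ξ2 : ℝ)
    (h1 : Filter.Tendsto (fun N : ℕ => ∏ n ∈ Finset.Icc 1 N, (1 + 1 / (F n : ℝ)))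
      Filter.atTop (nhds ξ1))
    (h2 : Filter.Tendsto (fun N : ℕ => ∏ n ∈ Finset.Icc 3 N, (1 - 1 / (F n : ℝ)))
      Filter.atTop (nhds ξ2)) :
    AlgebraicIndependent ℚ ![ξ1, ξ2] := by
  refine FibTheta.main ?_ ?_
  · have h := (h1.comp (Filter.tendsto_add_atTop_nat 2)).div_const 3
    refine h.congr fun N => ?_
    rw [Function.comp_apply, FibTheta.prod_xi1, mul_div_cancel_left₀ _ three_ne_zero]
  · exact (h2.comp (Filter.tendsto_add_atTop_nat 2)).congr fun N => FibTheta.prod_xi2 N
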